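/- Let α be a real number with |α − 1/3| ≤ 2·10⁻⁶. Then liminf_{N→∞} #{p ≤ N : p prime and L(α,p) ≥ 0} / #{p ≤ N : p prime} ≥ 1/2; that is, the inequality L(α,p) ≥ 0 holds for a set of primes of lower density at least 1/2. -/

import Mathlib

open scoped Classical

/-- `L α p = ∑_{n=1}^{⌊α p⌋} (n/p)`, the sum of the first `⌊α p⌋` values of
the Legendre symbol modulo `p` (defined to be `0` when `p` is not prime). -/
noncomputable def legendreSum (α : ℝ) (p : ℕ) : ℤ :=
  if h : p.Prime then
    haveI : Fact p.Prime := ⟨h⟩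
    ∑ n ∈ Finset.Icc 1 ⌊α * (p : ℝ)⌋₊, legendreSym p (n : ℤ)
  else 0

namespace PV
open Finset ZMod

lemma card_ann_le (q : ℕ) [NeZero q] (a : ZMod q) :
    (univ.filter (fun t : ZMod q => t * a = 0)).card ≤ Nat.gcd a.val q := by
  have hpos : 0 < Nat.gcd a.val q := Nat.gcd_pos_of_pos_right _ (NeZero.pos q)
  refine le_trans (card_le_card ?_) (IsAddCyclic.card_nsmul_eq_zero_le (α := ZMod q) hpos)
  intro t ht
  simp only [mem_filter, mem_univ, true_and] at ht ⊢
  have h1 : (a.val : ℤ) • t = 0 := by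
    have h : a * t = 0 := by rw [mul_comm]; exact ht
    simpa using h
  have h2 : (q : ℤ) • t = 0 := by simp
  have h3 : ((Nat.gcd a.val q : ℕ) : ℤ) • t = 0 := by
    rw [Nat.gcd_eq_gcd_ab, add_smul, mul_comm, mul_smul, h1, mul_comm, mul_smul, h2]; simp
  exact_mod_cast h3

noncomputable def F {q : ℕ} [NeZero q] (χ : DirichletCharacter ℂ q) (a : ZMod q) : ℂ :=
  ∑ j, χ j * stdAddChar (j * a)

lemma norm_F_unit {q : ℕ} [NeZero q] (χ : DirichletCharacter ℂ q) (a : ZMod q) (u : (ZMod q)ˣ) :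
    ‖F χ (u * a)‖ = ‖F χ a‖ := by
  have : F χ a = χ u * F χ (u * a) := by
    unfold F
    rw [mul_sum, ← Equiv.sum_comp (Units.mulLeft u)]
    refine sum_congr rfl fun j _ => ?_
    simp only [Units.mulLeft_apply, map_mul]
    rw [← mul_assoc]; congr 2; ring
  rw [this, norm_mul, DirichletCharacter.unit_norm_eq_one, one_mul]

lemma sum_norm_sq {q : ℕ} [NeZero q] (χ : DirichletCharacter ℂ q) (a : ZMod q) :
    ∑ x : ZMod q, ‖F χ (x * a)‖ ^ 2 ≤ q * (q.totient * Nat.gcd a.val q) := by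
  have key : ((∑ x : ZMod q, ‖F χ (x * a)‖ ^ 2 : ℝ) : ℂ) =
      ∑ j : ZMod q, ∑ k : ZMod q, χ j * (starRingEnd ℂ) (χ k) *
        (if (j - k) * a = 0 then (q : ℂ) else 0) := by
    push_cast
    have h1 : ∀ x : ZMod q, ((‖F χ (x * a)‖ : ℂ)) ^ 2 =
        ∑ j : ZMod q, ∑ k : ZMod q, χ j * (starRingEnd ℂ) (χ k) *
          stdAddChar (x * ((j - k) * a)) := by
      intro x
      rw [← Complex.mul_conj']
      unfold F
      rw [map_sum, sum_mul_sum]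
      refine sum_congr rfl fun j _ => sum_congr rfl fun k _ => ?_
      rw [map_mul (starRingEnd ℂ), ← AddChar.map_neg_eq_conj]
      rw [show x * ((j - k) * a) = j * (x * a) + -(k * (x * a)) by ring, AddChar.map_add_eq_mul]
      ring
    simp_rw [h1]
    rw [sum_comm]
    refine sum_congr rfl fun j _ => ?_
    rw [sum_comm]
    refine sum_congr rfl fun k _ => ?_
    rw [← mul_sum, AddChar.sum_mulShift _ (isPrimitive_stdAddChar q)]
    simp [ZMod.card]
  have h2 : ∑ x : ZMod q, ‖F χ (x * a)‖ ^ 2 =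
      ‖((∑ x : ZMod q, ‖F χ (x * a)‖ ^ 2 : ℝ) : ℂ)‖ := by
    rw [Complex.norm_real, Real.norm_of_nonneg]
    positivity
  rw [h2, key]
  calc _ ≤ ∑ j : ZMod q, ∑ k : ZMod q, ‖χ j * (starRingEnd ℂ) (χ k) *
        (if (j - k) * a = 0 then (q : ℂ) else 0)‖ := by
        refine (norm_sum_le _ _).trans (sum_le_sum fun j _ => norm_sum_le _ _)
    _ ≤ ∑ j : ZMod q, ∑ k : ZMod q, (if IsUnit j then (1:ℝ) else 0) *
        (if (j - k) * a = 0 then (q : ℝ) else 0) := by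
        refine sum_le_sum fun j _ => sum_le_sum fun k _ => ?_
        rw [norm_mul, norm_mul]
        have hk : ‖(starRingEnd ℂ) (χ k)‖ ≤ 1 := by
          rw [RCLike.norm_conj]; exact DirichletCharacter.norm_le_one χ k
        have hj : ‖χ j‖ ≤ if IsUnit j then (1:ℝ) else 0 := by
          split_ifs with h
          · exact DirichletCharacter.norm_le_one χ j
          · rw [MulChar.map_nonunit χ h]; simp
        have hc : ‖(if (j - k) * a = 0 then (q : ℂ) else 0)‖ =
          (if (j - k) * a = 0 then (q : ℝ) else 0) := by split_ifs <;> simp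
        rw [hc]
        refine mul_le_mul_of_nonneg_right ?_ (by split_ifs <;> simp)
        calc _ ≤ (if IsUnit j then (1:ℝ) else 0) * 1 :=
              mul_le_mul hj hk (norm_nonneg _) (by split_ifs <;> simp)
          _ = _ := mul_one _
    _ ≤ ∑ j : ZMod q, (if IsUnit j then (1:ℝ) else 0) * (q * Nat.gcd a.val q) := by
        refine sum_le_sum fun j _ => ?_
        rw [← mul_sum]
        refine mul_le_mul_of_nonneg_left ?_ (by split_ifs <;> simp)
        rw [← Equiv.sum_comp (Equiv.subLeft j)]
        simp only [Equiv.subLeft_apply, sub_sub_cancel]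
        rw [← sum_filter, sum_const, nsmul_eq_mul, mul_comm]
        gcongr
        exact card_ann_le q a
    _ = _ := by
        rw [← sum_mul, sum_boole]
        have : (univ.filter (fun x : ZMod q => IsUnit x)).card = q.totient := by
          rw [← ZMod.card_units_eq_totient, ← Finset.card_univ,
            ← Finset.card_map ⟨((↑) : (ZMod q)ˣ → ZMod q), Units.val_injective⟩]
          congr 1
          ext x
          simp only [mem_filter, mem_univ, true_and, mem_map, Function.Embedding.coeFn_mk]
          rfl
        rw [this]; ring

lemma norm_F_le {q : ℕ} [NeZero q] (χ : DirichletCharacter ℂ q) (a : ZMod q) :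
    ‖F χ a‖ ≤ √(q * Nat.gcd a.val q) := by
  apply Real.le_sqrt_of_sq_le
  have hφ : (0:ℝ) < q.totient := by exact_mod_cast Nat.totient_pos.mpr (NeZero.pos q)
  have h1 : (q.totient : ℝ) * ‖F χ a‖ ^ 2 ≤ ∑ x : ZMod q, ‖F χ (x * a)‖ ^ 2 := by
    calc (q.totient : ℝ) * ‖F χ a‖ ^ 2 = ∑ u : (ZMod q)ˣ, ‖F χ (u * a)‖ ^ 2 := by
          simp [norm_F_unit, ZMod.card_units_eq_totient]
      _ = ∑ x ∈ univ.map ⟨((↑) : (ZMod q)ˣ → ZMod q), Units.val_injective⟩, ‖F χ (x * a)‖ ^ 2 := by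
          rw [sum_map]; rfl
      _ ≤ _ := sum_le_sum_of_subset_of_nonneg (subset_univ _) (fun _ _ _ => by positivity)
  have h2 := h1.trans (sum_norm_sq χ a)
  have h3 : (q.totient : ℝ) * ‖F χ a‖ ^ 2 ≤ q.totient * (q * Nat.gcd a.val q) := by linarith
  exact le_of_mul_le_mul_left h3 hφ

lemma inversion {q : ℕ} [NeZero q] (χ : DirichletCharacter ℂ q) (m : ZMod q) :
    (q : ℂ) * χ m = ∑ a : ZMod q, F χ a * stdAddChar (-(a * m)) := by
  unfold F
  simp_rw [sum_mul]
  rw [sum_comm]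
  have : ∀ j : ZMod q, ∑ a : ZMod q, χ j * stdAddChar (j * a) * stdAddChar (-(a * m)) =
      χ j * (if j - m = 0 then (q:ℂ) else 0) := by
    intro j
    simp_rw [mul_assoc, ← AddChar.map_add_eq_mul]
    rw [← mul_sum]
    have h : ∀ a : ZMod q, j * a + -(a * m) = a * (j - m) := fun a => by ring
    simp_rw [h]
    rw [AddChar.sum_mulShift _ (isPrimitive_stdAddChar q)]
    simp [ZMod.card]
  simp_rw [this, sub_eq_zero]
  simp [mul_comm]

lemma geom_bound (q : ℕ) [NeZero q] (k : ℕ) (hk0 : 0 < k) (hkq : k < q) (x : ℕ) :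
    ‖∑ m ∈ range x, (stdAddChar (-((k : ZMod q) * (m : ZMod q))) : ℂ)‖ ≤ q / 2 * (1 / k + 1 / (q - k : ℕ)) := by
  set z : ℂ := stdAddChar (-(k : ZMod q)) with hz
  have hpow : ∀ m : ℕ, (stdAddChar (-((k : ZMod q) * (m : ZMod q))) : ℂ) = z ^ m := by
    intro m
    rw [hz, ← AddChar.map_nsmul_eq_pow]; congr 1; simp [mul_comm]
  have hqpos : (0:ℝ) < q := by exact_mod_cast NeZero.pos q
  have hzexp : z = Complex.exp (Complex.I * ((-(2 * Real.pi * k / q) : ℝ) : ℂ)) := by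
    have : -(k : ZMod q) = ((-(k:ℤ) : ℤ) : ZMod q) := by push_cast; rfl
    rw [hz, this, ZMod.stdAddChar_coe]
    congr 1; push_cast; ring
  have hsub : ‖z - 1‖ = 2 * Real.sin (Real.pi * k / q) := by
    rw [hzexp, Complex.norm_exp_I_mul_ofReal_sub_one]
    rw [show -(2 * Real.pi * k / q) / 2 = -(Real.pi * k / q) by ring, Real.sin_neg, mul_neg, norm_neg,
      Real.norm_of_nonneg]
    have : 0 ≤ Real.sin (Real.pi * k / q) := by
      apply Real.sin_nonneg_of_nonneg_of_le_pi
      · positivity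
      · rw [div_le_iff₀ hqpos]
        have : (k:ℝ) ≤ q := by exact_mod_cast hkq.le
        nlinarith [Real.pi_pos]
    positivity
  have hk0' : (0:ℝ) < k := by exact_mod_cast hk0
  have hqk : (0:ℝ) < (q - k : ℕ) := by exact_mod_cast Nat.sub_pos_of_lt hkq
  have hcast : ((q - k : ℕ) : ℝ) = q - k := by rw [Nat.cast_sub hkq.le]
  have hsin : 2 * min (k : ℝ) (q - k : ℕ) / q ≤ Real.sin (Real.pi * k / q) := by
    rcases le_total (k : ℝ) (q - k : ℕ) with h | h
    · rw [min_eq_left h]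
      have := Real.mul_le_sin (x := Real.pi * k / q) (by positivity) (by
        rw [div_le_iff₀ hqpos]; rw [hcast] at h; nlinarith [Real.pi_pos])
      refine le_trans (le_of_eq ?_) this
      field_simp
    · rw [min_eq_right h]
      have := Real.mul_le_sin (x := Real.pi * (q - k : ℕ) / q) (by positivity) (by
        rw [div_le_iff₀ hqpos]; rw [hcast] at h ⊢; nlinarith [Real.pi_pos])
      rw [show Real.pi * (q - k : ℕ) / q = Real.pi - Real.pi * k / q by
        rw [hcast]; field_simp, Real.sin_pi_sub] at this
      refine le_trans (le_of_eq ?_) this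
      rw [hcast]; field_simp
  have hmin : 0 < min (k : ℝ) (q - k : ℕ) := lt_min hk0' hqk
  have hz1 : 0 < ‖z - 1‖ := by
    rw [hsub]; have : 0 < 2 * min (k : ℝ) (q - k : ℕ) / q := by positivity
    linarith
  have hzne : z ≠ 1 := fun h => by rw [h] at hz1; simp at hz1
  simp_rw [hpow]
  rw [geom_sum_eq hzne, norm_div]
  have hnum : ‖z ^ x - 1‖ ≤ 2 := by
    refine (norm_sub_le _ _).trans ?_
    have : ‖z‖ = 1 := by rw [hzexp, mul_comm, Complex.norm_exp_ofReal_mul_I]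
    rw [norm_pow, this]; norm_num
  calc ‖z ^ x - 1‖ / ‖z - 1‖ ≤ 2 / (2 * (2 * min (k : ℝ) (q - k : ℕ) / q)) := by
        apply div_le_div₀ (by norm_num) hnum (by positivity)
        rw [hsub]; linarith
    _ = q / 2 * (1 / min (k : ℝ) (q - k : ℕ)) := by field_simp
    _ ≤ _ := by
        apply mul_le_mul_of_nonneg_left _ (by positivity)
        rcases le_total (k : ℝ) (q - k : ℕ) with h | h
        · rw [min_eq_left h]; have : 0 ≤ 1 / ((q - k : ℕ) : ℝ) := by positivity
          linarith
        · rw [min_eq_right h]; have : 0 ≤ 1 / (k : ℝ) := by positivity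
          linarith

lemma sum_range_zmod {q : ℕ} [NeZero q] {M : Type*} [AddCommMonoid M] (f : ZMod q → M) :
    ∑ a : ZMod q, f a = ∑ k ∈ range q, f (k : ZMod q) := by
  symm
  refine sum_bij' (fun k _ => (k : ZMod q)) (fun a _ => a.val) ?_ ?_ ?_ ?_ ?_
  · intro k _; exact mem_univ _
  · intro a _; exact mem_range.mpr (ZMod.val_lt a)
  · intro k hk; exact ZMod.val_cast_of_lt (mem_range.mp hk)
  · intro a _; simp
  · intro k _; rfl

lemma sum_sqrt_gcd (q : ℕ) (hq : 0 < q) :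
    ∑ k ∈ Ico 1 q, √(Nat.gcd k q) / k ≤ q.divisors.card * (1 + Real.log q) := by
  have h1 : ∀ k ∈ Ico 1 q, √(Nat.gcd k q) / k ≤ ∑ g ∈ q.divisors, if g ∣ k then √g / k else 0 := by
    intro k hk
    have hg : Nat.gcd k q ∈ q.divisors := Nat.mem_divisors.mpr ⟨Nat.gcd_dvd_right _ _, hq.ne'⟩
    refine le_trans ?_ (single_le_sum (f := fun g => if g ∣ k then √(g:ℝ) / k else 0) ?_ hg)
    · simp [Nat.gcd_dvd_left]
    · intro g _; split_ifs <;> positivity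
  refine (sum_le_sum h1).trans ?_
  rw [sum_comm]
  have h2 : ∀ g ∈ q.divisors, (∑ k ∈ Ico 1 q, if g ∣ k then √(g:ℝ) / k else 0) ≤ 1 + Real.log q := by
    intro g hg
    have hgpos : 0 < g := Nat.pos_of_mem_divisors hg
    rw [← sum_filter]
    calc ∑ k ∈ (Ico 1 q).filter (fun k => g ∣ k), √(g:ℝ) / k
        ≤ ∑ k ∈ (Icc 1 q).image (fun b => g * b), √(g:ℝ) / k := by
          refine sum_le_sum_of_subset_of_nonneg ?_ (fun _ _ _ => by positivity)
          intro k hk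
          simp only [mem_filter, mem_Ico] at hk
          obtain ⟨⟨h1, h2⟩, b, rfl⟩ := hk
          refine mem_image.mpr ⟨b, mem_Icc.mpr ⟨?_, ?_⟩, rfl⟩
          · rcases Nat.eq_zero_or_pos b with h | h
            · subst h; simp at h1
            · exact h
          · nlinarith
      _ = ∑ b ∈ Icc 1 q, √(g:ℝ) / (g * b : ℕ) := by
          rw [sum_image]
          intro a _ b _ h
          exact Nat.eq_of_mul_eq_mul_left hgpos h
      _ ≤ ∑ b ∈ Icc 1 q, (1 : ℝ) / b := by
          refine sum_le_sum fun b hb => ?_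
          have hb0 : (0:ℝ) < b := by exact_mod_cast (mem_Icc.mp hb).1
          have hg0 : (1:ℝ) ≤ g := by exact_mod_cast hgpos
          push_cast
          rw [div_le_div_iff₀ (by positivity) hb0]
          have : √(g:ℝ) ≤ g := by
            rw [Real.sqrt_le_left (by linarith)]; nlinarith
          nlinarith
      _ ≤ _ := by
          have := harmonic_le_one_add_log q
          rw [harmonic_eq_sum_Icc] at this
          push_cast at this
          simpa [one_div] using this
  refine (sum_le_sum h2).trans ?_
  rw [sum_const, nsmul_eq_mul]

theorem polya_vinogradov {q : ℕ} [NeZero q] (χ : DirichletCharacter ℂ q) (hχ : χ ≠ 1) (x : ℕ) :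
    ‖∑ m ∈ range x, χ (m : ZMod q)‖ ≤ √q * (q.divisors.card * (1 + Real.log q)) := by
  have hqpos : (0:ℝ) < q := by exact_mod_cast NeZero.pos q
  have h0 : F χ 0 = 0 := by
    unfold F; simp [MulChar.sum_eq_zero_of_ne_one hχ]
  have h1 : (q : ℂ) * ∑ m ∈ range x, χ (m : ZMod q) =
      ∑ k ∈ Ico 1 q, F χ (k : ZMod q) * ∑ m ∈ range x, stdAddChar (-((k : ZMod q) * (m : ZMod q))) := by
    rw [mul_sum]
    simp_rw [inversion]
    rw [sum_comm, sum_range_zmod, range_eq_Ico,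
      sum_eq_sum_Ico_succ_bot (NeZero.pos q)]
    simp only [Nat.cast_zero, h0, zero_mul, sum_const_zero, zero_add, mul_sum]
  have h2 : (q:ℝ) * ‖∑ m ∈ range x, χ (m : ZMod q)‖ ≤
      ∑ k ∈ Ico 1 q, √(q * Nat.gcd k q) * (q / 2 * (1 / k + 1 / (q - k : ℕ))) := by
    have : (q:ℝ) * ‖∑ m ∈ range x, χ (m : ZMod q)‖ = ‖(q : ℂ) * ∑ m ∈ range x, χ (m : ZMod q)‖ := by
      simp
    rw [this, h1]
    refine (norm_sum_le _ _).trans (sum_le_sum fun k hk => ?_)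
    rw [mem_Ico] at hk
    rw [norm_mul]
    have hF := norm_F_le χ (k : ZMod q)
    rw [ZMod.val_cast_of_lt hk.2] at hF
    exact mul_le_mul hF (geom_bound q k hk.1 hk.2 x) (norm_nonneg _) (by positivity)
  have h3 : ∑ k ∈ Ico 1 q, √(q * Nat.gcd k q) * (q / 2 * (1 / k + 1 / (q - k : ℕ))) =
      q * (√q * ∑ k ∈ Ico 1 q, √(Nat.gcd k q) / k) := by
    have hrefl : ∑ k ∈ Ico 1 q, √(Nat.gcd k q) * (1 / ((q - k : ℕ) : ℝ)) =
        ∑ k ∈ Ico 1 q, √(Nat.gcd k q) / k := by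
      refine sum_bij' (fun k _ => q - k) (fun k _ => q - k) ?_ ?_ ?_ ?_ ?_
      · intro k hk; rw [mem_Ico] at *; omega
      · intro k hk; rw [mem_Ico] at *; omega
      · intro k hk; rw [mem_Ico] at hk; omega
      · intro k hk; rw [mem_Ico] at hk; omega
      · intro k hk
        rw [mem_Ico] at hk
        have : Nat.gcd (q - k) q = Nat.gcd k q := by
          rw [Nat.gcd_comm, Nat.gcd_self_sub_right hk.2.le, Nat.gcd_comm]
        rw [this]; ring
    have : ∀ k ∈ Ico 1 q, √(q * Nat.gcd k q : ℝ) * (q / 2 * (1 / k + 1 / (q - k : ℕ))) =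
        q * √q / 2 * (√(Nat.gcd k q) / k) + q * √q / 2 * (√(Nat.gcd k q) * (1 / ((q - k : ℕ) : ℝ))) := by
      intro k _
      rw [Real.sqrt_mul hqpos.le]; ring
    rw [sum_congr rfl this, sum_add_distrib, ← mul_sum, ← mul_sum, hrefl]; ring
  rw [h3] at h2
  refine (le_of_mul_le_mul_left h2 hqpos).trans ?_
  exact mul_le_mul_of_nonneg_left (sum_sqrt_gcd q (NeZero.pos q)) (Real.sqrt_nonneg _)
end PV

namespace JC
open Finset ZMod
open scoped NumberTheorySymbols

/-- the Jacobi character `m ↦ J(n | m)` on odd `m`, as a Dirichlet character mod `4|n|`. -/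
noncomputable def jchar (n : ℤ) (q : ℕ) (hq : q = 4 * n.natAbs) (hn : n ≠ 0) :
    DirichletCharacter ℂ q :=
  haveI : NeZero q := ⟨by rw [hq]; have := Int.natAbs_pos.mpr hn; omega⟩
  { toFun := fun a => if IsUnit a then ((J(n | a.val) : ℤ) : ℂ) else 0
    map_one' := by
      have h : (1 : ZMod q).val = 1 := by
        have : Fact (1 < q) := ⟨by rw [hq]; have := Int.natAbs_pos.mpr hn; omega⟩
        exact ZMod.val_one q
      simp [h]
    map_mul' := by
      intro a b
      by_cases ha : IsUnit a
      · by_cases hb : IsUnit b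
        · have hodd : ∀ c : ZMod q, IsUnit c → Odd c.val := by
            intro c hc
            have := (ZMod.isUnit_iff_coprime c.val q).mp (by simpa using hc)
            by_contra h
            rw [Nat.not_odd_iff_even] at h
            have h2 : 2 ∣ Nat.gcd c.val q := Nat.dvd_gcd h.two_dvd (by rw [hq]; omega)
            rw [this] at h2; omega
          rw [if_pos ha, if_pos hb, if_pos (ha.mul hb), ZMod.val_mul]
          have hmr := jacobiSym.mod_right n ((hodd a ha).mul (hodd b hb))
          rw [← hq] at hmr
          rw [← hmr]
          have : NeZero a.val := ⟨by have := hodd a ha; intro h; rw [h] at this; simp at this⟩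
          have : NeZero b.val := ⟨by have := hodd b hb; intro h; rw [h] at this; simp at this⟩
          rw [jacobiSym.mul_right]; push_cast; rfl
        · rw [if_neg hb, if_neg (fun h => hb (isUnit_of_mul_isUnit_right h))]; simp
      · rw [if_neg ha, if_neg (fun h => ha (isUnit_of_mul_isUnit_left h))]; simp
    map_nonunit' := by
      intro a ha; exact if_neg ha }

lemma jchar_nat (n : ℤ) (q : ℕ) (hq : q = 4 * n.natAbs) (hn : n ≠ 0) (m : ℕ) :
    jchar n q hq hn (m : ZMod q) = if Odd m then ((J(n | m) : ℤ) : ℂ) else 0 := by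
  have : NeZero q := ⟨by rw [hq]; have := Int.natAbs_pos.mpr hn; omega⟩
  change (if IsUnit (m : ZMod q) then ((J(n | (m : ZMod q).val) : ℤ) : ℂ) else 0) = _
  simp only [ZMod.isUnit_iff_coprime, ZMod.val_natCast]
  by_cases hm : Odd m
  · rw [if_pos hm, hq, ← jacobiSym.mod_right n hm]
    split_ifs with h
    · rfl
    · have hnz : NeZero m := ⟨by intro h; rw [h] at hm; simp at hm⟩
      have : J(n | m) = 0 := by
        rw [jacobiSym.eq_zero_iff_not_coprime]
        intro h2
        apply h
        have h4 : Nat.Coprime m 4 := by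
          have : Nat.Coprime m (2 ^ 2) := Nat.Coprime.pow_right 2 (Nat.coprime_two_right.mpr hm)
          simpa using this
        refine Nat.Coprime.mul_right h4 ?_
        rw [Nat.coprime_comm]; simpa [Int.gcd] using h2
      simp [this]
  · rw [if_neg hm, if_neg]
    intro h
    rw [Nat.not_odd_iff_even] at hm
    have h2 : 2 ∣ Nat.gcd m q := Nat.dvd_gcd hm.two_dvd (by rw [hq]; omega)
    rw [h] at h2; omega

lemma exists_nonres (ℓ : ℕ) (hℓ : ℓ.Prime) (h2 : ℓ ≠ 2) : ∃ a : ℕ, J((a:ℤ) | ℓ) = -1 := by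
  have : Fact ℓ.Prime := ⟨hℓ⟩
  obtain ⟨a, ha⟩ := quadraticChar_exists_neg_one (F := ZMod ℓ) (by rw [ZMod.ringChar_zmod_n]; exact h2)
  refine ⟨a.val, ?_⟩
  rw [← jacobiSym.legendreSym.to_jacobiSym, legendreSym]
  simpa using ha

lemma J_sq_one (e g b : ℕ) (_he : e = e) (h : Nat.Coprime g b) : J(((g ^ 2 : ℕ) : ℤ) | b) = 1 := by
  push_cast
  rw [jacobiSym.pow_left]
  exact jacobiSym.sq_one (by simpa [Int.gcd] using h)

lemma J_neg_one_of_mod4 (b : ℕ) (hb : b % 4 = 1) : J(-1 | b) = 1 := by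
  rw [jacobiSym.at_neg_one (Nat.odd_iff.mpr (by omega)), ZMod.χ₄_nat_one_mod_four hb]

/-- nonsquare gives a value -1 -/
lemma exists_neg (e : ℤ) (he : e = 1 ∨ e = -1) (n : ℕ) (hn : 0 < n) (hns : ¬ IsSquare n) :
    ∃ b : ℕ, Odd b ∧ J(e * n | b) = -1 := by
  obtain ⟨t, g, htg, hsq⟩ := Nat.sq_mul_squarefree n
  have hg : 0 < g := by
    rcases Nat.eq_zero_or_pos g with h | h
    · subst h; simp at htg; omega
    · exact h
  have heJ : ∀ b : ℕ, b % 4 = 1 → J(e | b) = 1 := by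
    intro b hb
    rcases he with rfl | rfl
    · exact jacobiSym.one_left b
    · exact J_neg_one_of_mod4 b hb
  by_cases hodd : ∃ ℓ : ℕ, ℓ.Prime ∧ ℓ ≠ 2 ∧ ℓ ∣ t
  · obtain ⟨ℓ, hℓ, hℓ2, hℓt⟩ := hodd
    have : Fact ℓ.Prime := ⟨hℓ⟩
    have hv : Odd (n.factorization ℓ) := by
      have ht0 : t ≠ 0 := hsq.ne_zero
      rw [← htg, Nat.factorization_mul (by positivity) ht0, Nat.factorization_pow]
      have h1 : t.factorization ℓ = 1 := by
        apply le_antisymm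
        · exact hsq.natFactorization_le_one ℓ
        · exact (hℓ.dvd_iff_one_le_factorization ht0).mp hℓt
      simp [h1]
    obtain ⟨m, hm, hmn⟩ : ∃ m, ¬ ℓ ∣ m ∧ n = ℓ ^ (n.factorization ℓ) * m :=
      ⟨n / ℓ ^ n.factorization ℓ, Nat.not_dvd_ordCompl hℓ hn.ne', (Nat.ordProj_mul_ordCompl_eq_self n ℓ).symm⟩
    obtain ⟨a, ha⟩ := exists_nonres ℓ hℓ hℓ2
    have hcop : Nat.Coprime (4 * m) ℓ := by
      refine Nat.Coprime.mul_left ?_ ((Nat.Prime.coprime_iff_not_dvd hℓ).mpr hm).symm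
      have : Nat.Coprime 2 ℓ := (Nat.coprime_primes Nat.prime_two hℓ).mpr (Ne.symm hℓ2)
      simpa using Nat.Coprime.pow_left 2 this
    obtain ⟨b, hb1, hb2⟩ := Nat.chineseRemainder hcop 1 a
    have hb4 : b % 4 = 1 := by
      have := hb1.of_mul_right m
      exact this
    have hbo : Odd b := Nat.odd_iff.mpr (by omega)
    refine ⟨b, hbo, ?_⟩
    have hm0 : 0 < m := Nat.pos_of_ne_zero (fun h => hm (by simp [h]))
    have hJm : J((m:ℤ) | b) = 1 := by
      rw [jacobiSym.mod_right _ hbo]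
      have : b % (4 * (m:ℤ).natAbs) = 1 := by
        simp only [Int.natAbs_natCast]
        have h : b % (4 * m) = 1 % (4 * m) := hb1
        rw [h]; apply Nat.mod_eq_of_lt; omega
      rw [this]; exact jacobiSym.one_right _
    have hJl : J((ℓ:ℤ) | b) = -1 := by
      rw [jacobiSym.quadratic_reciprocity_one_mod_four' (hℓ.odd_of_ne_two hℓ2) hb4]
      rw [jacobiSym.mod_left, ← ha, jacobiSym.mod_left (a:ℤ)]
      congr 1
      have h : b % ℓ = a % ℓ := hb2
      exact_mod_cast h
    rw [hmn]; push_cast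
    rw [jacobiSym.mul_left, jacobiSym.mul_left, jacobiSym.pow_left, heJ b hb4, hJm, hJl, hv.neg_one_pow]; simp
  · push Not at hodd
    have ht : t = 1 ∨ t = 2 := by
      by_cases h1 : t = 1
      · exact Or.inl h1
      · right
        obtain ⟨p, hp, hpt⟩ := Nat.exists_prime_and_dvd h1
        have hp2 : p = 2 := by
          by_contra h; exact hodd p hp h hpt
        subst hp2
        obtain ⟨c, rfl⟩ := hpt
        have hc : c = 1 := by
          by_contra hc
          obtain ⟨p, hp, hpc⟩ := Nat.exists_prime_and_dvd hc
          have hp2 : p = 2 := by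
            by_contra h; exact hodd p hp h (hpc.mul_left 2)
          subst hp2
          have := hsq 2 (mul_dvd_mul_left 2 hpc)
          simp at this
        rw [hc]
    rcases ht with rfl | rfl
    · rcases he with rfl | rfl
      · exact absurd ⟨g, by rw [← htg]; ring⟩ hns
      · refine ⟨4 * g - 1, Nat.odd_iff.mpr (by omega), ?_⟩
        have hcop : Nat.Coprime g (4 * g - 1) := by
          have h : Nat.gcd g (4 * g - 1) ∣ 1 := by
            have h1 : Nat.gcd g (4 * g - 1) ∣ 4 * g := (Nat.gcd_dvd_left _ _).mul_left 4
            have h2 := Nat.gcd_dvd_right g (4 * g - 1)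
            have := Nat.dvd_sub h1 h2
            rwa [show 4 * g - (4 * g - 1) = 1 by omega] at this
          exact Nat.dvd_one.mp h
        rw [jacobiSym.mul_left, ← htg, mul_one, J_sq_one 0 g _ rfl hcop,
          jacobiSym.at_neg_one (Nat.odd_iff.mpr (by omega)), ZMod.χ₄_nat_three_mod_four (by omega)]
        simp
    · obtain ⟨i, k, hk, hgk⟩ := Nat.exists_eq_two_pow_mul_odd hg.ne'
      have hcop : Nat.Coprime 8 k := by
        have : Nat.Coprime 2 k := Nat.coprime_two_left.mpr hk
        simpa using Nat.Coprime.pow_left 3 this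
      obtain ⟨b, hb1, hb2⟩ := Nat.chineseRemainder hcop 5 1
      have hb8 : b % 8 = 5 := hb1
      have hbo : Odd b := Nat.odd_iff.mpr (by omega)
      refine ⟨b, hbo, ?_⟩
      have hkb : Nat.Coprime k b := by
        have := hb2.gcd_eq
        rw [Nat.coprime_comm, Nat.Coprime, this]; simp
      have hgb : Nat.Coprime g b := by
        rw [hgk]
        exact Nat.Coprime.mul_left (Nat.Coprime.pow_left _ (Nat.coprime_two_left.mpr hbo)) hkb
      rw [← htg]
      push_cast
      have hs := J_sq_one 0 g b rfl hgb
      push_cast at hs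
      rw [jacobiSym.mul_left, jacobiSym.mul_left, hs, heJ b (by omega), jacobiSym.at_two hbo,
        ZMod.χ₈_nat_eq_if_mod_eight, if_neg (by omega), if_neg (by omega)]
      simp

noncomputable def PVb (n : ℕ) : ℝ := √(4 * n : ℕ) * ((4 * n).divisors.card * (1 + Real.log (4 * n : ℕ)))

lemma char_bound (e : ℤ) (he : e = 1 ∨ e = -1) (n : ℕ) (hn : 0 < n) (hns : ¬ IsSquare n) (x : ℕ) :
    |∑ m ∈ range x, if Odd m then ((J(e * n | m) : ℤ) : ℝ) else 0| ≤ PVb n := by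
  have hen : e * n ≠ 0 := by
    have : (n:ℤ) ≠ 0 := by exact_mod_cast hn.ne'
    rcases he with rfl | rfl <;> simpa
  have hq : 4 * n = 4 * (e * n).natAbs := by
    rcases he with rfl | rfl <;> simp
  have : NeZero (4 * n) := ⟨by omega⟩
  have hne : jchar (e * n) (4 * n) hq hen ≠ 1 := by
    obtain ⟨b, hb, hJ⟩ := exists_neg e he n hn hns
    intro h
    have h1 := jchar_nat (e * n) (4 * n) hq hen b
    rw [if_pos hb, hJ, h] at h1
    by_cases hu : IsUnit (b : ZMod (4 * n))
    · rw [MulChar.one_apply hu] at h1; norm_num at h1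
    · rw [MulChar.map_nonunit _ hu] at h1; norm_num at h1
  have := PV.polya_vinogradov _ hne x
  simp_rw [jchar_nat] at this
  have h2 : (∑ m ∈ range x, if Odd m then ((J(e * n | m) : ℤ) : ℂ) else 0) =
      ((∑ m ∈ range x, if Odd m then ((J(e * n | m) : ℤ) : ℝ) else 0 : ℝ) : ℂ) := by
    push_cast
    refine sum_congr rfl fun m _ => ?_
    split_ifs <;> simp
  rw [h2, Complex.norm_real, Real.norm_eq_abs] at this
  exact this

lemma ap_bound (n : ℕ) (hn : 0 < n) (hns : ¬ IsSquare n) (r : ℕ) (hr : r = 1 ∨ r = 3)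
    (d : ℕ) (hd : Odd d) (N : ℕ) :
    |∑ m ∈ (range (N + 1)).filter (fun m => m % 4 = r ∧ d ∣ m), ((J((n:ℤ) | m) : ℤ) : ℝ)| ≤ PVb n := by
  have hd0 : 0 < d := hd.pos
  have hdm : d % 4 = 1 ∨ d % 4 = 3 := by have := Nat.odd_iff.mp hd; omega
  obtain ⟨r', hr', hiff⟩ : ∃ r', (r' = 1 ∨ r' = 3) ∧ ∀ m, (d * m) % 4 = r ↔ m % 4 = r' := by
    rcases hdm with h | h <;> rcases hr with rfl | rfl
    · exact ⟨1, Or.inl rfl, fun m => by rw [Nat.mul_mod, h]; omega⟩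
    · exact ⟨3, Or.inr rfl, fun m => by rw [Nat.mul_mod, h]; omega⟩
    · exact ⟨3, Or.inr rfl, fun m => by rw [Nat.mul_mod, h]; omega⟩
    · exact ⟨1, Or.inl rfl, fun m => by rw [Nat.mul_mod, h]; omega⟩
  have hre : ∑ m ∈ (range (N + 1)).filter (fun m => m % 4 = r ∧ d ∣ m), ((J((n:ℤ) | m) : ℤ) : ℝ) =
      ∑ m ∈ (range (N / d + 1)).filter (fun m => m % 4 = r'), ((J((n:ℤ) | d * m) : ℤ) : ℝ) := by
    symm
    refine sum_bij (fun m _ => d * m) ?_ ?_ ?_ ?_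
    · intro m hm
      simp only [mem_filter, mem_range] at hm ⊢
      refine ⟨?_, (hiff m).mpr hm.2, dvd_mul_right _ _⟩
      have : m ≤ N / d := by omega
      have := (Nat.le_div_iff_mul_le hd0).mp this
      rw [mul_comm]; omega
    · intro a _ b _ h; exact Nat.eq_of_mul_eq_mul_left hd0 h
    · intro m hm
      simp only [mem_filter, mem_range] at hm
      obtain ⟨h1, h2, k, rfl⟩ := hm
      refine ⟨k, ?_, rfl⟩
      simp only [mem_filter, mem_range]
      refine ⟨?_, (hiff k).mp h2⟩
      have : k ≤ N / d := (Nat.le_div_iff_mul_le hd0).mpr (by rw [mul_comm]; omega)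
      omega
    · intro m _; rfl
  obtain ⟨σ, hσ, hσr⟩ : ∃ σ : ℝ, |σ| = 1 ∧ ∀ m : ℕ, (if m % 4 = r' then (1:ℝ) else 0) =
      (if Odd m then 1/2 * (1 + σ * (J(-1 | m) : ℤ)) else 0) := by
    refine ⟨if r' = 1 then 1 else -1, by split_ifs <;> simp, fun m => ?_⟩
    by_cases hm : Odd m
    · rw [if_pos hm, jacobiSym.at_neg_one hm]
      have hmm : m % 4 = 1 ∨ m % 4 = 3 := by have := Nat.odd_iff.mp hm; omega
      rcases hmm with h | h
      · rw [ZMod.χ₄_nat_one_mod_four h]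
        rcases hr' with rfl | rfl <;> simp [h]
        norm_num
      · rw [ZMod.χ₄_nat_three_mod_four h]
        rcases hr' with rfl | rfl <;> simp [h]
        norm_num
    · rw [if_neg hm, if_neg]
      intro h
      rcases hr' with rfl | rfl <;> exact hm (Nat.odd_iff.mpr (by omega))
  rw [hre, sum_filter]
  have heq : ∀ m : ℕ, (if m % 4 = r' then ((J((n:ℤ) | d * m) : ℤ) : ℝ) else 0) =
      (J((n:ℤ) | d) : ℤ) * (1/2 * ((if Odd m then ((J(1 * n | m) : ℤ) : ℝ) else 0) +
        σ * (if Odd m then ((J(-1 * n | m) : ℤ) : ℝ) else 0))) := by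
    intro m
    have h1 : (if m % 4 = r' then ((J((n:ℤ) | d * m) : ℤ) : ℝ) else 0) =
      (if m % 4 = r' then (1:ℝ) else 0) * ((J((n:ℤ) | d * m) : ℤ) : ℝ) := by split_ifs <;> simp
    rw [h1, hσr]
    split_ifs with hm
    · rw [jacobiSym.mul_right' _ hd0.ne' hm.pos.ne', one_mul, jacobiSym.mul_left (-1)]
      push_cast; ring
    · simp
  simp_rw [heq]
  rw [← mul_sum, ← mul_sum, sum_add_distrib, ← mul_sum]
  have hJ : |((J((n:ℤ) | d) : ℤ) : ℝ)| ≤ 1 := by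
    rcases jacobiSym.trichotomy (n:ℤ) d with h | h | h <;> rw [h] <;> simp
  have b1 := char_bound 1 (Or.inl rfl) n hn hns (N / d + 1)
  have b2 := char_bound (-1) (Or.inr rfl) n hn hns (N / d + 1)
  rw [abs_mul, abs_mul]
  have h3 := abs_add_le (∑ m ∈ range (N / d + 1), if Odd m then ((J(1 * n | m) : ℤ) : ℝ) else 0)
    (σ * ∑ m ∈ range (N / d + 1), if Odd m then ((J(-1 * n | m) : ℤ) : ℝ) else 0)
  rw [abs_mul σ, hσ] at h3
  have h4 : |(1/2:ℝ)| = 1/2 := by norm_num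
  rw [h4]
  set Z := |(∑ m ∈ range (N / d + 1), if Odd m then ((J(1 * n | m) : ℤ) : ℝ) else 0) +
    σ * ∑ m ∈ range (N / d + 1), if Odd m then ((J(-1 * n | m) : ℤ) : ℝ) else 0| with hZ
  have hZ0 : 0 ≤ Z := abs_nonneg _
  have hZ2 : Z ≤ 2 * PVb n := by linarith
  nlinarith

lemma not_square_of_ne {a b : ℕ} (ha : Squarefree a) (hb : Squarefree b) (h : a ≠ b) :
    ¬ IsSquare (a * b) := by
  rintro ⟨w, hw⟩
  apply h
  have ha0 := ha.ne_zero
  have hb0 := hb.ne_zero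
  have hw0 : w ≠ 0 := by rintro rfl; simp_all
  apply Nat.eq_of_factorization_eq ha0 hb0
  intro p
  have h1 := ha.natFactorization_le_one p
  have h2 := hb.natFactorization_le_one p
  have h3 := congrArg (fun f => f.factorization p) hw
  simp only [Nat.factorization_mul ha0 hb0, Nat.factorization_mul hw0 hw0, Finsupp.add_apply] at h3
  omega
end JC

namespace Sel
open Finset ArithmeticFunction

noncomputable def DD (D : ℕ) : Finset ℕ := (Icc 1 D).filter (fun d => Odd d ∧ Squarefree d)

lemma mem_DD {D d : ℕ} : d ∈ DD D ↔ (1 ≤ d ∧ d ≤ D) ∧ Odd d ∧ Squarefree d := by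
  simp [DD]

lemma DD_of_dvd {D d l : ℕ} (hl : l ∈ DD D) (h : d ∣ l) : d ∈ DD D := by
  rw [mem_DD] at *
  have hl0 : 0 < l := hl.1.1
  have := Nat.le_of_dvd hl0 h
  exact ⟨⟨Nat.pos_of_dvd_of_pos h hl0, by omega⟩, hl.2.1.of_dvd_nat h, hl.2.2.squarefree_of_dvd h⟩

noncomputable def G (D : ℕ) : ℝ := ∑ l ∈ DD D, 1 / (l.totient : ℝ)

noncomputable def lam (D d : ℕ) : ℝ :=
  (moebius d : ℝ) * d * (∑ l ∈ (DD D).filter (fun l => d ∣ l), 1 / (l.totient : ℝ)) / G D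

lemma phi_pos {D l : ℕ} (hl : l ∈ DD D) : (0:ℝ) < l.totient := by
  rw [mem_DD] at hl
  exact_mod_cast Nat.totient_pos.mpr hl.1.1

lemma G_pos {D : ℕ} (hD : 1 ≤ D) : 0 < G D := by
  unfold G
  refine sum_pos (fun l hl => ?_) ⟨1, by rw [mem_DD]; simp [hD]⟩
  have := phi_pos hl
  positivity

lemma lam_one {D : ℕ} (hD : 1 ≤ D) : lam D 1 = 1 := by
  have := G_pos hD
  unfold lam
  simp only [isUnit_one, IsUnit.dvd, filter_true]
  rw [show ∑ l ∈ DD D, 1 / (l.totient : ℝ) = G D from rfl]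
  simp [this.ne']

lemma sum_moebius_between {k l : ℕ} (hl : Squarefree l) (hk : k ∣ l) :
    ∑ d ∈ l.divisors.filter (fun d => k ∣ d), (moebius d : ℝ) = if k = l then (moebius k : ℝ) else 0 := by
  obtain ⟨e, rfl⟩ := hk
  have hne := hl.ne_zero
  have hk0 : k ≠ 0 := left_ne_zero_of_mul hne
  have he0 : e ≠ 0 := right_ne_zero_of_mul hne
  have hcop : Nat.Coprime k e := Nat.coprime_of_squarefree_mul hl
  have h1 : ∑ d ∈ (k * e).divisors.filter (fun d => k ∣ d), (moebius d : ℝ) =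
      ∑ f ∈ e.divisors, (moebius (k * f) : ℝ) := by
    symm
    refine sum_bij (fun f _ => k * f) ?_ ?_ ?_ ?_
    · intro f hf
      simp only [mem_filter, Nat.mem_divisors] at hf ⊢
      exact ⟨⟨mul_dvd_mul_left k hf.1, hne⟩, dvd_mul_right _ _⟩
    · intro a _ b _ h; exact Nat.eq_of_mul_eq_mul_left (Nat.pos_of_ne_zero hk0) h
    · intro d hd
      simp only [mem_filter, Nat.mem_divisors] at hd
      obtain ⟨⟨h1, _⟩, f, rfl⟩ := hd
      exact ⟨f, by simp [he0, Nat.dvd_of_mul_dvd_mul_left (Nat.pos_of_ne_zero hk0) h1], rfl⟩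
    · intro _ _; rfl
  rw [h1]
  have h2 : ∀ f ∈ e.divisors, (moebius (k * f) : ℝ) = moebius k * moebius f := by
    intro f hf
    rw [isMultiplicative_moebius.map_mul_of_coprime
      (hcop.coprime_dvd_right (Nat.dvd_of_mem_divisors hf))]
    push_cast; rfl
  rw [sum_congr rfl h2, ← mul_sum]
  have h3 : ∑ f ∈ e.divisors, (moebius f : ℝ) = if e = 1 then 1 else 0 := by
    have := congrArg (fun F : ArithmeticFunction ℤ => F e) coe_zeta_mul_moebius
    simp only [coe_zeta_mul_apply, one_apply] at this
    have h := congrArg (fun z : ℤ => (z:ℝ)) this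
    push_cast at h
    exact h
  rw [h3]
  by_cases he : e = 1
  · simp [he]
  · rw [if_neg he, if_neg]; · simp
    intro h
    apply he
    have : k * e = k * 1 := by omega
    exact Nat.eq_of_mul_eq_mul_left (Nat.pos_of_ne_zero hk0) this

lemma inner_sum {D k : ℕ} (hk : k ∈ DD D) :
    ∑ d ∈ (DD D).filter (fun d => k ∣ d), lam D d / d = moebius k / (k.totient * G D) := by
  have hst : ∀ d ∈ (DD D).filter (fun d => k ∣ d), lam D d / d =
      ∑ l ∈ DD D, (if d ∣ l then (moebius d : ℝ) else 0) * (1 / l.totient / G D) := by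
    intro d hd
    have hd0 : (d:ℝ) ≠ 0 := by
      have := (mem_DD.mp (mem_filter.mp hd).1).1.1
      exact_mod_cast (by omega : d ≠ 0)
    unfold lam
    rw [sum_filter, mul_sum, sum_div, sum_div]
    refine sum_congr rfl fun l _ => ?_
    split_ifs
    · field_simp
    · simp
  rw [sum_congr rfl hst, sum_comm]
  have h2 : ∀ l ∈ DD D, ∑ d ∈ (DD D).filter (fun d => k ∣ d),
      (if d ∣ l then (moebius d : ℝ) else 0) * (1 / l.totient / G D) =
      if k = l then (moebius k : ℝ) * (1 / k.totient / G D) else 0 := by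
    intro l hl
    rw [← sum_mul, ← sum_filter, filter_filter]
    have hset : (DD D).filter (fun d => k ∣ d ∧ d ∣ l) = l.divisors.filter (fun d => k ∣ d) := by
      ext d
      simp only [mem_filter, Nat.mem_divisors]
      constructor
      · rintro ⟨_, h1, h2⟩
        exact ⟨⟨h2, (by have := (mem_DD.mp hl).1.1; omega)⟩, h1⟩
      · rintro ⟨⟨h2, _⟩, h1⟩
        exact ⟨DD_of_dvd hl h2, h1, h2⟩
    rw [hset]
    by_cases hkl : k ∣ l
    · rw [sum_moebius_between (mem_DD.mp hl).2.2 hkl]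
      split_ifs with h
      · rw [h]
      · simp
    · rw [filter_false_of_mem, sum_empty, if_neg]; · simp
      · rintro rfl; exact hkl dvd_rfl
      · intro d hd h
        exact hkl (h.trans (Nat.dvd_of_mem_divisors hd))
  rw [sum_congr rfl h2, sum_ite_eq, if_pos hk]
  rw [div_div, ← mul_div_assoc, mul_one]

theorem quad {D : ℕ} (hD : 1 ≤ D) :
    ∑ d1 ∈ DD D, ∑ d2 ∈ DD D, lam D d1 * lam D d2 / (Nat.lcm d1 d2 : ℝ) = 1 / G D := by
  have h1 : ∀ d1 ∈ DD D, ∀ d2 ∈ DD D, lam D d1 * lam D d2 / (Nat.lcm d1 d2 : ℝ) =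
      ∑ k ∈ DD D, (k.totient : ℝ) * ((if k ∣ d1 then lam D d1 / d1 else 0) *
        (if k ∣ d2 then lam D d2 / d2 else 0)) := by
    intro d1 hd1 d2 hd2
    have e1 : d1 ≠ 0 := by have := (mem_DD.mp hd1).1.1; omega
    have e2 : d2 ≠ 0 := by have := (mem_DD.mp hd2).1.1; omega
    have hg : (Nat.gcd d1 d2 : ℝ) = ∑ k ∈ DD D, if k ∣ d1 ∧ k ∣ d2 then (k.totient : ℝ) else 0 := by
      conv_lhs => rw [← Nat.sum_totient (Nat.gcd d1 d2)]
      push_cast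
      rw [← sum_filter]
      refine sum_congr ?_ fun _ _ => rfl
      ext k
      simp only [Nat.mem_divisors, mem_filter, Nat.dvd_gcd_iff]
      constructor
      · rintro ⟨h, _⟩; exact ⟨DD_of_dvd hd1 h.1, h⟩
      · rintro ⟨_, h⟩; exact ⟨h, Nat.gcd_ne_zero_left e1⟩
    have hl : (Nat.gcd d1 d2 : ℝ) * Nat.lcm d1 d2 = d1 * d2 := by exact_mod_cast Nat.gcd_mul_lcm d1 d2
    have e1' : (d1:ℝ) ≠ 0 := by exact_mod_cast e1
    have e2' : (d2:ℝ) ≠ 0 := by exact_mod_cast e2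
    have hl0 : (Nat.lcm d1 d2 : ℝ) ≠ 0 := by exact_mod_cast Nat.lcm_ne_zero e1 e2
    have : lam D d1 * lam D d2 / (Nat.lcm d1 d2 : ℝ) = (Nat.gcd d1 d2 : ℝ) * (lam D d1 / d1 * (lam D d2 / d2)) := by
      field_simp
      rw [mul_assoc, ← hl]; ring
    rw [this, hg, sum_mul]
    refine sum_congr rfl fun k _ => ?_
    by_cases a : k ∣ d1 <;> by_cases b : k ∣ d2 <;> simp [a, b]
  have h2 : ∑ d1 ∈ DD D, ∑ d2 ∈ DD D, lam D d1 * lam D d2 / (Nat.lcm d1 d2 : ℝ) =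
      ∑ k ∈ DD D, (k.totient : ℝ) * (∑ d ∈ DD D, if k ∣ d then lam D d / d else 0) ^ 2 := by
    rw [sum_congr rfl fun d1 hd1 => sum_congr rfl fun d2 hd2 => h1 d1 hd1 d2 hd2]
    rw [sum_congr rfl fun d1 _ => sum_comm, sum_comm]
    refine sum_congr rfl fun k _ => ?_
    rw [sq, sum_mul_sum, mul_sum]
    refine sum_congr rfl fun d1 _ => ?_
    rw [mul_sum]
  rw [h2]
  have h3 : ∀ k ∈ DD D, (k.totient : ℝ) * (∑ d ∈ DD D, if k ∣ d then lam D d / d else 0) ^ 2 =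
      (1 / k.totient) / G D ^ 2 := by
    intro k hk
    rw [← sum_filter, inner_sum hk]
    have hp := phi_pos hk
    have hG := G_pos hD
    have hm : (moebius k : ℝ) ^ 2 = 1 := by
      exact_mod_cast moebius_sq_eq_one_of_squarefree (mem_DD.mp hk).2.2
    rw [div_pow, hm]
    field_simp
  rw [sum_congr rfl h3, ← sum_div, show ∑ l ∈ DD D, 1 / (l.totient : ℝ) = G D from rfl]
  have hG := G_pos hD
  field_simp

theorem lam_l1 {D : ℕ} (hD : 1 ≤ D) : ∑ d ∈ DD D, |lam D d| ≤ D * (1 + Real.log D) := by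
  have hG := G_pos hD
  have h1 : ∀ d ∈ DD D, |lam D d| ≤ ∑ l ∈ DD D, (if d ∣ l then (d:ℝ) else 0) * (1 / l.totient) / G D := by
    intro d hd
    unfold lam
    rw [abs_div, abs_of_pos hG, abs_mul, abs_mul, Nat.abs_cast, ← sum_div]
    have hm : |(moebius d : ℝ)| ≤ 1 := by exact_mod_cast abs_moebius_le_one
    have hS0 : 0 ≤ ∑ l ∈ (DD D).filter (fun l => d ∣ l), 1 / (l.totient : ℝ) :=
      sum_nonneg fun l _ => by positivity
    rw [abs_of_nonneg hS0]
    gcongr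
    have : ∑ l ∈ DD D, (if d ∣ l then (d:ℝ) else 0) * (1 / l.totient) =
        d * ∑ l ∈ (DD D).filter (fun l => d ∣ l), 1 / (l.totient : ℝ) := by
      rw [sum_filter, mul_sum]
      refine sum_congr rfl fun l _ => ?_
      split_ifs <;> simp
    rw [this]
    have : 0 ≤ d * ∑ l ∈ (DD D).filter (fun l => d ∣ l), 1 / (l.totient : ℝ) := by positivity
    nlinarith
  refine (sum_le_sum h1).trans ?_
  rw [sum_comm]
  have h2 : ∀ l ∈ DD D, ∑ d ∈ DD D, (if d ∣ l then (d:ℝ) else 0) * (1 / l.totient) / G D ≤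
      D * (1 + Real.log D) * (1 / l.totient / G D) := by
    intro l hl
    have hp := phi_pos hl
    have hl1 := mem_DD.mp hl
    have hl0 : l ≠ 0 := by have := hl1.1.1; omega
    rw [← sum_div, ← sum_mul, mul_div_assoc]
    refine mul_le_mul_of_nonneg_right ?_ (by positivity)
    rw [← sum_filter]
    have hset : (DD D).filter (fun d => d ∣ l) = l.divisors := by
      ext d
      simp only [mem_filter, Nat.mem_divisors]
      exact ⟨fun h => ⟨h.2, hl0⟩, fun h => ⟨DD_of_dvd hl h.1, h.1⟩⟩
    rw [hset, ← Nat.sum_div_divisors l (fun d => (d:ℝ))]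
    calc ∑ d ∈ l.divisors, ((l / d : ℕ) : ℝ) ≤ ∑ d ∈ l.divisors, (l:ℝ) * (d:ℝ)⁻¹ := by
          refine sum_le_sum fun d _ => ?_
          rw [← div_eq_mul_inv]; exact Nat.cast_div_le
      _ ≤ ∑ d ∈ Icc 1 D, (D:ℝ) * (d:ℝ)⁻¹ := by
          refine (sum_le_sum_of_subset_of_nonneg (t := Icc 1 D) ?_ (fun _ _ _ => by positivity)).trans
            (sum_le_sum fun d _ => ?_)
          · intro d hd
            have h1 := Nat.pos_of_mem_divisors hd
            have h2 := Nat.divisor_le hd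
            rw [mem_Icc]; omega
          · have : (l:ℝ) ≤ D := by exact_mod_cast hl1.1.2
            gcongr
      _ ≤ _ := by
          rw [← mul_sum]
          have := harmonic_le_one_add_log D
          rw [harmonic_eq_sum_Icc] at this
          push_cast at this
          gcongr
  refine (sum_le_sum h2).trans ?_
  rw [← mul_sum, ← sum_div, show ∑ l ∈ DD D, 1 / (l.totient : ℝ) = G D from rfl, div_self hG.ne', mul_one]

/-- the completely multiplicative function 1/n -/
noncomputable def invHom : ℕ →* ℝ where
  toFun n := (n:ℝ)⁻¹
  map_one' := by simp
  map_mul' a b := by push_cast; rw [mul_inv]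

lemma sum_rad_le (D l : ℕ) (hl : l ∈ DD D) :
    ∑ n ∈ (Icc 1 D).filter (fun n => UniqueFactorizationMonoid.radical n = l), (1:ℝ) / n ≤
      1 / l.totient := by
  have hl1 := mem_DD.mp hl
  have hl0 : 0 < l := hl1.1.1
  have hl0' : (0:ℝ) < l := by exact_mod_cast hl0
  obtain ⟨hs, hsum⟩ := EulerProduct.summable_and_hasSum_factoredNumbers_prod_filter_prime_geometric
    (f := invHom) (by
      intro p hp
      change ‖((p:ℝ))⁻¹‖ < 1
      rw [norm_inv, Real.norm_natCast]
      exact inv_lt_one_of_one_lt₀ (by exact_mod_cast hp.one_lt)) l.primeFactors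
  have hprod : ∏ p ∈ l.primeFactors with p.Prime, (1 - invHom p)⁻¹ = l / l.totient := by
    have h1 : l.primeFactors.filter Nat.Prime = l.primeFactors :=
      filter_true_of_mem fun p hp => Nat.prime_of_mem_primeFactors hp
    rw [h1, prod_inv_distrib]
    have h2 := Nat.totient_eq_mul_prod_factors l
    have h3 : (l.totient : ℝ) = l * ∏ p ∈ l.primeFactors, (1 - (p : ℝ)⁻¹) := by
      have := congrArg (fun q : ℚ => (q:ℝ)) h2
      push_cast at this
      exact this
    rw [h3]
    have h4 : ∏ p ∈ l.primeFactors, (1 - invHom p) = ∏ p ∈ l.primeFactors, (1 - (p : ℝ)⁻¹) := rfl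
    rw [h4, div_mul_eq_div_div, div_self hl0'.ne', one_div]
  rw [hprod] at hsum
  set T := (Icc 1 D).filter (fun n => UniqueFactorizationMonoid.radical n = l) with hT
  have hdiv : ∀ n ∈ T, l ∣ n ∧ n / l ∈ Nat.factoredNumbers l.primeFactors := by
    intro n hn
    rw [hT, mem_filter, mem_Icc] at hn
    have hd : l ∣ n := by rw [← hn.2]; exact UniqueFactorizationMonoid.radical_dvd_self
    refine ⟨hd, ?_⟩
    have hnl : n / l ≠ 0 := by
      have := Nat.div_pos (Nat.le_of_dvd (by omega) hd) hl0
      omega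
    apply Nat.mem_factoredNumbers_of_primeFactors_subset hnl
    have h5 : n.primeFactors = l.primeFactors := by rw [← hn.2, Nat.primeFactors_radical]
    rw [← h5]
    exact Nat.primeFactors_mono (Nat.div_dvd_of_dvd hd) (by omega)
  have h6 : ∑ n ∈ T, (1:ℝ) / n = 1 / l * ∑ n ∈ T.attach, invHom ((n:ℕ) / l) := by
    rw [← sum_attach, mul_sum]
    refine sum_congr rfl fun n _ => ?_
    obtain ⟨hd, _⟩ := hdiv n n.2
    change _ = _ * (((n:ℕ) / l : ℕ) : ℝ)⁻¹
    rw [Nat.cast_div hd hl0'.ne']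
    field_simp
  have h7 : ∑ n ∈ T.attach, invHom ((n:ℕ) / l) ≤ l / l.totient := by
    let e : {n // n ∈ T} → Nat.factoredNumbers l.primeFactors := fun n => ⟨(n:ℕ) / l, (hdiv n n.2).2⟩
    have hinj : Function.Injective e := by
      intro a b hab
      have : (a:ℕ) / l = (b:ℕ) / l := congrArg Subtype.val hab
      have ha := (hdiv a a.2).1
      have hb := (hdiv b b.2).1
      apply Subtype.ext
      rw [← Nat.div_mul_cancel ha, this, Nat.div_mul_cancel hb]
    calc ∑ n ∈ T.attach, invHom ((n:ℕ) / l) = ∑ m ∈ T.attach.map ⟨e, hinj⟩, invHom m := by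
          rw [sum_map]; rfl
      _ ≤ l / l.totient := by
          refine sum_le_hasSum _ (fun m _ => ?_) hsum
          change 0 ≤ (((m:ℕ):ℝ))⁻¹
          positivity
  rw [h6]
  calc 1 / (l:ℝ) * ∑ n ∈ T.attach, invHom ((n:ℕ) / l) ≤ 1 / l * (l / l.totient) := by gcongr
    _ = 1 / l.totient := by field_simp

theorem G_ge (D : ℕ) : Real.log D / 2 ≤ G D := by
  rcases Nat.eq_zero_or_pos D with rfl | hD
  · simp; unfold G; positivity
  have h1 : ∑ n ∈ (Icc 1 D).filter Odd, (1:ℝ) / n ≤ G D := by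
    unfold G
    rw [← sum_fiberwise_of_maps_to (s := (Icc 1 D).filter Odd) (t := DD D)
      (g := fun n => UniqueFactorizationMonoid.radical n)]
    · refine sum_le_sum fun l hl => le_trans ?_ (sum_rad_le D l hl)
      refine sum_le_sum_of_subset_of_nonneg ?_ (fun _ _ _ => by positivity)
      intro n; simp only [mem_filter]; tauto
    · intro n hn
      simp only [mem_filter, mem_Icc] at hn
      rw [mem_DD]
      have hd : UniqueFactorizationMonoid.radical n ∣ n := UniqueFactorizationMonoid.radical_dvd_self
      have := Nat.le_of_dvd (by omega) hd
      exact ⟨⟨Nat.radical_pos n, by omega⟩, hn.2.of_dvd_nat hd, UniqueFactorizationMonoid.squarefree_radical⟩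
  have h2 : ∑ n ∈ (Icc 1 D).filter (fun n => ¬ Odd n), (1:ℝ) / n ≤ ∑ n ∈ (Icc 1 D).filter Odd, (1:ℝ) / n := by
    calc ∑ n ∈ (Icc 1 D).filter (fun n => ¬ Odd n), (1:ℝ) / n
        ≤ ∑ n ∈ (Icc 1 D).filter (fun n => ¬ Odd n), (1:ℝ) / ((n - 1 : ℕ) : ℝ) := by
          refine sum_le_sum fun n hn => ?_
          simp only [mem_filter, mem_Icc, Nat.not_odd_iff_even] at hn
          have : 1 ≤ n - 1 := by
            have := Nat.even_iff.mp hn.2; omega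
          have h : (0:ℝ) < ((n - 1 : ℕ) : ℝ) := by exact_mod_cast this
          have h' : ((n - 1 : ℕ) : ℝ) ≤ n := by exact_mod_cast Nat.sub_le n 1
          gcongr
      _ = ∑ m ∈ ((Icc 1 D).filter (fun n => ¬ Odd n)).image (fun n : ℕ => (n - 1 : ℕ)), (1:ℝ) / (m : ℕ) := by
          rw [sum_image]
          intro a ha b hb h
          have ha' := (mem_Icc.mp (mem_filter.mp (mem_coe.mp ha)).1).1
          have hb' := (mem_Icc.mp (mem_filter.mp (mem_coe.mp hb)).1).1
          have h' : a - 1 = b - 1 := h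
          omega
      _ ≤ _ := by
          refine sum_le_sum_of_subset_of_nonneg ?_ (fun _ _ _ => by positivity)
          intro m hm
          simp only [mem_image, mem_filter, mem_Icc, Nat.not_odd_iff_even] at hm ⊢
          obtain ⟨n, ⟨h1, h2⟩, rfl⟩ := hm
          have := Nat.even_iff.mp h2
          exact ⟨by omega, Nat.odd_iff.mpr (by omega)⟩
  have h3 : Real.log D ≤ ∑ n ∈ Icc 1 D, (1:ℝ) / n := by
    have := log_add_one_le_harmonic D
    rw [harmonic_eq_sum_Icc] at this
    push_cast at this
    have h4 : Real.log D ≤ Real.log (D + 1) := by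
      apply Real.log_le_log
      · exact_mod_cast hD
      · linarith
    simp only [one_div]
    linarith
  rw [← sum_filter_add_sum_filter_not _ Odd] at h3
  linarith
end Sel

namespace MS
open Finset
open scoped NumberTheorySymbols

lemma count_mod (r : ℕ) (hr : r = 1 ∨ r = 3) (X : ℕ) :
    ((range (X + 1)).filter (fun m => m % 4 = r)).card = (X + 4 - r) / 4 := by
  induction X with
  | zero => rcases hr with rfl | rfl <;> decide
  | succ X ih =>
    rw [range_add_one, filter_insert]
    split_ifs with h
    · rw [card_insert_of_notMem (by simp), ih]; omega
    · rw [ih]; rcases hr with rfl | rfl <;> omega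

lemma count_ap (r : ℕ) (hr : r = 1 ∨ r = 3) (d : ℕ) (hd : Odd d) (N : ℕ) :
    |(((range (N + 1)).filter (fun m => m % 4 = r ∧ d ∣ m)).card : ℝ) - N / (4 * d)| ≤ 1 := by
  have hd0 : 0 < d := hd.pos
  have hdm : d % 4 = 1 ∨ d % 4 = 3 := by have := Nat.odd_iff.mp hd; omega
  obtain ⟨r', hr', hiff⟩ : ∃ r', (r' = 1 ∨ r' = 3) ∧ ∀ m, (d * m) % 4 = r ↔ m % 4 = r' := by
    rcases hdm with h | h <;> rcases hr with rfl | rfl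
    · exact ⟨1, Or.inl rfl, fun m => by rw [Nat.mul_mod, h]; omega⟩
    · exact ⟨3, Or.inr rfl, fun m => by rw [Nat.mul_mod, h]; omega⟩
    · exact ⟨3, Or.inr rfl, fun m => by rw [Nat.mul_mod, h]; omega⟩
    · exact ⟨1, Or.inl rfl, fun m => by rw [Nat.mul_mod, h]; omega⟩
  have hre : ((range (N + 1)).filter (fun m => m % 4 = r ∧ d ∣ m)).card =
      ((range (N / d + 1)).filter (fun m => m % 4 = r')).card := by
    symm
    refine card_bij (fun m _ => d * m) ?_ ?_ ?_
    · intro m hm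
      simp only [mem_filter, mem_range] at hm ⊢
      refine ⟨?_, (hiff m).mpr hm.2, dvd_mul_right _ _⟩
      have : m ≤ N / d := by omega
      have := (Nat.le_div_iff_mul_le hd0).mp this
      rw [mul_comm]; omega
    · intro a _ b _ h; exact Nat.eq_of_mul_eq_mul_left hd0 h
    · intro m hm
      simp only [mem_filter, mem_range] at hm
      obtain ⟨h1, h2, k, rfl⟩ := hm
      refine ⟨k, ?_, rfl⟩
      simp only [mem_filter, mem_range]
      refine ⟨?_, (hiff k).mp h2⟩
      have : k ≤ N / d := (Nat.le_div_iff_mul_le hd0).mpr (by rw [mul_comm]; omega)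
      omega
  rw [hre, count_mod r' hr']
  have hd0' : (0:ℝ) < d := by exact_mod_cast hd0
  have e1 : ((N / d : ℕ) : ℝ) ≤ N / d := Nat.cast_div_le
  have e2 : (N:ℝ) / d < (N / d : ℕ) + 1 := by
    rw [div_lt_iff₀ hd0']
    have := Nat.lt_mul_div_succ N hd0
    have : N < (N / d + 1) * d := by rw [mul_comm]; exact this
    exact_mod_cast this
  generalize N / d = X at e1 e2 ⊢
  have e3 : 4 * ((X + 4 - r') / 4) ≤ X + 3 := by rcases hr' with rfl | rfl <;> omega
  have e4 : X ≤ 4 * ((X + 4 - r') / 4) + 2 := by rcases hr' with rfl | rfl <;> omega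
  set c := (X + 4 - r') / 4
  have e3' : 4 * (c:ℝ) ≤ X + 3 := by exact_mod_cast e3
  have e4' : (X:ℝ) ≤ 4 * c + 2 := by exact_mod_cast e4
  have e5 : (N:ℝ) / (4 * d) = (N / d) / 4 := by field_simp
  rw [e5, abs_le]
  constructor <;> linarith

noncomputable def nu (D m : ℕ) : ℝ := (∑ d ∈ (Sel.DD D).filter (fun d => d ∣ m), Sel.lam D d) ^ 2

noncomputable def Lam (D : ℕ) : ℝ := D * (1 + Real.log D)

lemma nu_prime {D p : ℕ} (hD : 1 ≤ D) (hp : p.Prime) (h : D < p) : nu D p = 1 := by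
  unfold nu
  have : (Sel.DD D).filter (fun d => d ∣ p) = {1} := by
    ext d
    simp only [mem_filter, mem_singleton, Sel.mem_DD]
    constructor
    · rintro ⟨h1, h2⟩
      rcases (Nat.dvd_prime hp).mp h2 with h3 | h3
      · exact h3
      · omega
    · rintro rfl; simp [hD]
  rw [this, sum_singleton, Sel.lam_one hD]; norm_num

lemma nu_sum (D : ℕ) (M : Finset ℕ) (f : ℕ → ℝ) :
    ∑ m ∈ M, nu D m * f m = ∑ d1 ∈ Sel.DD D, ∑ d2 ∈ Sel.DD D, Sel.lam D d1 * Sel.lam D d2 *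
      ∑ m ∈ M.filter (fun m => Nat.lcm d1 d2 ∣ m), f m := by
  have : ∀ m ∈ M, nu D m * f m = ∑ d1 ∈ Sel.DD D, ∑ d2 ∈ Sel.DD D, Sel.lam D d1 * Sel.lam D d2 *
      (if Nat.lcm d1 d2 ∣ m then f m else 0) := by
    intro m _
    unfold nu
    rw [sq, sum_filter, sum_mul_sum, sum_mul]
    refine sum_congr rfl fun d1 _ => ?_
    rw [sum_mul]
    refine sum_congr rfl fun d2 _ => ?_
    by_cases a : d1 ∣ m <;> by_cases b : d2 ∣ m <;> simp [a, b, Nat.lcm_dvd_iff]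
  rw [sum_congr rfl this, sum_comm]
  refine sum_congr rfl fun d1 _ => ?_
  rw [sum_comm]
  refine sum_congr rfl fun d2 _ => ?_
  rw [← mul_sum, ← sum_filter]

lemma abs_double {D : ℕ} (hD : 1 ≤ D) :
    ∑ d1 ∈ Sel.DD D, ∑ d2 ∈ Sel.DD D, |Sel.lam D d1| * |Sel.lam D d2| ≤ Lam D ^ 2 := by
  rw [← sum_mul_sum, ← sq]
  have := Sel.lam_l1 hD
  have h0 : 0 ≤ ∑ d ∈ Sel.DD D, |Sel.lam D d| := sum_nonneg fun _ _ => abs_nonneg _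
  exact pow_le_pow_left₀ h0 this 2

lemma odd_lcm {D d1 d2 : ℕ} (h1 : d1 ∈ Sel.DD D) (h2 : d2 ∈ Sel.DD D) : Odd (Nat.lcm d1 d2) := by
  have o1 := (Sel.mem_DD.mp h1).2.1
  have o2 := (Sel.mem_DD.mp h2).2.1
  have : Nat.lcm d1 d2 ∣ d1 * d2 := Nat.lcm_dvd_mul d1 d2
  exact (o1.mul o2).of_dvd_nat this

lemma nu_total {D : ℕ} (hD : 1 ≤ D) (N r : ℕ) (hr : r = 1 ∨ r = 3) :
    ∑ m ∈ (range (N + 1)).filter (fun m => m % 4 = r), nu D m ≤ N / (4 * Sel.G D) + Lam D ^ 2 := by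
  have h := nu_sum D ((range (N + 1)).filter (fun m => m % 4 = r)) (fun _ => 1)
  simp only [mul_one] at h
  rw [h]
  have hq := Sel.quad hD
  calc _ ≤ ∑ d1 ∈ Sel.DD D, ∑ d2 ∈ Sel.DD D, (N / 4 * (Sel.lam D d1 * Sel.lam D d2 / (Nat.lcm d1 d2 : ℝ)) +
        |Sel.lam D d1| * |Sel.lam D d2|) := by
        refine sum_le_sum fun d1 h1 => sum_le_sum fun d2 h2 => ?_
        rw [sum_const, nsmul_eq_mul, mul_one, filter_filter]
        have hc := count_ap r hr _ (odd_lcm h1 h2) N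
        set c : ℝ := (((range (N + 1)).filter (fun m => m % 4 = r ∧ d1.lcm d2 ∣ m)).card : ℝ)
        have hl : (0:ℝ) < (Nat.lcm d1 d2 : ℝ) := by exact_mod_cast (odd_lcm h1 h2).pos
        have e : Sel.lam D d1 * Sel.lam D d2 * c = N / 4 * (Sel.lam D d1 * Sel.lam D d2 / (Nat.lcm d1 d2 : ℝ)) +
          Sel.lam D d1 * Sel.lam D d2 * (c - N / (4 * (Nat.lcm d1 d2 : ℝ))) := by
          field_simp; ring
        rw [e]
        refine add_le_add le_rfl ?_
        refine (le_abs_self _).trans ?_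
        rw [abs_mul, abs_mul]
        exact mul_le_of_le_one_right (by positivity) hc
    _ ≤ _ := by
        simp_rw [sum_add_distrib, ← mul_sum]
        rw [hq]
        have := abs_double hD
        simp_rw [← mul_sum] at this
        have e : (N:ℝ) / 4 * (1 / Sel.G D) = N / (4 * Sel.G D) := by
          have := Sel.G_pos hD; field_simp
        rw [e]; linarith

lemma nu_off {D : ℕ} (hD : 1 ≤ D) (N r : ℕ) (hr : r = 1 ∨ r = 3) (n : ℕ) (hn : 0 < n) (hns : ¬ IsSquare n) :
    |∑ m ∈ (range (N + 1)).filter (fun m => m % 4 = r), nu D m * ((J((n:ℤ) | m) : ℤ) : ℝ)| ≤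
      Lam D ^ 2 * JC.PVb n := by
  rw [nu_sum]
  have hP : 0 ≤ JC.PVb n := by
    unfold JC.PVb
    have : 0 ≤ Real.log (4 * n : ℕ) := Real.log_natCast_nonneg _
    positivity
  calc _ ≤ ∑ d1 ∈ Sel.DD D, ∑ d2 ∈ Sel.DD D, |Sel.lam D d1| * |Sel.lam D d2| * JC.PVb n := by
        refine (abs_sum_le_sum_abs _ _).trans (sum_le_sum fun d1 h1 =>
          (abs_sum_le_sum_abs _ _).trans (sum_le_sum fun d2 h2 => ?_))
        rw [abs_mul, abs_mul, filter_filter]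
        gcongr
        exact JC.ap_bound n hn hns r hr _ (odd_lcm h1 h2) N
    _ ≤ _ := by
        simp_rw [← sum_mul]
        gcongr
        exact abs_double hD

theorem ms (S : Finset ℕ) (hS : ∀ s ∈ S, Squarefree s) (w : ℕ → ℝ) (N D : ℕ) (hD : 1 ≤ D) (r : ℕ)
    (hr : r = 1 ∨ r = 3) :
    ∑ p ∈ (range (N + 1)).filter (fun p => p.Prime ∧ p % 4 = r ∧ D < p),
      (∑ s ∈ S, w s * ((J((s:ℤ) | p) : ℤ) : ℝ)) ^ 2 ≤
    (∑ s ∈ S, w s ^ 2) * (N / (4 * Sel.G D) + Lam D ^ 2) +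
      Lam D ^ 2 * ∑ s ∈ S, ∑ t ∈ S, |w s| * |w t| * JC.PVb (s * t) := by
  set M := (range (N + 1)).filter (fun m => m % 4 = r) with hM
  set F : ℕ → ℝ := fun m => ∑ s ∈ S, w s * ((J((s:ℤ) | m) : ℤ) : ℝ) with hF
  have hPn : ∀ n, 0 ≤ JC.PVb n := by
    intro n
    unfold JC.PVb
    have : 0 ≤ Real.log (4 * n : ℕ) := Real.log_natCast_nonneg _
    positivity
  have h1 : ∑ p ∈ (range (N + 1)).filter (fun p => p.Prime ∧ p % 4 = r ∧ D < p), F p ^ 2 ≤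
      ∑ m ∈ M, nu D m * F m ^ 2 := by
    calc _ = ∑ p ∈ (range (N + 1)).filter (fun p => p.Prime ∧ p % 4 = r ∧ D < p), nu D p * F p ^ 2 := by
          refine sum_congr rfl fun p hp => ?_
          simp only [mem_filter] at hp
          rw [nu_prime hD hp.2.1 hp.2.2.2, one_mul]
      _ ≤ _ := by
          refine sum_le_sum_of_subset_of_nonneg ?_ (fun m _ _ => by unfold nu; positivity)
          intro p; simp only [hM, mem_filter]; tauto
  refine h1.trans ?_
  have h2 : ∑ m ∈ M, nu D m * F m ^ 2 = ∑ s ∈ S, ∑ t ∈ S, w s * w t *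
      ∑ m ∈ M, nu D m * ((J(((s * t : ℕ):ℤ) | m) : ℤ) : ℝ) := by
    have : ∀ m ∈ M, nu D m * F m ^ 2 = ∑ s ∈ S, ∑ t ∈ S, w s * w t *
        (nu D m * ((J(((s * t : ℕ):ℤ) | m) : ℤ) : ℝ)) := by
      intro m _
      rw [hF]; simp only
      rw [sq, sum_mul_sum, mul_sum]
      refine sum_congr rfl fun s _ => ?_
      rw [mul_sum]
      refine sum_congr rfl fun t _ => ?_
      push_cast
      rw [jacobiSym.mul_left]; push_cast; ring
    rw [sum_congr rfl this, sum_comm]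
    refine sum_congr rfl fun s _ => ?_
    rw [sum_comm]
    refine sum_congr rfl fun t _ => ?_
    rw [← mul_sum]
  rw [h2]
  have hterm : ∀ s ∈ S, ∀ t ∈ S, w s * w t * ∑ m ∈ M, nu D m * ((J(((s * t : ℕ):ℤ) | m) : ℤ) : ℝ) ≤
      (if s = t then w s ^ 2 * (N / (4 * Sel.G D) + Lam D ^ 2) else 0) +
        Lam D ^ 2 * (|w s| * |w t| * JC.PVb (s * t)) := by
    intro s hs t ht
    by_cases hst : s = t
    · subst hst
      rw [if_pos rfl]
      have hd : ∑ m ∈ M, nu D m * ((J(((s * s : ℕ):ℤ) | m) : ℤ) : ℝ) ≤ N / (4 * Sel.G D) + Lam D ^ 2 := by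
        refine le_trans (sum_le_sum fun m _ => ?_) (nu_total hD N r hr)
        have hn : 0 ≤ nu D m := by unfold nu; positivity
        have hj : ((J(((s * s : ℕ):ℤ) | m) : ℤ) : ℝ) ≤ 1 := by
          rcases jacobiSym.trichotomy (((s * s : ℕ):ℤ)) m with h | h | h <;> rw [h] <;> simp
        exact mul_le_of_le_one_right hn hj
      have : 0 ≤ Lam D ^ 2 * (|w s| * |w s| * JC.PVb (s * s)) := by
        have := hPn (s * s); positivity
      have h3 := mul_le_mul_of_nonneg_left hd (mul_self_nonneg (w s))
      rw [sq (w s)]; linarith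
    · rw [if_neg hst, zero_add]
      have hpos : 0 < s * t := Nat.mul_pos (Nat.pos_of_ne_zero (hS s hs).ne_zero) (Nat.pos_of_ne_zero (hS t ht).ne_zero)
      have h3 := nu_off hD N r hr (s * t) hpos (JC.not_square_of_ne (hS s hs) (hS t ht) hst)
      refine (le_abs_self _).trans ?_
      rw [abs_mul, abs_mul]
      calc _ ≤ |w s| * |w t| * (Lam D ^ 2 * JC.PVb (s * t)) := by gcongr
        _ = _ := by ring
  refine (sum_le_sum fun s hs => sum_le_sum fun t ht => hterm s hs t ht).trans ?_
  simp_rw [sum_add_distrib, ← mul_sum]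
  gcongr
  rw [sum_mul]
  refine sum_le_sum fun s hs => ?_
  rw [sum_ite_eq, if_pos hs]
end MS

namespace MS
open Finset
open scoped NumberTheorySymbols

lemma sum_inv_le (M : ℕ) : ∑ a ∈ Icc 1 M, (1:ℝ) / a ≤ 1 + Real.log M := by
  have := harmonic_le_one_add_log M
  rw [harmonic_eq_sum_Icc] at this
  push_cast at this
  simpa [one_div] using this

lemma sum_div_le (M : ℕ) : ∑ s ∈ Icc 1 M, (s.divisors.card : ℝ) / s ≤ (1 + Real.log M) ^ 2 := by
  have h1 : ∀ s ∈ Icc 1 M, (s.divisors.card : ℝ) / s = ∑ a ∈ Icc 1 M, if a ∣ s then (1:ℝ) / s else 0 := by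
    intro s hs
    rw [mem_Icc] at hs
    rw [← sum_filter, sum_const, nsmul_eq_mul, mul_one_div]
    congr 3
    ext a
    simp only [Nat.mem_divisors, mem_filter, mem_Icc]
    constructor
    · rintro ⟨h, h0⟩
      exact ⟨⟨Nat.pos_of_dvd_of_pos h (by omega), (Nat.le_of_dvd (by omega) h).trans hs.2⟩, h⟩
    · rintro ⟨_, h⟩; exact ⟨h, by omega⟩
  rw [sum_congr rfl h1, sum_comm]
  have h2 : ∀ a ∈ Icc 1 M, (∑ s ∈ Icc 1 M, if a ∣ s then (1:ℝ) / s else 0) ≤ 1 / a * (1 + Real.log M) := by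
    intro a ha
    have ha0 : 0 < a := (mem_Icc.mp ha).1
    rw [← sum_filter]
    calc ∑ k ∈ (Icc 1 M).filter (fun k => a ∣ k), (1:ℝ) / k
        ≤ ∑ k ∈ (Icc 1 M).image (fun b => a * b), (1:ℝ) / k := by
          refine sum_le_sum_of_subset_of_nonneg ?_ (fun _ _ _ => by positivity)
          intro k hk
          simp only [mem_filter, mem_Icc] at hk
          obtain ⟨⟨h1, h2⟩, b, rfl⟩ := hk
          refine mem_image.mpr ⟨b, mem_Icc.mpr ⟨?_, ?_⟩, rfl⟩
          · rcases Nat.eq_zero_or_pos b with h | h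
            · subst h; simp at h1
            · exact h
          · nlinarith
      _ = ∑ b ∈ Icc 1 M, (1:ℝ) / (a * b : ℕ) := by
          rw [sum_image]
          intro b _ c _ h
          exact Nat.eq_of_mul_eq_mul_left ha0 h
      _ = 1 / a * ∑ b ∈ Icc 1 M, (1 : ℝ) / b := by
          rw [mul_sum]
          refine sum_congr rfl fun b hb => ?_
          push_cast
          rw [div_mul_div_comm, one_mul]
      _ ≤ _ := by gcongr; exact sum_inv_le M
  refine (sum_le_sum h2).trans ?_
  rw [← sum_mul, sq]
  have : 0 ≤ Real.log M := Real.log_natCast_nonneg _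
  gcongr
  exact sum_inv_le M

lemma card_div_four (s t : ℕ) : ((4 * (s * t)).divisors.card : ℝ) ≤ 3 * (s.divisors.card * t.divisors.card) := by
  have h : (4 * (s * t)).divisors.card ≤ 3 * (s.divisors.card * t.divisors.card) := by
    rw [Nat.divisors_mul, Nat.divisors_mul]
    refine (Finset.card_mul_le).trans ?_
    have : (Nat.divisors 4).card = 3 := by decide
    rw [this]
    exact Nat.mul_le_mul_left 3 Finset.card_mul_le
  exact_mod_cast h

lemma off_bound (S : Finset ℕ) (w : ℕ → ℝ) (M : ℕ) (C : ℝ) (hC : 0 ≤ C)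
    (hS : ∀ s ∈ S, 1 ≤ s ∧ s ≤ M) (hw : ∀ s ∈ S, |w s| ≤ C / s) :
    ∑ s ∈ S, ∑ t ∈ S, |w s| * |w t| * JC.PVb (s * t) ≤
      18 * C ^ 2 * M * (1 + Real.log M) ^ 5 := by
  have hlM : 0 ≤ Real.log M := Real.log_natCast_nonneg _
  set L := 1 + Real.log M with hL
  have hL1 : 1 ≤ L := by linarith
  have key : ∀ s ∈ S, ∀ t ∈ S, |w s| * |w t| * JC.PVb (s * t) ≤
      18 * C ^ 2 * M * L * ((s.divisors.card / s) * (t.divisors.card / t)) := by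
    intro s hs t ht
    obtain ⟨s1, s2⟩ := hS s hs
    obtain ⟨t1, t2⟩ := hS t ht
    have s1' : (1:ℝ) ≤ s := by exact_mod_cast s1
    have t1' : (1:ℝ) ≤ t := by exact_mod_cast t1
    have s2' : (s:ℝ) ≤ M := by exact_mod_cast s2
    have t2' : (t:ℝ) ≤ M := by exact_mod_cast t2
    have hsq : √((4 * (s * t) : ℕ) : ℝ) ≤ 2 * M := by
      rw [Real.sqrt_le_left (by positivity)]
      push_cast
      nlinarith
    have hlog : 1 + Real.log ((4 * (s * t) : ℕ) : ℝ) ≤ 3 * L := by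
      push_cast
      rw [Real.log_mul (by norm_num) (by positivity), Real.log_mul (by positivity) (by positivity)]
      have l1 : Real.log s ≤ Real.log M := Real.log_le_log (by linarith) s2'
      have l2 : Real.log t ≤ Real.log M := Real.log_le_log (by linarith) t2'
      have l4 : Real.log 4 ≤ 2 := by
        rw [show (4:ℝ) = 2 ^ 2 by norm_num, Real.log_pow]
        have := Real.log_two_lt_d9
        push_cast; linarith
      linarith
    have hPV : JC.PVb (s * t) ≤ 2 * M * (3 * (s.divisors.card * t.divisors.card) * (3 * L)) := by
      unfold JC.PVb
      have : 0 ≤ Real.log ((4 * (s * t) : ℕ) : ℝ) := Real.log_natCast_nonneg _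
      gcongr
      exact card_div_four s t
    have h0 : 0 ≤ JC.PVb (s * t) := by
      unfold JC.PVb
      have : 0 ≤ Real.log ((4 * (s * t) : ℕ) : ℝ) := Real.log_natCast_nonneg _
      positivity
    calc |w s| * |w t| * JC.PVb (s * t)
        ≤ (C / s) * (C / t) * (2 * M * (3 * (s.divisors.card * t.divisors.card) * (3 * L))) := by
          have := hw s hs
          have := hw t ht
          gcongr
      _ = _ := by field_simp; ring
  refine (sum_le_sum fun s hs => sum_le_sum fun t ht => key s hs t ht).trans ?_
  have h3 : ∑ s ∈ S, (s.divisors.card : ℝ) / s ≤ L ^ 2 := by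
    refine le_trans (sum_le_sum_of_subset_of_nonneg ?_ (fun _ _ _ => by positivity)) (sum_div_le M)
    intro s hs; rw [mem_Icc]; exact hS s hs
  have h4 : 0 ≤ ∑ s ∈ S, (s.divisors.card : ℝ) / s := sum_nonneg fun _ _ => by positivity
  have h5 : ∑ s ∈ S, ∑ t ∈ S, 18 * C ^ 2 * M * L * (((s.divisors.card : ℝ) / s) * (t.divisors.card / t))
      = 18 * C ^ 2 * M * L * ((∑ s ∈ S, (s.divisors.card : ℝ) / s) * (∑ s ∈ S, (s.divisors.card : ℝ) / s)) := by
    rw [sum_mul_sum, mul_sum]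
    refine sum_congr rfl fun s _ => ?_
    rw [mul_sum]
  rw [h5]
  have h6 := mul_le_mul h3 h3 h4 (by positivity)
  have h7 : 0 ≤ 18 * C ^ 2 * M * L := by positivity
  have h8 := mul_le_mul_of_nonneg_left h6 h7
  refine h8.trans (le_of_eq ?_)
  clear_value L
  ring

open Filter Topology in
lemma err_small (C ε κ : ℝ) (hε : 0 < ε) (hκ : κ < 1) :
    ∀ᶠ x : ℝ in atTop, 19 * C ^ 2 * x ^ κ * (1 + Real.log x) ^ 7 ≤ ε * x / Real.log x := by
  have h1 : (fun x : ℝ => Real.log x ^ (8:ℝ)) =o[atTop] (fun x => x ^ (1 - κ)) :=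
    isLittleO_log_rpow_rpow_atTop 8 (by linarith)
  set B : ℝ := 19 * C ^ 2 * 2 ^ 7 + 1 with hB
  have hB0 : 0 < B := by positivity
  have h2 := h1.bound (show 0 < ε / B by positivity)
  filter_upwards [h2, Real.tendsto_log_atTop.eventually_ge_atTop 1, eventually_gt_atTop 0] with x hx hl hx0
  rw [Real.norm_of_nonneg (by positivity), Real.norm_of_nonneg (by positivity)] at hx
  rw [le_div_iff₀ (by linarith)]
  set l := Real.log x
  have e8 : l ^ (8:ℝ) = l ^ 8 := by exact_mod_cast Real.rpow_natCast l 8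
  rw [e8] at hx
  have hxk : x = x ^ κ * x ^ (1 - κ) := by
    rw [← Real.rpow_add hx0]; simp
  calc 19 * C ^ 2 * x ^ κ * (1 + l) ^ 7 * l ≤ 19 * C ^ 2 * x ^ κ * (2 * l) ^ 7 * l := by
        have : 1 + l ≤ 2 * l := by linarith
        have : 0 ≤ 1 + l := by linarith
        gcongr
    _ = (19 * C ^ 2 * 2 ^ 7) * x ^ κ * l ^ 8 := by ring
    _ ≤ B * x ^ κ * (ε / B * x ^ (1 - κ)) := by
        have : 19 * C ^ 2 * 2 ^ 7 ≤ B := by rw [hB]; linarith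
        gcongr
    _ = ε * (x ^ κ * x ^ (1 - κ)) := by field_simp
    _ = ε * x := by rw [← hxk]

open Filter Topology in
theorem ms_asymp (θ τ A C ε : ℝ) (hθ : 0 < θ) (hτ : 0 < τ) (hθτ : 2 * θ + τ < 1) (hA : 1 < 2 * A * θ)
    (hA0 : 0 < A) (hC : 0 ≤ C) (hε : 0 < ε) :
    ∀ᶠ N : ℕ in atTop, ∀ (S : Finset ℕ) (w : ℕ → ℝ) (r : ℕ), (r = 1 ∨ r = 3) →
      (∀ s ∈ S, Squarefree s ∧ (s:ℝ) ≤ (N:ℝ) ^ τ) → (∀ s ∈ S, |w s| ≤ C / s) →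
      ∑ p ∈ (range (N + 1)).filter (fun p => p.Prime ∧ p % 4 = r ∧ (N:ℝ) ^ (0.95:ℝ) < p),
        (∑ s ∈ S, w s * ((J((s:ℤ) | p) : ℤ) : ℝ)) ^ 2 ≤
      (A * ∑ s ∈ S, w s ^ 2 + ε) * N / Real.log N := by
  have hlogt : Tendsto (fun N : ℕ => Real.log (N:ℝ)) atTop atTop :=
    Real.tendsto_log_atTop.comp tendsto_natCast_atTop_atTop
  filter_upwards [tendsto_natCast_atTop_atTop.eventually (err_small C ε (2 * θ + τ) hε hθτ),
    eventually_ge_atTop 2, hlogt.eventually_ge_atTop (2 * A * Real.log 2 / (2 * A * θ - 1)),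
    hlogt.eventually_gt_atTop (2 * Real.log 2 / θ)] with N herr hN2 hl1 hl2 S w r hr hS hw
  have hN1 : (1:ℝ) < N := by exact_mod_cast (by omega : 1 < N)
  have hN0 : (0:ℝ) < N := by linarith
  set l := Real.log (N:ℝ) with hl
  have hl0 : 0 < l := Real.log_pos hN1
  have hln2 : 0 < Real.log 2 := Real.log_pos (by norm_num)
  set D := ⌊(N:ℝ) ^ θ⌋₊ with hD
  set M := ⌊(N:ℝ) ^ τ⌋₊ with hM
  have hxθ : 1 ≤ (N:ℝ) ^ θ := Real.one_le_rpow hN1.le hθ.le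
  have hxτ : 1 ≤ (N:ℝ) ^ τ := Real.one_le_rpow hN1.le hτ.le
  have hD1 : 1 ≤ D := Nat.le_floor (by simpa using hxθ)
  have hM1 : 1 ≤ M := Nat.le_floor (by simpa using hxτ)
  have hDle : (D:ℝ) ≤ (N:ℝ) ^ θ := Nat.floor_le (by positivity)
  have hMle : (M:ℝ) ≤ (N:ℝ) ^ τ := Nat.floor_le (by positivity)
  have hD1' : (1:ℝ) ≤ D := by exact_mod_cast hD1
  have hM1' : (1:ℝ) ≤ M := by exact_mod_cast hM1
  have hDge : (N:ℝ) ^ θ / 2 ≤ D := by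
    have := Nat.lt_floor_add_one ((N:ℝ) ^ θ)
    rw [← hD] at this
    linarith
  have hlogD : θ * l - Real.log 2 ≤ Real.log D := by
    have := Real.log_le_log (by positivity) hDge
    rwa [Real.log_div (by positivity) (by norm_num), Real.log_rpow hN0] at this
  have hlogD2 : Real.log D ≤ l := by
    have := Real.log_le_log (by linarith) hDle
    rw [Real.log_rpow hN0] at this
    nlinarith
  have hlogM2 : Real.log M ≤ l := by
    have := Real.log_le_log (by linarith) hMle
    rw [Real.log_rpow hN0] at this
    nlinarith
  have hpos : 0 < θ * l - Real.log 2 := by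
    rw [div_lt_iff₀ hθ] at hl2; linarith
  have hG := Sel.G_ge D
  have hGpos := Sel.G_pos hD1
  have hmain : (N:ℝ) / (4 * Sel.G D) ≤ A * N / l := by
    rw [div_le_div_iff₀ (by positivity) hl0]
    have h1 : l ≤ A * (4 * Sel.G D) := by
      have h2 : l ≤ A * (2 * (θ * l - Real.log 2)) := by
        rw [div_le_iff₀ (by linarith)] at hl1
        nlinarith
      nlinarith
    nlinarith
  have hLam : Lam D ^ 2 ≤ (N:ℝ) ^ (2 * θ) * (1 + l) ^ 2 := by
    have : Lam D ≤ (N:ℝ) ^ θ * (1 + l) := by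
      unfold Lam
      have : 0 ≤ Real.log D := Real.log_natCast_nonneg _
      gcongr
    have h0 : 0 ≤ Lam D := by
      unfold Lam
      have : 0 ≤ Real.log D := Real.log_natCast_nonneg _
      positivity
    calc Lam D ^ 2 ≤ ((N:ℝ) ^ θ * (1 + l)) ^ 2 := by gcongr
      _ = _ := by rw [mul_pow, ← Real.rpow_natCast ((N:ℝ) ^ θ), ← Real.rpow_mul hN0.le]; congr 2; push_cast; ring
  have hSM : ∀ s ∈ S, 1 ≤ s ∧ s ≤ M := fun s hs =>
    ⟨Nat.pos_of_ne_zero (hS s hs).1.ne_zero, Nat.le_floor (hS s hs).2⟩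
  have hoff := off_bound S w M C hC hSM hw
  have hwsq : ∑ s ∈ S, w s ^ 2 ≤ C ^ 2 * (1 + l) := by
    calc ∑ s ∈ S, w s ^ 2 ≤ ∑ s ∈ S, C ^ 2 * (1 / (s:ℝ)) := by
          refine sum_le_sum fun s hs => ?_
          have h1 : (1:ℝ) ≤ s := by exact_mod_cast (hSM s hs).1
          rw [← sq_abs]
          calc |w s| ^ 2 ≤ (C / s) ^ 2 := by have := hw s hs; gcongr
            _ = C ^ 2 * (1 / (s:ℝ) * (1 / s)) := by field_simp
            _ ≤ C ^ 2 * (1 / (s:ℝ) * 1) := by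
                gcongr
                rw [div_le_one (by linarith)]; exact h1
            _ = _ := by ring
      _ ≤ ∑ s ∈ Icc 1 M, C ^ 2 * (1 / (s:ℝ)) := by
          refine sum_le_sum_of_subset_of_nonneg ?_ (fun _ _ _ => by positivity)
          intro s hs; rw [mem_Icc]; exact hSM s hs
      _ ≤ _ := by
          rw [← mul_sum]
          have := sum_inv_le M
          gcongr
          linarith
  have hms := ms S (fun s hs => (hS s hs).1) w N D hD1 r hr
  calc _ ≤ ∑ p ∈ (range (N + 1)).filter (fun p => p.Prime ∧ p % 4 = r ∧ D < p),
        (∑ s ∈ S, w s * ((J((s:ℤ) | p) : ℤ) : ℝ)) ^ 2 := by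
        refine sum_le_sum_of_subset_of_nonneg ?_ (fun _ _ _ => by positivity)
        intro p
        simp only [mem_filter]
        rintro ⟨h1, h2, h3, h4⟩
        refine ⟨h1, h2, h3, ?_⟩
        have h5 : (N:ℝ) ^ θ ≤ (N:ℝ) ^ (0.95:ℝ) :=
          Real.rpow_le_rpow_of_exponent_le hN1.le (by linarith)
        have : (D:ℝ) < p := by linarith
        exact_mod_cast this
    _ ≤ _ := hms
    _ ≤ (∑ s ∈ S, w s ^ 2) * (A * N / l) + (Lam D ^ 2 * (C ^ 2 * (1 + l)) +
        Lam D ^ 2 * (18 * C ^ 2 * M * (1 + Real.log M) ^ 5)) := by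
        have h0 : 0 ≤ ∑ s ∈ S, w s ^ 2 := sum_nonneg fun _ _ => sq_nonneg _
        rw [mul_add, add_assoc]
        have a1 := mul_le_mul_of_nonneg_left hmain h0
        have a2 := mul_le_mul_of_nonneg_right hwsq (sq_nonneg (Lam D))
        have a3 := mul_le_mul_of_nonneg_left hoff (sq_nonneg (Lam D))
        linarith
    _ ≤ (∑ s ∈ S, w s ^ 2) * (A * N / l) + ε * N / l := by
        have hlM0 : 0 ≤ Real.log M := Real.log_natCast_nonneg _
        have hin : C ^ 2 * (1 + l) + 18 * C ^ 2 * M * (1 + Real.log M) ^ 5 ≤ 19 * C ^ 2 * (N:ℝ) ^ τ * (1 + l) ^ 5 := by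
          have b1 : C ^ 2 * (1 + l) ≤ C ^ 2 * ((N:ℝ) ^ τ * (1 + l) ^ 5) := by
            have : 1 + l ≤ (1 + l) ^ 5 := le_self_pow₀ (by linarith) (by norm_num)
            have : 1 * (1 + l) ≤ (N:ℝ) ^ τ * (1 + l) ^ 5 := by gcongr
            gcongr
            linarith
          have b2 : 18 * C ^ 2 * M * (1 + Real.log M) ^ 5 ≤ 18 * C ^ 2 * (N:ℝ) ^ τ * (1 + l) ^ 5 := by
            gcongr
          linarith
        have : Lam D ^ 2 * (C ^ 2 * (1 + l)) + Lam D ^ 2 * (18 * C ^ 2 * M * (1 + Real.log M) ^ 5) ≤ ε * N / l := by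
          calc _ = Lam D ^ 2 * (C ^ 2 * (1 + l) + 18 * C ^ 2 * M * (1 + Real.log M) ^ 5) := by ring
            _ ≤ (N:ℝ) ^ (2 * θ) * (1 + l) ^ 2 * (19 * C ^ 2 * (N:ℝ) ^ τ * (1 + l) ^ 5) := by gcongr
            _ = 19 * C ^ 2 * (N:ℝ) ^ (2 * θ + τ) * (1 + l) ^ 7 := by
                rw [Real.rpow_add hN0]; ring
            _ ≤ _ := herr
        linarith
    _ = _ := by ring
end MS

namespace GS
open Complex Filter Topology

lemma sqrt_scale (r : ℝ) (hr : 0 < r) (z : ℂ) (hz : z ≠ 0) :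
    ((r:ℂ) ^ 2 * z) ^ (1/2 : ℂ) = r * z ^ (1/2 : ℂ) := by
  have h1 : ((r:ℂ)^2 * z) ≠ 0 := by
    have : (r:ℂ) ≠ 0 := by exact_mod_cast hr.ne'
    positivity
  rw [cpow_def_of_ne_zero h1, cpow_def_of_ne_zero hz]
  have : (r:ℂ)^2 * z = ((r^2 : ℝ) : ℂ) * z := by push_cast; ring
  rw [this, Complex.log_ofReal_mul (by positivity) hz, Real.log_pow]
  push_cast
  rw [add_mul, Complex.exp_add]
  congr 1
  rw [show (2 * (Real.log r : ℂ)) * (1/2) = ((Real.log r : ℝ) : ℂ) by ring, ← Complex.ofReal_exp, Real.exp_log hr]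

lemma class_id (z : ℂ) (hz : 0 < z.re) (q : ℕ) (hq : 0 < q) (a : ℤ) :
    z ^ (1/2 : ℂ) * ∑' m : ℤ, cexp (-Real.pi * z * (m * q + a) ^ 2) =
    1 / q * ∑' m : ℤ, cexp (-Real.pi * (1 / z) * (m / q) ^ 2 + 2 * Real.pi * I * a * m / q) := by
  have hz0 : z ≠ 0 := by rintro rfl; simp at hz
  have hq0 : (q:ℂ) ≠ 0 := by exact_mod_cast hq.ne'
  have hre : 0 < (((q:ℝ):ℂ) ^ 2 * z).re := by
    rw [← ofReal_pow, re_ofReal_mul]; positivity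
  have h := Complex.tsum_exp_neg_quadratic hre (-z * q * a)
  rw [sqrt_scale q (by exact_mod_cast hq) z hz0] at h
  have hs : z ^ (1/2 : ℂ) ≠ 0 := by
    rw [cpow_def_of_ne_zero hz0]; exact exp_ne_zero _
  have e1 : ∀ m : ℤ, cexp (-Real.pi * z * (m * q + a) ^ 2) = cexp (-Real.pi * z * a ^ 2) *
      cexp (-Real.pi * (((q:ℝ):ℂ) ^ 2 * z) * m ^ 2 + 2 * Real.pi * (-z * q * a) * m) := by
    intro m; rw [← Complex.exp_add]; congr 1; push_cast; ring
  have e2 : ∀ m : ℤ, cexp (-Real.pi / (((q:ℝ):ℂ) ^ 2 * z) * (m + I * (-z * q * a)) ^ 2) =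
      cexp (Real.pi * z * a ^ 2) *
      cexp (-Real.pi * (1 / z) * (m / q) ^ 2 + 2 * Real.pi * I * a * m / q) := by
    intro m; rw [← Complex.exp_add]; congr 1; push_cast; field_simp
    linear_combination (-(z:ℂ) ^ 2 * (q:ℂ) ^ 2 * a ^ 2) * I_sq
  simp_rw [e1, tsum_mul_left, h, e2, tsum_mul_left]
  have e3 : cexp (-Real.pi * z * a ^ 2) * cexp (Real.pi * z * a ^ 2) = 1 := by
    rw [← Complex.exp_add]; simp
  push_cast
  generalize (∑' m : ℤ, cexp (-Real.pi * (1 / z) * (m / q) ^ 2 + 2 * Real.pi * I * a * m / q)) = T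
  generalize cexp (-Real.pi * z * a ^ 2) = E1 at *
  generalize cexp (Real.pi * z * a ^ 2) = E2 at *
  field_simp
  linear_combination T * e3

lemma class_lim {l : Filter ℝ} (z : ℝ → ℂ) (hz : Tendsto (fun t => (1 / z t).re) l atTop)
    (hz2 : ∀ᶠ t in l, 0 < (z t).re)
    (q : ℕ) (hq : 0 < q) (a : ℤ) :
    Tendsto (fun t => (z t) ^ (1/2 : ℂ) * ∑' m : ℤ, cexp (-Real.pi * z t * (m * q + a) ^ 2)) l (𝓝 (1 / q)) := by
  have hq0 : (0:ℝ) < (q:ℝ) := by exact_mod_cast hq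
  have key : Tendsto (fun t => ∑' m : ℤ, cexp (-Real.pi * (1 / z t) * (m / q) ^ 2 + 2 * Real.pi * I * a * m / q)) l
      (𝓝 (∑' m : ℤ, if m = 0 then 1 else 0)) := by
    have hnorm : ∀ t (m : ℤ), ‖cexp (-Real.pi * (1 / z t) * (m / q) ^ 2 + 2 * Real.pi * I * a * m / q)‖
        = Real.exp (-Real.pi * (1 / z t).re * (m / q) ^ 2) := by
      intro t m
      rw [Complex.norm_exp]
      congr 1
      have e1 : (-Real.pi * (1 / z t) * (m / q) ^ 2 + 2 * Real.pi * I * a * m / q : ℂ)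
        = ((-Real.pi * (m / q) ^ 2 : ℝ) : ℂ) * (1 / z t) + ((2 * Real.pi * a * m / q : ℝ) : ℂ) * I := by
        push_cast; ring
      rw [e1, add_re, re_ofReal_mul, re_ofReal_mul]
      simp
      ring
    have hsum : Summable (fun m : ℤ => Real.exp (-Real.pi * m ^ 2)) := by
      have := (hasSum_jacobiTheta₂_term 0 (τ := I) (by simp)).summable.norm
      refine this.congr fun m => ?_
      simp [jacobiTheta₂_term, Complex.norm_exp]
      norm_cast
    refine tendsto_tsum_of_dominated_convergence hsum ?_ ?_
    · intro m
      by_cases hm : m = 0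
      · subst hm; simpa using tendsto_const_nhds
      · simp only [hm, if_false]
        rw [tendsto_zero_iff_norm_tendsto_zero]
        simp_rw [hnorm]
        refine Real.tendsto_exp_atBot.comp ?_
        have hpos : 0 < Real.pi * (m / q:ℝ)^2 := by
          have : (m:ℝ) ≠ 0 := by exact_mod_cast hm
          positivity
        have := (hz.const_mul_atTop hpos)
        refine (tendsto_neg_atTop_atBot.comp this).congr fun t => ?_
        simp; ring
    · filter_upwards [hz.eventually_ge_atTop ((q:ℝ)^2)] with t ht m
      rw [hnorm]
      apply Real.exp_le_exp.2
      have : (m:ℝ)^2 ≤ (1 / z t).re * (m / q:ℝ)^2 := by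
        calc (m:ℝ)^2 = (q:ℝ)^2 * (m / q:ℝ)^2 := by field_simp
          _ ≤ _ := by gcongr
      nlinarith [Real.pi_pos]
  rw [tsum_ite_eq] at key
  have := key.const_mul ((1:ℂ) / q)
  rw [mul_one] at this
  refine this.congr' ?_
  filter_upwards [hz2] with t ht
  rw [class_id (z t) ht q hq a]

lemma gauss_summable (z : ℂ) (hz : 0 < z.re) (c : ℤ → ℂ) (hc : ∀ n, ‖c n‖ ≤ 1) :
    Summable (fun n : ℤ => c n * cexp (-Real.pi * z * n ^ 2)) := by
  have h := (hasSum_jacobiTheta₂_term 0 (τ := I * z) (by simpa using hz)).summable.norm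
  refine Summable.of_norm_bounded h fun n => ?_
  rw [norm_mul]
  have : cexp (-Real.pi * z * n ^ 2) = jacobiTheta₂_term n 0 (I * z) := by
    rw [jacobiTheta₂_term]; congr 1
    linear_combination (-Real.pi * n^2 * z : ℂ) * I_sq
  rw [this]
  have := norm_nonneg (jacobiTheta₂_term n 0 (I * z))
  nlinarith [hc n]

lemma per_lim {l : Filter ℝ} (z : ℝ → ℂ) (hz : Tendsto (fun t => (1 / z t).re) l atTop)
    (hz2 : ∀ᶠ t in l, 0 < (z t).re)
    (q : ℕ) (hq : 0 < q) (c : ℤ → ℂ) (hc : ∀ n, ‖c n‖ ≤ 1) (hper : ∀ m n : ℤ, c (m * q + n) = c n) :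
    Tendsto (fun t => (z t) ^ (1/2 : ℂ) * ∑' n : ℤ, c n * cexp (-Real.pi * z t * n ^ 2)) l
      (𝓝 ((1 / q) * ∑ a ∈ Finset.range q, c a)) := by
  have : NeZero q := ⟨hq.ne'⟩
  have h1 : Tendsto (fun t => ∑ a : Fin q, c a * ((z t) ^ (1/2 : ℂ) * ∑' m : ℤ, cexp (-Real.pi * z t * (m * q + (a:ℤ)) ^ 2))) l
      (𝓝 (∑ a : Fin q, c a * (1 / q))) := by
    refine tendsto_finsetSum _ fun a _ => ?_
    have := (class_lim z hz hz2 q hq (a:ℤ)).const_mul (c a)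
    exact_mod_cast this
  have e : ∑ a : Fin q, c a * ((1:ℂ) / q) = (1 / q) * ∑ a ∈ Finset.range q, c a := by
    rw [← Finset.sum_mul, mul_comm, Finset.sum_range (fun a : ℕ => c a)]
  rw [e] at h1
  refine h1.congr' ?_
  filter_upwards [hz2] with t ht
  have hs := gauss_summable (z t) ht c hc
  have hs2 := (Int.divModEquiv q).symm.summable_iff.2 hs
  simp only [Function.comp_def] at hs2
  rw [← (Int.divModEquiv q).symm.tsum_eq, hs2.tsum_prod' (fun m => (hasSum_fintype _).summable)]
  simp only [tsum_fintype]
  rw [Summable.tsum_finsetSum]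
  · rw [Finset.mul_sum]
    refine Finset.sum_congr rfl fun a _ => ?_
    have : ∀ m : ℤ, c ((Int.divModEquiv q).symm (m, a)) * cexp (-Real.pi * z t * (((Int.divModEquiv q).symm (m, a) : ℤ):ℂ) ^ 2)
      = c a * cexp (-Real.pi * z t * (m * q + (a:ℤ)) ^ 2) := by
      intro m
      simp only [Int.divModEquiv_symm_apply]
      have := hper m a
      push_cast at this ⊢
      rw [this]
    simp_rw [this, tsum_mul_left]
    push_cast; ring
  · intro a _
    have := hs2.comp_injective (i := fun m : ℤ => (m, a)) (fun x y h => by simpa using h)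
    exact this


lemma I_half_sq (p : ℕ) (n : ℤ) : cexp (-Real.pi * (I * p / 2) * n ^ 2) = if Even n then 1 else (-I) ^ p := by
  split_ifs with h
  · obtain ⟨k, rfl⟩ := h
    rw [Complex.exp_eq_one_iff]
    exact ⟨-(p * k ^ 2), by push_cast; ring⟩
  · obtain ⟨k, rfl⟩ := Int.not_even_iff_odd.1 h
    have : (-Real.pi * (I * p / 2) * ((2 * k + 1 : ℤ) : ℂ) ^ 2 : ℂ) =
      ((-(p * (k ^ 2 + k)) : ℤ) : ℂ) * (2 * Real.pi * I) + p * (-(Real.pi / 2) * I) := by push_cast; ring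
    rw [this, Complex.exp_add, Complex.exp_int_mul_two_pi_mul_I, one_mul, Complex.exp_nat_mul]
    congr 1
    rw [Complex.exp_mul_I]
    rw [Complex.cos_neg, Complex.sin_neg, Complex.cos_pi_div_two, Complex.sin_pi_div_two]; simp

lemma quad_gauss (p : ℕ) (hp : 0 < p) :
    ∑ n ∈ Finset.range p, cexp (2 * Real.pi * I * n ^ 2 / p) = √p * ((1 + I) * (1 + (-I) ^ p) / 2) := by
  have hp0 : (0:ℝ) < p := by exact_mod_cast hp
  have hpc : (p:ℂ) ≠ 0 := by exact_mod_cast hp.ne'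
  set l : Filter ℝ := 𝓝[>] 0 with hl
  have hpos : ∀ᶠ t in l, (0:ℝ) < t := eventually_mem_nhdsWithin
  set w : ℝ → ℂ := fun t => t - 2 * I / p with hw
  set v : ℝ → ℂ := fun t => p ^ 2 / (4 + 2 * I * p * t) with hv
  set z : ℝ → ℂ := fun t => t * v t with hz
  have hden : ∀ t : ℝ, (4 + 2 * I * p * t : ℂ) ≠ 0 := by
    intro t h
    have := congrArg Complex.re h
    simp at this
  have hwre : ∀ t, (w t).re = t := by
    intro t
    have : w t = (t:ℂ) + ((-2 / p : ℝ) : ℂ) * I := by simp only [hw]; push_cast; ring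
    rw [this]; simp
  have hwne : ∀ t, 0 < t → w t ≠ 0 := by
    intro t ht h
    have := hwre t
    rw [h] at this; simp at this; linarith
  have hinv : ∀ t, 0 < t → 1 / w t = I * p / 2 + z t := by
    intro t ht
    have h1 := hwne t ht
    have h2 := hden t
    rw [div_eq_iff h1]
    simp only [hz, hv, hw]
    obtain ⟨D, hD⟩ : ∃ D : ℂ, D = 4 + 2 * I * p * t := ⟨_, rfl⟩
    rw [← hD] at h2 ⊢
    field_simp
    rw [hD]
    linear_combination (-2 * p ^ 2 * t ^ 2 + 4 * p * t * I + 8 : ℂ) * I_sq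
  have hzinv : ∀ t, 0 < t → (1 / z t).re = 4 / (p ^ 2 * t) := by
    intro t ht
    have htc : (t:ℂ) ≠ 0 := by exact_mod_cast ht.ne'
    have : 1 / z t = ((4 / (p ^ 2 * t) : ℝ) : ℂ) + ((2 / p : ℝ) : ℂ) * I := by
      simp only [hz, hv]
      have h2 := hden t
      push_cast
      field_simp
    rw [this, add_re, ofReal_re, re_ofReal_mul, I_re, mul_zero, add_zero]
  -- first limit
  have L1 : Tendsto (fun t : ℝ => ((t:ℂ)) ^ (1/2 : ℂ) * ∑' n : ℤ, cexp (-Real.pi * w t * n ^ 2)) l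
      (𝓝 ((1 / p) * ∑ n ∈ Finset.range p, cexp (2 * Real.pi * I * n ^ 2 / p))) := by
    have := per_lim (l := l) (fun t => (t:ℂ)) (by
        have : Tendsto (fun t : ℝ => t⁻¹) l atTop := tendsto_inv_nhdsGT_zero
        refine this.congr fun t => ?_
        rw [one_div, ← ofReal_inv, ofReal_re]) (by simpa using hpos) p hp
        (fun n : ℤ => cexp (2 * Real.pi * I * n ^ 2 / p)) (by
          intro n
          have : (2 * Real.pi * I * n ^ 2 / p : ℂ) = ((2 * Real.pi * n ^ 2 / p : ℝ) : ℂ) * I := by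
            push_cast; ring
          rw [this, Complex.norm_exp_ofReal_mul_I]) (by
          intro m n
          rw [Complex.exp_eq_exp_iff_exists_int]
          exact ⟨m ^ 2 * p + 2 * m * n, by push_cast; field_simp; ring⟩)
    simp only [Int.cast_natCast] at this
    refine this.congr fun t => ?_
    congr 1
    refine tsum_congr fun n => ?_
    rw [← Complex.exp_add]
    congr 1
    simp only [hw]; ring
  -- second limit
  have L2 : Tendsto (fun t : ℝ => (z t) ^ (1/2 : ℂ) * ∑' n : ℤ, cexp (-Real.pi * (1 / w t) * n ^ 2)) l
      (𝓝 ((1 / 2) * (1 + (-I) ^ p))) := by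
    have := per_lim (l := l) z (by
        have : Tendsto (fun t : ℝ => 4 / (p:ℝ) ^ 2 * t⁻¹) l atTop :=
          tendsto_inv_nhdsGT_zero.const_mul_atTop (by positivity)
        refine this.congr' ?_
        filter_upwards [hpos] with t ht
        rw [hzinv t ht]; field_simp) (by
        filter_upwards [hpos] with t ht
        have h1 := hzinv t ht
        have h2 : 0 < (1 / z t).re := by rw [h1]; positivity
        rw [one_div, Complex.inv_re] at h2
        by_contra h3
        have := div_nonpos_of_nonpos_of_nonneg (not_lt.1 h3) (Complex.normSq_nonneg (z t))
        linarith) 2 (by norm_num)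
        (fun n : ℤ => cexp (-Real.pi * (I * p / 2) * n ^ 2)) (by
          intro n
          rw [I_half_sq]
          split_ifs <;> simp) (by
          intro m n
          rw [I_half_sq, I_half_sq]
          congr 1
          simp [Int.even_add])
    have e : ((1:ℂ) / (2:ℕ)) * ∑ a ∈ Finset.range 2, cexp (-Real.pi * (I * p / 2) * ((a:ℤ):ℂ) ^ 2)
        = ((1 / 2) * (1 + (-I) ^ p)) := by
      simp_rw [I_half_sq]
      simp [Finset.sum_range_succ]
    rw [e] at this
    refine this.congr' ?_
    filter_upwards [hpos] with t ht
    congr 1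
    refine tsum_congr fun n => ?_
    rw [← Complex.exp_add, hinv t ht]
    congr 1
    ring
  have hfe : ∀ t, 0 < t → ∑' n : ℤ, cexp (-Real.pi * w t * n ^ 2) =
      1 / (w t) ^ (1/2 : ℂ) * ∑' n : ℤ, cexp (-Real.pi * (1 / w t) * n ^ 2) := by
    intro t ht
    have := Complex.tsum_exp_neg_quadratic (a := w t) (by rw [hwre]; exact ht) 0
    simp only [mul_zero, zero_mul, add_zero] at this
    rw [this]
    congr 1
    refine tsum_congr fun n => ?_
    congr 1; ring
  have hzs : ∀ t, 0 < t → (z t) ^ (1/2 : ℂ) = (t:ℂ) ^ (1/2 : ℂ) * (v t) ^ (1/2 : ℂ) := by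
    intro t ht
    have hv0 : v t ≠ 0 := by simp only [hv]; exact div_ne_zero (pow_ne_zero _ hpc) (hden t)
    have hz0 : z t ≠ 0 := mul_ne_zero (by exact_mod_cast ht.ne') hv0
    rw [cpow_def_of_ne_zero hz0, cpow_def_of_ne_zero hv0, cpow_def_of_ne_zero (by exact_mod_cast ht.ne'),
      ← Complex.exp_add]
    congr 1
    simp only [hz]
    rw [Complex.log_ofReal_mul ht hv0, Complex.ofReal_log ht.le]; ring
  have hwlim : Tendsto (fun t => (w t) ^ (1/2 : ℂ)) l (𝓝 ((-2 * I / p) ^ (1/2 : ℂ))) := by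
    have hc : ContinuousAt (fun t : ℝ => (w t) ^ (1/2 : ℂ)) 0 := by
      refine ContinuousAt.cpow (by fun_prop) continuousAt_const ?_
      right
      have : w 0 = ((-2 / p : ℝ) : ℂ) * I := by simp only [hw]; push_cast; ring
      rw [this]; simp [hp.ne']
    have := hc.tendsto.mono_left (nhdsWithin_le_nhds (s := Set.Ioi 0))
    refine this.congr' (Eventually.of_forall fun t => rfl) |>.trans ?_
    simp only [hw]
    simp [neg_div]
  have hvlim : Tendsto (fun t => (v t) ^ (1/2 : ℂ)) l (𝓝 ((p:ℂ) / 2)) := by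
    have hv0 : v 0 = ((p:ℝ):ℂ) ^ 2 * (((1/2:ℝ):ℂ)^2 * 1) := by simp only [hv]; push_cast; simp; ring
    have hc : ContinuousAt (fun t : ℝ => (v t) ^ (1/2 : ℂ)) 0 := by
      refine ContinuousAt.cpow ?_ continuousAt_const ?_
      · refine ContinuousAt.div continuousAt_const (by fun_prop) (hden 0)
      · left
        rw [hv0, show ((p:ℝ):ℂ) ^ 2 * (((1/2:ℝ):ℂ)^2 * 1) = ((p^2/4 : ℝ) : ℂ) by push_cast; ring, ofReal_re]
        positivity
    have := hc.tendsto.mono_left (nhdsWithin_le_nhds (s := Set.Ioi 0))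
    rw [hv0, sqrt_scale p hp0 _ (by norm_num), sqrt_scale _ (by norm_num) _ one_ne_zero, one_cpow] at this
    convert this using 2
    push_cast; ring
  have hsq : ((-2 * I / p) ^ (1/2 : ℂ)) = (1 - I) / √p := by
    have hs : ((√p:ℝ):ℂ) ≠ 0 := by exact_mod_cast (Real.sqrt_pos.2 hp0).ne'
    have e : (-2 * I / p : ℂ) = ((1 - I) / √p) ^ 2 := by
      rw [div_pow, ← ofReal_pow, Real.sq_sqrt hp0.le]
      push_cast
      congr 1
      ring_nf; rw [I_sq]; ring
    rw [e]
    have := Complex.sq_cpow_two_inv (x := (1 - I) / ((√p:ℝ):ℂ)) (by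
      rw [show (1 - I) / ((√p:ℝ):ℂ) = (((√p)⁻¹ : ℝ) : ℂ) * (1 - I) by push_cast; field_simp, re_ofReal_mul]
      simp [hp])
    rw [one_div]; exact this
  have hsne : ((-2 * I / p : ℂ) ^ (1/2 : ℂ)) ≠ 0 := by
    rw [cpow_def_of_ne_zero]
    · exact exp_ne_zero _
    · simp [hpc]
  have L3 : Tendsto (fun t : ℝ => (w t) ^ (1/2 : ℂ) * (v t) ^ (1/2 : ℂ) *
      (((t:ℂ)) ^ (1/2 : ℂ) * ∑' n : ℤ, cexp (-Real.pi * w t * n ^ 2))) l (𝓝 ((1 / 2) * (1 + (-I) ^ p))) := by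
    refine L2.congr' ?_
    filter_upwards [hpos] with t ht
    have : (w t) ^ (1/2 : ℂ) ≠ 0 := by
      rw [cpow_def_of_ne_zero (hwne t ht)]
      exact exp_ne_zero _
    rw [hfe t ht, hzs t ht]
    field_simp
  have := tendsto_nhds_unique L3 ((hwlim.mul hvlim).mul L1)
  rw [hsq] at this
  have hs : ((√p:ℝ):ℂ) ≠ 0 := by exact_mod_cast (Real.sqrt_pos.2 hp0).ne'
  have hI : (1 - I) * (1 + I) = 2 := by ring_nf; rw [I_sq]; ring
  generalize ∑ n ∈ Finset.range p, cexp (2 * Real.pi * I * n ^ 2 / p) = S at *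
  generalize (-I) ^ p = u at *
  field_simp at this
  linear_combination (-(1 + I) / 2) * this - (S / 2) * hI


/-- The sign factor of the Gauss sum. -/
noncomputable def sg (p : ℕ) : ℂ := (1 + I) * (1 + (-I) ^ p) / 2

lemma sg_one (p : ℕ) (h : p % 4 = 1) : sg p = 1 := by
  unfold sg
  rw [← Nat.div_add_mod p 4, h, pow_add, pow_mul]
  have : (-I) ^ 4 = 1 := by rw [neg_pow, I_pow_four]; norm_num
  rw [this, one_pow]
  ring_nf; rw [I_sq]; ring

lemma sg_three (p : ℕ) (h : p % 4 = 3) : sg p = I := by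
  unfold sg
  rw [← Nat.div_add_mod p 4, h, pow_add, pow_mul]
  have : (-I) ^ 4 = 1 := by rw [neg_pow, I_pow_four]; norm_num
  rw [this, one_pow, neg_pow, I_pow_three]
  ring_nf; rw [I_sq]; ring

section
variable (p : ℕ) [Fact p.Prime]

/-- The quadratic character with complex values. -/
noncomputable def chi : MulChar (ZMod p) ℂ := (quadraticChar (ZMod p)).ringHomComp (Int.castRingHom ℂ)

lemma chi_apply (a : ZMod p) : chi p a = ((quadraticChar (ZMod p) a : ℤ) : ℂ) := rfl

lemma gs_one (hp2 : p ≠ 2) : gaussSum (chi p) ZMod.stdAddChar = √p * sg p := by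
  have hp : 0 < p := (Fact.out : p.Prime).pos
  have hchar : ringChar (ZMod p) ≠ 2 := by rw [ZMod.ringChar_zmod_n]; exact hp2
  rw [sg, ← quad_gauss p hp]
  have h1 : ∑ n ∈ Finset.range p, cexp (2 * Real.pi * I * n ^ 2 / p)
      = ∑ x : ZMod p, ZMod.stdAddChar (x ^ 2) := by
    rw [PV.sum_range_zmod (fun x : ZMod p => (ZMod.stdAddChar (x ^ 2) : ℂ))]
    refine Finset.sum_congr rfl fun n _ => ?_
    have := ZMod.stdAddChar_coe (N := p) ((n:ℤ) ^ 2)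
    push_cast at this
    rw [this]
  rw [h1]
  have h2 : ∑ x : ZMod p, (ZMod.stdAddChar (x ^ 2) : ℂ) =
      ∑ a : ZMod p, ((quadraticChar (ZMod p) a : ℤ) + 1 : ℂ) * ZMod.stdAddChar a := by
    rw [← Finset.sum_fiberwise (s := Finset.univ) (g := fun x : ZMod p => x ^ 2)]
    refine Finset.sum_congr rfl fun a _ => ?_
    have h3 := quadraticChar_card_sqrts hchar a
    have h4 : ((Finset.univ.filter fun x : ZMod p => x ^ 2 = a).card : ℤ) = quadraticChar (ZMod p) a + 1 := by
      rw [← h3]; congr 2; ext x; simp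
    have h5 : ((Finset.univ.filter fun x : ZMod p => x ^ 2 = a).card : ℂ) = (quadraticChar (ZMod p) a : ℤ) + 1 := by
      exact_mod_cast h4
    rw [← h5, Finset.sum_congr rfl (g := fun _ => (ZMod.stdAddChar a : ℂ))]
    · rw [Finset.sum_const, nsmul_eq_mul]
    · intro x hx; rw [(Finset.mem_filter.1 hx).2]
  rw [h2]
  simp_rw [add_mul, one_mul]
  rw [Finset.sum_add_distrib, AddChar.sum_eq_zero_of_ne_one, add_zero]
  · rfl
  · intro h
    have := ZMod.isPrimitive_stdAddChar p
    have h6 := this (a := 1) one_ne_zero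
    rw [h] at h6
    simp at h6

lemma gs_shift (hp2 : p ≠ 2) (k : ZMod p) :
    ∑ a : ZMod p, chi p a * ZMod.stdAddChar (k * a) = chi p k * (√p * sg p) := by
  have hchar : ringChar (ZMod p) ≠ 2 := by rw [ZMod.ringChar_zmod_n]; exact hp2
  by_cases hk : k = 0
  · subst hk
    simp only [zero_mul, AddChar.map_zero_eq_one, mul_one, chi_apply]
    rw [← Int.cast_sum, quadraticChar_sum_zero hchar]
    simp
  · have h := gaussSum_mulShift (chi p) ZMod.stdAddChar (Units.mk0 k hk)
    rw [gs_one p hp2] at h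
    rw [← h, Units.val_mk0]
    have hsq : chi p k * chi p k = 1 := by
      rw [chi_apply]
      have := quadraticChar_sq_one hk
      rw [← sq]; exact_mod_cast this
    rw [← mul_assoc, hsq, one_mul]
    rfl

lemma gs_range (hp2 : p ≠ 2) (k : ℕ) :
    ∑ n ∈ Finset.range p, ((legendreSym p n : ℤ) : ℂ) * cexp (((2 * Real.pi * k * (n / p) : ℝ) : ℂ) * I) =
      ((legendreSym p k : ℤ) : ℂ) * (√p * sg p) := by
  have h := gs_shift p hp2 k
  rw [PV.sum_range_zmod (fun a : ZMod p => chi p a * (ZMod.stdAddChar ((k : ZMod p) * a) : ℂ))] at h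
  have e : ∀ n : ℕ, chi p (n : ZMod p) = ((legendreSym p n : ℤ) : ℂ) := by
    intro n; rw [chi_apply, legendreSym]; simp
  simp_rw [e] at h
  rw [← h]
  refine Finset.sum_congr rfl fun n _ => ?_
  congr 1
  have := ZMod.stdAddChar_coe (N := p) ((k:ℤ) * n)
  push_cast at this
  rw [this]
  congr 1
  push_cast; ring

lemma cos_sum (hp2 : p ≠ 2) (k : ℕ) :
    ∑ n ∈ Finset.range p, (legendreSym p n : ℝ) * Real.cos (2 * Real.pi * k * (n / p)) =
      (legendreSym p k : ℝ) * √p * (sg p).re := by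
  have h := congrArg Complex.re (gs_range p hp2 k)
  rw [Complex.re_sum] at h
  convert h using 1
  · refine Finset.sum_congr rfl fun n _ => ?_
    rw [← ofReal_intCast, re_ofReal_mul, Complex.exp_ofReal_mul_I_re]
  · rw [← ofReal_intCast, re_ofReal_mul, re_ofReal_mul, mul_assoc]

lemma sin_sum (hp2 : p ≠ 2) (k : ℕ) :
    ∑ n ∈ Finset.range p, (legendreSym p n : ℝ) * Real.sin (2 * Real.pi * k * (n / p)) =
      (legendreSym p k : ℝ) * √p * (sg p).im := by
  have h := congrArg Complex.im (gs_range p hp2 k)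
  rw [Complex.im_sum] at h
  convert h using 1
  · refine Finset.sum_congr rfl fun n _ => ?_
    rw [← ofReal_intCast, im_ofReal_mul, Complex.exp_ofReal_mul_I_im]
  · rw [← ofReal_intCast, im_ofReal_mul, im_ofReal_mul, mul_assoc]

end

end GS

namespace SE
open Finset

/-- `cos` or `sin` kernel. -/
noncomputable def cc (u v : ℝ) (k : ℕ) (β : ℝ) : ℝ :=
  u * Real.cos (2 * Real.pi * k * β) + v * Real.sin (2 * Real.pi * k * β)

/-- Smoothed Fourier coefficient. -/
noncomputable def ak (u v α h : ℝ) (k : ℕ) : ℝ :=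
  -(1 / (2 * h * Real.pi ^ 2)) * (1 / (k:ℝ) ^ 2 *
    (cc u v k (α + h) - cc u v k α - cc u v k h + cc u v k 0))

lemma hasSum_plus (y : ℝ) (hy : |y| ≤ 1) :
    HasSum (fun n : ℕ => 1 / (n:ℝ) ^ 2 * Real.cos (2 * Real.pi * n * y))
      (Real.pi ^ 2 * (y ^ 2 - |y| + 6⁻¹)) := by
  have h := hasSum_one_div_nat_pow_mul_cos (k := 1) one_ne_zero (x := |y|) ⟨abs_nonneg y, hy⟩
  have e := bernoulliFun_two |y|
  rw [bernoulliFun] at e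
  rw [mul_one, e, sq_abs] at h
  have e2 : ∀ n : ℕ, Real.cos (2 * Real.pi * n * |y|) = Real.cos (2 * Real.pi * n * y) := by
    intro n
    rcases abs_choice y with h | h
    · rw [h]
    · rw [h, mul_neg, Real.cos_neg]
  simp_rw [e2] at h
  convert h using 1
  have : ((Nat.factorial 2 : ℕ) : ℝ) = 2 := by norm_num [Nat.factorial]
  rw [this]
  ring

lemma max_eq (y : ℝ) : max (-y) 0 = (|y| - y) / 2 := by
  rcases le_total 0 y with h | h
  · rw [abs_of_nonneg h, max_eq_right (by linarith)]; ring
  · rw [abs_of_nonpos h, max_eq_left (by linarith)]; ring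

section
variable (p : ℕ) [Fact p.Prime]

/-- The smoothed sum. -/
noncomputable def Phi (β : ℝ) : ℝ :=
  ∑ n ∈ range p, (legendreSym p n : ℝ) * max (β - n / p) 0

lemma chi_sum_zero (hp2 : p ≠ 2) : ∑ n ∈ range p, (legendreSym p n : ℝ) = 0 := by
  have h := GS.cos_sum p hp2 0
  simp at h
  exact_mod_cast h

lemma Phi_hasSum (hp2 : p ≠ 2) (β : ℝ) (h0 : 0 ≤ β) (h1 : β ≤ 1) :
    HasSum (fun k : ℕ => 1 / (k:ℝ) ^ 2 * ((legendreSym p k : ℝ) * √p * cc (GS.sg p).re (GS.sg p).im k β))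
      (Real.pi ^ 2 * (∑ n ∈ range p, (legendreSym p n : ℝ) * (((n:ℝ) / p) ^ 2 - n / p)
        - 2 * β * ∑ n ∈ range p, (legendreSym p n : ℝ) * (n / p) - 2 * Phi p β)) := by
  have hp0 : (0:ℝ) < p := by exact_mod_cast (Fact.out : p.Prime).pos
  have hn : ∀ n ∈ range p, HasSum (fun k : ℕ => (legendreSym p n : ℝ) *
      (1 / (k:ℝ) ^ 2 * Real.cos (2 * Real.pi * k * ((n:ℝ) / p - β))))
      ((legendreSym p n : ℝ) * (Real.pi ^ 2 * (((n:ℝ) / p - β) ^ 2 - |(n:ℝ) / p - β| + 6⁻¹))) := by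
    intro n hn
    refine (hasSum_plus _ ?_).mul_left _
    have : (n:ℝ) < p := by exact_mod_cast mem_range.1 hn
    have h2 : (n:ℝ) / p ≤ 1 := by rw [div_le_one hp0]; exact this.le
    have h3 : 0 ≤ (n:ℝ) / p := by positivity
    rw [abs_le]; constructor <;> linarith
  have h := hasSum_sum hn
  convert h using 1
  · funext k
    have hc := GS.cos_sum p hp2 k
    have hs := GS.sin_sum p hp2 k
    have : ∀ n : ℕ, (legendreSym p n : ℝ) *
      (1 / (k:ℝ) ^ 2 * Real.cos (2 * Real.pi * k * ((n:ℝ) / p - β))) =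
      1 / (k:ℝ) ^ 2 * (Real.cos (2 * Real.pi * k * β) * ((legendreSym p n : ℝ) * Real.cos (2 * Real.pi * k * (n / p))) +
        Real.sin (2 * Real.pi * k * β) * ((legendreSym p n : ℝ) * Real.sin (2 * Real.pi * k * (n / p)))) := by
      intro n
      rw [mul_sub, Real.cos_sub]; ring
    simp_rw [this]
    rw [← mul_sum, sum_add_distrib, ← mul_sum, ← mul_sum, hc, hs, cc]
    ring
  · have hz := chi_sum_zero p hp2
    have : ∀ n : ℕ, (legendreSym p n : ℝ) * (Real.pi ^ 2 * (((n:ℝ) / p - β) ^ 2 - |(n:ℝ) / p - β| + 6⁻¹))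
       = Real.pi ^ 2 * ((legendreSym p n : ℝ) * (((n:ℝ) / p) ^ 2 - n / p)
        - 2 * β * ((legendreSym p n : ℝ) * (n / p)) - 2 * ((legendreSym p n : ℝ) * max (β - n / p) 0)
        + (β ^ 2 + β + 6⁻¹) * (legendreSym p n : ℝ)) := by
      intro n
      have := max_eq ((n:ℝ) / p - β)
      rw [neg_sub] at this
      rw [this]; ring
    simp_rw [this]
    rw [← mul_sum, sum_add_distrib, sum_sub_distrib, sum_sub_distrib, ← mul_sum, ← mul_sum, ← mul_sum, hz, Phi]
    ring

lemma Phi_comb (hp2 : p ≠ 2) (α h : ℝ) (h0 : 0 ≤ α) (hh : 0 < h) (h1 : α + h ≤ 1) :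
    HasSum (fun k : ℕ => (legendreSym p k : ℝ) * ak (GS.sg p).re (GS.sg p).im α h k * √p)
      ((Phi p (α + h) - Phi p α - Phi p h + Phi p 0) / h) := by
  have A := Phi_hasSum p hp2 (α + h) (by linarith) h1
  have B := Phi_hasSum p hp2 α h0 (by linarith)
  have C := Phi_hasSum p hp2 h hh.le (by linarith)
  have D := Phi_hasSum p hp2 0 le_rfl zero_le_one
  have E := (((A.sub B).sub C).add D).mul_left (-(1 / (2 * h * Real.pi ^ 2)))
  have hv : -(1 / (2 * h * Real.pi ^ 2)) * (Real.pi ^ 2 * (∑ n ∈ range p, (legendreSym p n : ℝ) * (((n:ℝ) / p) ^ 2 - n / p)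
        - 2 * (α + h) * ∑ n ∈ range p, (legendreSym p n : ℝ) * (n / p) - 2 * Phi p (α + h))
      - Real.pi ^ 2 * (∑ n ∈ range p, (legendreSym p n : ℝ) * (((n:ℝ) / p) ^ 2 - n / p)
        - 2 * α * ∑ n ∈ range p, (legendreSym p n : ℝ) * (n / p) - 2 * Phi p α)
      - Real.pi ^ 2 * (∑ n ∈ range p, (legendreSym p n : ℝ) * (((n:ℝ) / p) ^ 2 - n / p)
        - 2 * h * ∑ n ∈ range p, (legendreSym p n : ℝ) * (n / p) - 2 * Phi p h)
      + Real.pi ^ 2 * (∑ n ∈ range p, (legendreSym p n : ℝ) * (((n:ℝ) / p) ^ 2 - n / p)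
        - 2 * 0 * ∑ n ∈ range p, (legendreSym p n : ℝ) * (n / p) - 2 * Phi p 0)) =
      (Phi p (α + h) - Phi p α - Phi p h + Phi p 0) / h := by
    have := Real.pi_pos
    field_simp
    ring
  rw [hv] at E
  have hf : (fun k : ℕ => (legendreSym p k : ℝ) * ak (GS.sg p).re (GS.sg p).im α h k * √p) = fun k : ℕ =>
      -(1 / (2 * h * Real.pi ^ 2)) *
        (1 / (k:ℝ) ^ 2 * ((legendreSym p k : ℝ) * √p * cc (GS.sg p).re (GS.sg p).im k (α + h)) -
              1 / (k:ℝ) ^ 2 * ((legendreSym p k : ℝ) * √p * cc (GS.sg p).re (GS.sg p).im k α) -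
            1 / (k:ℝ) ^ 2 * ((legendreSym p k : ℝ) * √p * cc (GS.sg p).re (GS.sg p).im k h) +
          1 / (k:ℝ) ^ 2 * ((legendreSym p k : ℝ) * √p * cc (GS.sg p).re (GS.sg p).im k 0)) := by
    funext k; simp only [ak]; ring
  rw [hf]
  exact E

lemma chi_abs_le (n : ℤ) : |(legendreSym p n : ℝ)| ≤ 1 := by
  by_cases h : ((n:ℤ) : ZMod p) = 0
  · rw [(legendreSym.eq_zero_iff p n).2 h]; simp
  · rcases legendreSym.eq_one_or_neg_one p h with h | h <;> rw [h] <;> simp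

lemma Phi_diff (β h : ℝ) (h0 : 0 ≤ β) (hh : 0 < h) (h1 : β + h < 1) :
    |Phi p (β + h) - Phi p β - h * ∑ n ∈ Icc 1 ⌊β * p⌋₊, (legendreSym p n : ℝ)| ≤ h * (h * p + 1) := by
  have hp0 : (0:ℝ) < p := by exact_mod_cast (Fact.out : p.Prime).pos
  set A := ⌊β * p⌋₊ with hA
  set B := ⌊(β + h) * p⌋₊ with hB
  have hAB : A ≤ B := Nat.floor_le_floor (by nlinarith)
  have hBp : B < p := by
    rw [hB, Nat.floor_lt (by positivity)]
    nlinarith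
  have e1 : ∑ n ∈ Icc 1 A, (legendreSym p n : ℝ) = ∑ n ∈ range p, if n ≤ A then (legendreSym p n : ℝ) else 0 := by
    rw [← sum_filter]
    apply sum_subset_zero_on_sdiff
    · intro n hn
      rw [mem_Icc] at hn
      rw [mem_filter, mem_range]; omega
    · intro n hn
      rw [mem_sdiff, mem_filter, mem_range, mem_Icc] at hn
      have : n = 0 := by omega
      subst this; simp
    · intro n _; rfl
  have e2 : Phi p (β + h) - Phi p β - h * ∑ n ∈ Icc 1 A, (legendreSym p n : ℝ) =
      ∑ n ∈ range p, (legendreSym p n : ℝ) * (max (β + h - n / p) 0 - max (β - n / p) 0 - if n ≤ A then h else 0) := by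
    rw [e1, Phi, Phi, mul_sum, ← sum_sub_distrib, ← sum_sub_distrib]
    refine sum_congr rfl fun n _ => ?_
    split_ifs <;> ring
  have e3 : ∀ n ∈ range p, |(legendreSym p n : ℝ) * (max (β + h - n / p) 0 - max (β - n / p) 0 - if n ≤ A then h else 0)|
      ≤ if n ∈ Ioc A B then h else 0 := by
    intro n _
    rw [abs_mul]
    have hx := chi_abs_le p n
    have key : |(max (β + h - n / p) 0 - max (β - n / p) 0 - if n ≤ A then h else 0)| ≤ if n ∈ Ioc A B then h else 0 := by
      by_cases hn : n ≤ A
      · have h2 : (n:ℝ) ≤ β * p := by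
          have := Nat.floor_le (show 0 ≤ β * p by positivity)
          have h3 : (n:ℝ) ≤ A := by exact_mod_cast hn
          linarith
        have h4 : (n:ℝ) / p ≤ β := by rw [div_le_iff₀ hp0]; exact h2
        have : n ∉ Ioc A B := by rw [mem_Ioc]; omega
        rw [if_pos hn, if_neg this, max_eq_left (by linarith), max_eq_left (by linarith)]
        simp
      · have h2 : β * p < n := Nat.lt_of_floor_lt (not_le.1 hn)
        have h4 : β < (n:ℝ) / p := by rw [lt_div_iff₀ hp0]; exact h2
        rw [if_neg hn, max_eq_right (a := β - _) (by linarith)]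
        by_cases hn2 : n ≤ B
        · rw [if_pos (by rw [mem_Ioc]; omega), sub_zero, sub_zero, abs_of_nonneg (le_max_right _ _)]
          exact max_le (by linarith) hh.le
        · have h5 : (β + h) * p < n := Nat.lt_of_floor_lt (not_le.1 hn2)
          have h6 : β + h < (n:ℝ) / p := by rw [lt_div_iff₀ hp0]; exact h5
          rw [if_neg (by rw [mem_Ioc]; omega), max_eq_right (by linarith)]
          simp
    have := abs_nonneg (max (β + h - n / p) 0 - max (β - n / p) 0 - if n ≤ A then h else 0)
    nlinarith
  rw [e2]
  refine (abs_sum_le_sum_abs _ _).trans ((sum_le_sum e3).trans ?_)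
  rw [← sum_filter, sum_const, nsmul_eq_mul, mul_comm]
  refine mul_le_mul_of_nonneg_left ?_ hh.le
  have c1 : ((range p).filter (fun n => n ∈ Ioc A B)).card ≤ B - A := by
    rw [← Nat.card_Ioc]
    apply card_le_card
    intro n hn; exact (mem_filter.1 hn).2
  have c2 : (((range p).filter (fun n => n ∈ Ioc A B)).card : ℝ) ≤ (B:ℝ) - A := by
    rw [← Nat.cast_sub hAB]; exact_mod_cast c1
  have c3 := Nat.floor_le (show 0 ≤ (β + h) * p by positivity)
  have c4 := Nat.lt_floor_add_one (β * (p:ℝ))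
  rw [← hA] at c4; rw [← hB] at c3
  linarith

theorem expand (hp2 : p ≠ 2) (α h : ℝ) (h0 : 0 ≤ α) (hh : 0 < h) (h1 : α + h < 1) :
    |(legendreSum α p : ℝ) - √p * ∑' k : ℕ, (legendreSym p k : ℝ) * ak (GS.sg p).re (GS.sg p).im α h k| ≤
      2 * (h * p + 1) := by
  have A := (Phi_comb p hp2 α h h0 hh h1.le).tsum_eq
  rw [tsum_mul_right, mul_comm] at A
  rw [A]
  have B := Phi_diff p α h h0 hh h1
  have C := Phi_diff p 0 h le_rfl hh (by linarith)
  rw [zero_add, zero_mul, Nat.floor_zero] at C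
  simp only [Icc_eq_empty (show ¬ (1:ℕ) ≤ 0 by norm_num), sum_empty, mul_zero, sub_zero] at C
  have e : (legendreSum α p : ℝ) = ∑ n ∈ Icc 1 ⌊α * p⌋₊, (legendreSym p n : ℝ) := by
    rw [legendreSum, dif_pos (Fact.out : p.Prime)]
    push_cast; rfl
  rw [e]
  set L := ∑ n ∈ Icc 1 ⌊α * p⌋₊, (legendreSym p n : ℝ)
  have : L - (Phi p (α + h) - Phi p α - Phi p h + Phi p 0) / h =
     (-(Phi p (α + h) - Phi p α - h * L) + (Phi p h - Phi p 0)) / h := by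
    field_simp; ring
  rw [this, abs_div, abs_of_pos hh, div_le_iff₀ hh]
  refine (abs_add_le _ _).trans ?_
  rw [abs_neg]
  linarith

end

lemma cc_abs (u v : ℝ) (huv : u ^ 2 + v ^ 2 = 1) (k : ℕ) (β : ℝ) : |cc u v k β| ≤ 1 := by
  unfold cc
  rw [abs_le_one_iff_mul_self_le_one]
  nlinarith [Real.sin_sq_add_cos_sq (2 * Real.pi * k * β),
    sq_nonneg (u * Real.sin (2 * Real.pi * k * β) - v * Real.cos (2 * Real.pi * k * β))]


lemma cc_lip (u v : ℝ) (huv : u ^ 2 + v ^ 2 = 1) (k : ℕ) (β h : ℝ) (hh : 0 ≤ h) :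
    |cc u v k (β + h) - cc u v k β| ≤ 2 * Real.pi * k * h := by
  have hd : ∀ x : ℝ, HasDerivAt (cc u v k) (2 * Real.pi * k * cc v (-u) k x) x := by
    intro x
    have h1 : HasDerivAt (fun x : ℝ => 2 * Real.pi * k * x) (2 * Real.pi * k) x := by
      simpa using (hasDerivAt_id x).const_mul (2 * Real.pi * k)
    have := (h1.cos.const_mul u).add (h1.sin.const_mul v)
    refine this.congr_deriv ?_
    unfold cc; ring
  have := Convex.norm_image_sub_le_of_norm_hasDerivWithin_le (f := cc u v k) (C := 2 * Real.pi * k)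
    (s := Set.univ) (x := β) (y := β + h) (fun x _ => (hd x).hasDerivWithinAt) (by
      intro x _
      have := cc_abs v (-u) (by linarith [neg_sq u]) k x
      rw [Real.norm_eq_abs, abs_mul, abs_of_nonneg (by positivity : 0 ≤ 2 * Real.pi * k)]
      have h0 : 0 ≤ 2 * Real.pi * k := by positivity
      nlinarith) convex_univ (Set.mem_univ _) (Set.mem_univ _)
  rw [Real.norm_eq_abs, Real.norm_eq_abs, add_sub_cancel_left, abs_of_nonneg hh] at this
  exact this

lemma ak_bound1 (u v : ℝ) (huv : u ^ 2 + v ^ 2 = 1) (α h : ℝ) (hh : 0 < h) (k : ℕ) :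
    |ak u v α h k| ≤ 2 / (h * Real.pi ^ 2) * (1 / (k:ℝ) ^ 2) := by
  unfold ak
  have hpi := Real.pi_pos
  rw [abs_mul, abs_mul, abs_neg, abs_of_nonneg (by positivity : 0 ≤ 1 / (2 * h * Real.pi ^ 2)),
    abs_of_nonneg (by positivity : 0 ≤ 1 / (k:ℝ) ^ 2)]
  have : |cc u v k (α + h) - cc u v k α - cc u v k h + cc u v k 0| ≤ 4 := by
    have h1 := abs_le.1 (cc_abs u v huv k (α + h))
    have h2 := abs_le.1 (cc_abs u v huv k α)
    have h3 := abs_le.1 (cc_abs u v huv k h)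
    have h4 := abs_le.1 (cc_abs u v huv k 0)
    rw [abs_le]; constructor <;> linarith
  calc _ ≤ 1 / (2 * h * Real.pi ^ 2) * (1 / (k:ℝ) ^ 2 * 4) := by gcongr
    _ = _ := by field_simp; ring

lemma ak_bound2 (u v : ℝ) (huv : u ^ 2 + v ^ 2 = 1) (α h : ℝ) (hh : 0 < h) (k : ℕ) :
    |ak u v α h k| ≤ 2 / Real.pi / k := by
  rcases Nat.eq_zero_or_pos k with rfl | hk
  · simp [ak]
  have hk0 : (0:ℝ) < k := by exact_mod_cast hk
  unfold ak
  have hpi := Real.pi_pos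
  rw [abs_mul, abs_mul, abs_neg, abs_of_nonneg (by positivity : 0 ≤ 1 / (2 * h * Real.pi ^ 2)),
    abs_of_nonneg (by positivity : 0 ≤ 1 / (k:ℝ) ^ 2)]
  have : |cc u v k (α + h) - cc u v k α - cc u v k h + cc u v k 0| ≤ 4 * Real.pi * k * h := by
    have h1 := abs_le.1 (cc_lip u v huv k α h hh.le)
    have h2 := abs_le.1 (cc_lip u v huv k 0 h hh.le)
    rw [zero_add] at h2
    rw [abs_le]; constructor <;> linarith
  calc _ ≤ 1 / (2 * h * Real.pi ^ 2) * (1 / (k:ℝ) ^ 2 * (4 * Real.pi * k * h)) := by gcongr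
    _ = _ := by field_simp; ring

/-- Limiting coefficient `s_k(α)`. -/
noncomputable def sk (u v : ℝ) (k : ℕ) (α : ℝ) : ℝ :=
  u * Real.sin (2 * Real.pi * k * α) + v * (1 - Real.cos (2 * Real.pi * k * α))

open Filter Topology in
lemma ak_lim (u v α : ℝ) (k : ℕ) :
    Tendsto (fun h => Real.pi * ak u v α h k) (𝓝[>] 0) (𝓝 (sk u v k α / k)) := by
  have hd : ∀ x : ℝ, HasDerivAt (cc u v k) (2 * Real.pi * k * cc v (-u) k x) x := by
    intro x
    have h1 : HasDerivAt (fun x : ℝ => 2 * Real.pi * k * x) (2 * Real.pi * k) x := by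
      simpa using (hasDerivAt_id x).const_mul (2 * Real.pi * k)
    have := (h1.cos.const_mul u).add (h1.sin.const_mul v)
    refine this.congr_deriv ?_
    unfold cc; ring
  rcases Nat.eq_zero_or_pos k with rfl | hk
  · simp [ak]
  have hk0 : (0:ℝ) < k := by exact_mod_cast hk
  have hpi := Real.pi_pos
  have t1 := (hd α).tendsto_slope_zero_right
  have t2 := (hd 0).tendsto_slope_zero_right
  have t3 := (t1.sub t2).const_mul (-(1 / (2 * Real.pi * (k:ℝ) ^ 2)))
  have e : sk u v k α / k = -(1 / (2 * Real.pi * (k:ℝ) ^ 2)) *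
      (2 * Real.pi * k * cc v (-u) k α - 2 * Real.pi * k * cc v (-u) k 0) := by
    simp only [sk, cc, mul_zero, Real.cos_zero, Real.sin_zero]
    field_simp; ring
  rw [e]
  refine t3.congr fun h => ?_
  simp only [ak, zero_add, smul_eq_mul]
  field_simp
  ring

end SE

namespace VB
open Finset
open scoped NumberTheorySymbols

/-- squarefree core -/
noncomputable def sf (n : ℕ) : ℕ := (Nat.sq_mul_squarefree n).choose
/-- square root part -/
noncomputable def rt (n : ℕ) : ℕ := (Nat.sq_mul_squarefree n).choose_spec.choose

lemma rt_sf (n : ℕ) : rt n ^ 2 * sf n = n := (Nat.sq_mul_squarefree n).choose_spec.choose_spec.1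
lemma sf_sqf (n : ℕ) : Squarefree (sf n) := (Nat.sq_mul_squarefree n).choose_spec.choose_spec.2

lemma sf_pos (n : ℕ) : 0 < sf n := Nat.pos_of_ne_zero (sf_sqf n).ne_zero
lemma rt_pos (n : ℕ) (hn : 0 < n) : 0 < rt n := by
  rcases Nat.eq_zero_or_pos (rt n) with h | h
  · have := rt_sf n; rw [h] at this; simp at this; omega
  · exact h
lemma sf_le (n : ℕ) (hn : 0 < n) : sf n ≤ n := by
  have h1 := rt_sf n
  have h2 := rt_pos n hn
  calc sf n = 1 * sf n := (one_mul _).symm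
    _ ≤ rt n ^ 2 * sf n := Nat.mul_le_mul_right _ (Nat.one_le_pow _ _ h2)
    _ = n := h1

lemma sf_sq (u : ℕ) (hu : 0 < u) : sf (u ^ 2) = 1 := by
  have h1 := rt_sf (u ^ 2)
  have h2 : rt (u ^ 2) ^ 2 ∣ u ^ 2 := Dvd.intro _ h1
  rw [Nat.pow_dvd_pow_iff two_ne_zero] at h2
  obtain ⟨v, hv⟩ := h2
  have hr := rt_pos (u ^ 2) (by positivity)
  generalize rt (u ^ 2) = r at *
  have h3 : sf (u ^ 2) = v ^ 2 := by
    have : r ^ 2 * sf (u ^ 2) = r ^ 2 * v ^ 2 := by rw [h1, hv]; ring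
    exact Nat.eq_of_mul_eq_mul_left (by positivity) this
  have h4 := sf_sqf (u ^ 2)
  rw [h3] at h4 ⊢
  have h5 := h4 v (by rw [sq])
  rw [Nat.isUnit_iff] at h5
  rw [h5]; rfl

/-- grouped weights -/
noncomputable def grp (T : Finset ℕ) (w : ℕ → ℝ) (s : ℕ) : ℝ := ∑ n ∈ T.filter (fun n => sf n = s), w n

/-- variance -/
noncomputable def VV (T : Finset ℕ) (w : ℕ → ℝ) : ℝ := ∑ s ∈ T.image sf, grp T w s ^ 2

lemma J_core (p : ℕ) (hp : p.Prime) (n : ℕ) (hn : 0 < n) (hnp : n < p) :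
    J((n:ℤ) | p) = J((sf n : ℤ) | p) := by
  have h1 := rt_sf n
  have h2 := rt_pos n hn
  have h3 : rt n < p := by
    have := sf_pos n
    nlinarith
  conv_lhs => rw [← h1]
  push_cast
  rw [jacobiSym.mul_left, jacobiSym.sq_one', one_mul]
  rw [Int.gcd_natCast_natCast]
  exact (Nat.coprime_of_lt_prime h2.ne' h3 hp).symm

lemma group_sum (p : ℕ) (hp : p.Prime) (T : Finset ℕ) (w : ℕ → ℝ) (hT : ∀ n ∈ T, 0 < n ∧ n < p) :
    ∑ n ∈ T, w n * ((J((n:ℤ) | p) : ℤ) : ℝ) = ∑ s ∈ T.image sf, grp T w s * ((J((s:ℤ) | p) : ℤ) : ℝ) := by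
  rw [← sum_fiberwise_of_maps_to (g := sf) (t := T.image sf) (fun n hn => mem_image_of_mem _ hn)]
  refine sum_congr rfl fun s _ => ?_
  rw [grp, sum_mul]
  refine sum_congr rfl fun n hn => ?_
  rw [mem_filter] at hn
  rw [J_core p hp n (hT n hn.1).1 (hT n hn.1).2, hn.2]

lemma sum_sq_le_two (F : Finset ℕ) (hF : ∀ u ∈ F, 0 < u) : ∑ u ∈ F, 1 / (u:ℝ) ^ 2 ≤ 2 := by
  have h : ∑ u ∈ F, 1 / (u:ℝ) ^ 2 ≤ Real.pi ^ 2 / 6 := by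
    have := hasSum_zeta_two
    exact sum_le_hasSum F (fun _ _ => by positivity) this
  have := Real.pi_lt_d2
  have := Real.pi_pos
  nlinarith

lemma rt_inj (T : Finset ℕ) (s : ℕ) : Set.InjOn rt (T.filter (fun n => sf n = s) : Set ℕ) := by
  intro a ha b hb hab
  simp only [coe_filter, Set.mem_setOf_eq] at ha hb
  rw [← rt_sf a, ← rt_sf b, ha.2, hb.2, hab]

lemma grp_abs_le (T : Finset ℕ) (w : ℕ → ℝ) (s : ℕ) (g : ℕ → ℝ)
    (hg : ∀ n ∈ T, sf n = s → |w n| ≤ g (rt n)) :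
    |grp T w s| ≤ ∑ u ∈ (T.filter (fun n => sf n = s)).image rt, g u := by
  rw [sum_image (rt_inj T s)]
  refine (abs_sum_le_sum_abs _ _).trans (sum_le_sum fun n hn => ?_)
  rw [mem_filter] at hn
  exact hg n hn.1 hn.2

lemma cast_split (n s : ℕ) (h : sf n = s) : (n:ℝ) = (rt n:ℝ) ^ 2 * s := by
  have := rt_sf n
  rw [h] at this
  exact_mod_cast this.symm

lemma grp_le (T : Finset ℕ) (w : ℕ → ℝ) (C : ℝ) (hC : 0 ≤ C) (hT : ∀ n ∈ T, 0 < n)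
    (hw : ∀ n ∈ T, |w n| ≤ C / n) (s : ℕ) : |grp T w s| ≤ 2 * C / s := by
  refine (grp_abs_le T w s (fun u => C / s * (1 / (u:ℝ) ^ 2)) ?_).trans ?_
  · intro n hn h
    refine (hw n hn).trans (le_of_eq ?_)
    rw [cast_split n s h]
    field_simp
  · rw [← mul_sum]
    have := sum_sq_le_two ((T.filter (fun n => sf n = s)).image rt) (by
      intro u hu
      obtain ⟨n, hn, rfl⟩ := mem_image.1 hu
      exact rt_pos n (hT n (mem_filter.1 hn).1))
    calc _ ≤ C / s * 2 := by gcongr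
      _ = _ := by ring

/-- tail weight -/
noncomputable def ff (n : ℕ) : ℝ := 1 / ((sf n : ℝ) ^ 2 * (rt n : ℝ) ^ 2)

lemma ff_nonneg (n : ℕ) : 0 ≤ ff n := by unfold ff; positivity

lemma ff_summable : Summable ff := by
  have h2 : Summable (fun n : ℕ => 1 / (n:ℝ) ^ 2) := hasSum_zeta_two.summable
  have h3 : Summable (fun x : ℕ × ℕ => (1 / (x.1:ℝ) ^ 2) * (1 / (x.2:ℝ) ^ 2)) :=
    h2.mul_of_nonneg h2 (fun _ => by positivity) (fun _ => by positivity)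
  have h4 := h3.comp_injective (i := fun n : ℕ => (sf n, rt n)) (by
    intro a b hab
    simp only [Prod.mk.injEq] at hab
    rw [← rt_sf a, ← rt_sf b, hab.1, hab.2])
  refine h4.congr fun n => ?_
  simp only [Function.comp, ff]
  field_simp

lemma ff_tail (η : ℝ) (hη : 0 < η) : ∃ K0 : ℕ, ∀ T : Finset ℕ, (∀ n ∈ T, K0 ≤ n) → ∑ n ∈ T, ff n ≤ η := by
  obtain ⟨F, hF⟩ := summable_iff_vanishing_norm.1 ff_summable η hη
  refine ⟨F.sup id + 1, fun T hT => ?_⟩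
  have := hF T (by
    rw [disjoint_left]
    intro n hn hn2
    have h1 := hT n hn
    have h2 : n ≤ F.sup id := le_sup (f := id) hn2
    omega)
  rw [Real.norm_eq_abs] at this
  exact (le_abs_self _).trans this.le

lemma VV_tail (T : Finset ℕ) (w : ℕ → ℝ) (C : ℝ) (hC : 0 ≤ C) (hT : ∀ n ∈ T, 0 < n)
    (hw : ∀ n ∈ T, |w n| ≤ C / n) : VV T w ≤ 2 * C ^ 2 * ∑ n ∈ T, ff n := by
  rw [← sum_fiberwise_of_maps_to (g := sf) (t := T.image sf) (fun n hn => mem_image_of_mem _ hn), mul_sum, VV]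
  refine sum_le_sum fun s hs => ?_
  have h1 := grp_le T w C hC hT hw s
  have h2 : |grp T w s| ≤ C * s * ∑ n ∈ T.filter (fun n => sf n = s), ff n := by
    rw [mul_sum]
    refine (abs_sum_le_sum_abs _ _).trans (sum_le_sum fun n hn => ?_)
    rw [mem_filter] at hn
    refine (hw n hn.1).trans (le_of_eq ?_)
    have hs0 : (0:ℝ) < s := by rw [← hn.2]; exact_mod_cast sf_pos n
    have hr0 : (0:ℝ) < rt n := by exact_mod_cast rt_pos n (hT n hn.1)
    rw [ff, hn.2, cast_split n s hn.2]
    field_simp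
  have h3 : 0 ≤ ∑ n ∈ T.filter (fun n => sf n = s), ff n := sum_nonneg fun _ _ => ff_nonneg _
  obtain ⟨n, hn, rfl⟩ := mem_image.1 hs
  have hs0 : (0:ℝ) < sf n := by exact_mod_cast sf_pos n
  rw [← sq_abs, sq]
  calc _ ≤ (2 * C / sf n) * (C * sf n * ∑ m ∈ T.filter (fun m => sf m = sf n), ff m) :=
        mul_le_mul h1 h2 (abs_nonneg _) (by positivity)
    _ = _ := by field_simp

open Filter Topology in
theorem msT (θ τ A ε : ℝ) (hθ : 0 < θ) (hτ : 0 < τ) (hθτ : 2 * θ + τ < 1) (hA : 1 < 2 * A * θ)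
    (hA0 : 0 < A) (hε : 0 < ε) (hτ2 : τ ≤ 0.95) :
    ∀ᶠ N : ℕ in atTop, ∀ (T : Finset ℕ) (w : ℕ → ℝ) (r : ℕ), (r = 1 ∨ r = 3) →
      (∀ n ∈ T, 0 < n ∧ (n:ℝ) ≤ (N:ℝ) ^ τ) → (∀ n ∈ T, |w n| ≤ 2 / n) →
      ∑ p ∈ (range (N + 1)).filter (fun p => p.Prime ∧ p % 4 = r ∧ (N:ℝ) ^ (0.95:ℝ) < p),
        (∑ n ∈ T, w n * ((J((n:ℤ) | p) : ℤ) : ℝ)) ^ 2 ≤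
      (A * VV T w + ε) * N / Real.log N := by
  filter_upwards [MS.ms_asymp θ τ A 4 ε hθ hτ hθτ hA hA0 (by norm_num) hε, eventually_ge_atTop 1] with N h hN1 T w r hr hT hw
  have hN : (1:ℝ) ≤ N := by exact_mod_cast hN1
  have h2 := h (T.image sf) (grp T w) r hr (by
    intro s hs
    obtain ⟨n, hn, rfl⟩ := mem_image.1 hs
    refine ⟨sf_sqf n, ?_⟩
    have h3 : (sf n:ℝ) ≤ n := by exact_mod_cast sf_le n (hT n hn).1
    exact h3.trans (hT n hn).2) (by
    intro s _
    have := grp_le T w 2 (by norm_num) (fun n hn => (hT n hn).1) hw s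
    norm_num at this; exact this)
  refine le_trans (le_of_eq ?_) h2
  refine sum_congr rfl fun p hp => ?_
  simp only [mem_filter] at hp
  rw [group_sum p hp.2.1 T w]
  intro n hn
  refine ⟨(hT n hn).1, ?_⟩
  have h3 : (N:ℝ) ^ τ ≤ (N:ℝ) ^ (0.95:ℝ) := Real.rpow_le_rpow_of_exponent_le hN hτ2
  have : (n:ℝ) < p := lt_of_le_of_lt ((hT n hn).2.trans h3) hp.2.2.2
  exact_mod_cast this

end VB

namespace VB
open Finset

/-- indicator weight -/
noncomputable def b6 (n : ℕ) : ℝ := if n % 6 = 1 ∨ n % 6 = 5 then 1 / (n:ℝ) ^ 2 else 0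

lemma b6_nonneg (n : ℕ) : 0 ≤ b6 n := by unfold b6; split_ifs <;> positivity

lemma b6_sum (k : ℕ) : ∑ n ∈ Ico 8 (6 * k + 8), b6 n ≤ 1 / 18 * (2 / 3 - 1 / ((k:ℝ) + 3 / 2)) := by
  induction k with
  | zero => norm_num
  | succ k ih =>
    rw [show 6 * (k + 1) + 8 = 6 * k + 8 + 1 + 1 + 1 + 1 + 1 + 1 by ring]
    rw [sum_Ico_succ_top (by omega), sum_Ico_succ_top (by omega), sum_Ico_succ_top (by omega),
      sum_Ico_succ_top (by omega), sum_Ico_succ_top (by omega), sum_Ico_succ_top (by omega)]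
    have e1 : b6 (6 * k + 8) = 0 := by unfold b6; rw [if_neg (by omega)]
    have e2 : b6 (6 * k + 8 + 1) = 0 := by unfold b6; rw [if_neg (by omega)]
    have e3 : b6 (6 * k + 8 + 1 + 1) = 0 := by unfold b6; rw [if_neg (by omega)]
    have e4 : b6 (6 * k + 8 + 1 + 1 + 1) = 1 / (6 * (k:ℝ) + 11) ^ 2 := by
      unfold b6; rw [if_pos (by omega)]; push_cast; ring
    have e5 : b6 (6 * k + 8 + 1 + 1 + 1 + 1) = 0 := by unfold b6; rw [if_neg (by omega)]
    have e6 : b6 (6 * k + 8 + 1 + 1 + 1 + 1 + 1) = 1 / (6 * (k:ℝ) + 13) ^ 2 := by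
      unfold b6; rw [if_pos (by omega)]; push_cast; ring
    rw [e1, e2, e3, e4, e5, e6]
    have key : 1 / (6 * (k:ℝ) + 11) ^ 2 + 1 / (6 * (k:ℝ) + 13) ^ 2 ≤
        1 / 18 * (1 / ((k:ℝ) + 3 / 2) - 1 / (((k + 1 : ℕ):ℝ) + 3 / 2)) := by
      push_cast
      have hk : (0:ℝ) ≤ k := by positivity
      have : 1 / 18 * (1 / ((k:ℝ) + 3 / 2) - 1 / ((k:ℝ) + 1 + 3 / 2)) = 2 / (36 * (k + 2) ^ 2 - 9) := by
        have : (36 * ((k:ℝ) + 2) ^ 2 - 9) ≠ 0 := by nlinarith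
        field_simp
        ring
      rw [this, div_add_div _ _ (by positivity) (by positivity), div_le_div_iff₀ (by positivity) (by nlinarith)]
      nlinarith [sq_nonneg ((k:ℝ) + 2)]
    linarith

lemma b6_total (S : Finset ℕ) (hS : ∀ s ∈ S, 2 ≤ s) : ∑ s ∈ S, b6 s ≤ 0.0975 := by
  have h1 : ∑ s ∈ S, b6 s ≤ ∑ s ∈ Ico 2 (6 * (S.sup id) + 8), b6 s := by
    refine sum_le_sum_of_subset_of_nonneg ?_ (fun _ _ _ => b6_nonneg _)
    intro s hs
    rw [mem_Ico]
    have : s ≤ S.sup id := le_sup (f := id) hs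
    have := hS s hs
    omega
  refine h1.trans ?_
  rw [← sum_Ico_consecutive b6 (show 2 ≤ 8 by norm_num) (show 8 ≤ 6 * (S.sup id) + 8 by omega)]
  have h2 := b6_sum (S.sup id)
  have h3 : ∑ s ∈ Ico 2 8, b6 s = 1 / 25 + 1 / 49 := by
    rw [show Ico 2 8 = {2,3,4,5,6,7} by decide]
    simp [b6]
    norm_num
  have h4 : 0 ≤ 1 / ((S.sup id : ℕ) + 3 / 2 : ℝ) := by positivity
  rw [h3]
  have h5 : (1:ℝ) / 25 + 1 / 49 + 1 / 18 * (2 / 3) ≤ 0.0975 := by norm_num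
  linarith

lemma mod6 : ∀ x < 6, Nat.gcd x 6 = 1 → x = 1 ∨ x = 5 := by decide

lemma VV_A (K : ℕ) (κ : ℝ) (hκ : 0 ≤ κ) (w : ℕ → ℝ)
    (hw : ∀ n ∈ (Icc 1 K).filter (fun n => Nat.Coprime n 6 ∧ sf n ≠ 1), |w n| ≤ κ / n) :
    VV ((Icc 1 K).filter (fun n => Nat.Coprime n 6 ∧ sf n ≠ 1)) w ≤
      0.0975 * (∑ n ∈ (Icc 1 K).filter (fun n => Nat.Coprime n 6 ∧ sf n = 1), κ / n) ^ 2 := by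
  set T := (Icc 1 K).filter (fun n => Nat.Coprime n 6 ∧ sf n ≠ 1) with hT
  set T1 := (Icc 1 K).filter (fun n => Nat.Coprime n 6 ∧ sf n = 1) with hT1
  set c := ∑ n ∈ T1, κ / n with hc
  have hc0 : 0 ≤ c := sum_nonneg fun _ _ => by positivity
  have hmem : ∀ n ∈ T, 1 ≤ n ∧ n ≤ K ∧ Nat.Coprime n 6 ∧ sf n ≠ 1 := by
    intro n hn
    simp only [hT, mem_filter, mem_Icc] at hn
    exact ⟨hn.1.1, hn.1.2, hn.2⟩
  have hB : ∀ s ∈ T.image sf, |grp T w s| ≤ c / s := by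
    intro s hs
    refine (grp_abs_le T w s (fun u => 1 / s * (κ / (u ^ 2 : ℕ))) ?_).trans ?_
    · intro n hn h
      refine (hw n hn).trans (le_of_eq ?_)
      rw [cast_split n s h]
      push_cast
      field_simp
    · rw [← mul_sum, one_div_mul_eq_div]
      gcongr
      rw [hc]
      have : ∑ u ∈ (T.filter (fun n => sf n = s)).image rt, κ / ((u ^ 2 : ℕ) : ℝ) =
         ∑ m ∈ ((T.filter (fun n => sf n = s)).image rt).image (fun u : ℕ => u ^ 2), κ / (m : ℝ) := by
        rw [sum_image (s := (T.filter (fun n => sf n = s)).image rt)]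
        intro a _ b _ hab
        exact Nat.pow_left_injective (two_ne_zero) hab
      rw [this]
      refine sum_le_sum_of_subset_of_nonneg ?_ (fun _ _ _ => by positivity)
      intro m hm
      obtain ⟨u, hu, rfl⟩ := mem_image.1 hm
      obtain ⟨n, hn, rfl⟩ := mem_image.1 hu
      obtain ⟨h1, h2, h3, h4⟩ := hmem n (mem_filter.1 hn).1
      have hr := rt_pos n h1
      have hd : rt n ^ 2 ∣ n := Dvd.intro _ (rt_sf n)
      simp only [hT1, mem_filter, mem_Icc]
      exact ⟨⟨Nat.one_le_pow _ _ hr, (Nat.le_of_dvd h1 hd).trans h2⟩, h3.coprime_dvd_left hd, sf_sq _ hr⟩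
  have hb : ∀ s ∈ T.image sf, grp T w s ^ 2 ≤ c ^ 2 * b6 s := by
    intro s hs
    have h1 := hB s hs
    obtain ⟨n, hn, rfl⟩ := mem_image.1 hs
    have h3 := (hmem n hn).2.2.1.coprime_dvd_left (Dvd.intro_left _ (rt_sf n))
    have h4 : sf n % 6 = 1 ∨ sf n % 6 = 5 := by
      have h5 : Nat.gcd (sf n % 6) 6 = 1 := by
        rw [← Nat.gcd_rec, Nat.gcd_comm]; exact h3
      exact mod6 _ (Nat.mod_lt _ (by norm_num)) h5
    rw [b6, if_pos h4, ← sq_abs]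
    calc |grp T w (sf n)| ^ 2 ≤ (c / sf n) ^ 2 := by gcongr
      _ = _ := by ring
  calc VV T w ≤ ∑ s ∈ T.image sf, c ^ 2 * b6 s := sum_le_sum hb
    _ = c ^ 2 * ∑ s ∈ T.image sf, b6 s := by rw [mul_sum]
    _ ≤ c ^ 2 * 0.0975 := by
      gcongr
      apply b6_total
      intro s hs
      obtain ⟨n, hn, rfl⟩ := mem_image.1 hs
      have := sf_pos n
      have := (hmem n hn).2.2.2
      omega
    _ = _ := by ring

lemma c_ge (K : ℕ) (hK : 49 ≤ K) (κ : ℝ) (hκ : 0 ≤ κ) :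
    1.06 * κ ≤ ∑ n ∈ (Icc 1 K).filter (fun n => Nat.Coprime n 6 ∧ sf n = 1), κ / n := by
  have h : ({1, 25, 49} : Finset ℕ) ⊆ (Icc 1 K).filter (fun n => Nat.Coprime n 6 ∧ sf n = 1) := by
    intro n hn
    simp only [mem_insert, mem_singleton] at hn
    simp only [mem_filter, mem_Icc]
    rcases hn with rfl | rfl | rfl
    · exact ⟨⟨le_rfl, by omega⟩, by norm_num, sf_sq 1 (by norm_num)⟩
    · exact ⟨⟨by norm_num, by omega⟩, by norm_num, sf_sq 5 (by norm_num)⟩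
    · exact ⟨⟨by norm_num, by omega⟩, by norm_num, sf_sq 7 (by norm_num)⟩
  refine le_trans ?_ (sum_le_sum_of_subset_of_nonneg h (fun _ _ _ => by positivity))
  rw [sum_insert (by norm_num), sum_insert (by norm_num), sum_singleton]
  norm_num
  linarith

/-- tail of `∑ 1/u²` -/
lemma inv_sq_tail (v U : ℕ) (hv : 1 ≤ v) : ∑ u ∈ Ioc v U, 1 / (u:ℝ) ^ 2 ≤ 1 / (v:ℝ) := by
  rcases le_total v U with h | h
  · have : ∀ m : ℕ, v ≤ m → ∑ u ∈ Ioc v m, 1 / (u:ℝ) ^ 2 ≤ 1 / (v:ℝ) - 1 / (m:ℝ) := by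
      intro m hm
      induction m, hm using Nat.le_induction with
      | base => simp
      | succ m hm ih =>
        rw [← insert_Ioc_right_eq_Ioc_add_one hm, sum_insert (by simp)]
        have hm0 : (1:ℝ) ≤ m := by exact_mod_cast hv.trans hm
        have : 1 / ((m + 1 : ℕ):ℝ) ^ 2 ≤ 1 / (m:ℝ) - 1 / ((m + 1 : ℕ):ℝ) := by
          push_cast
          rw [div_sub_div _ _ (by positivity) (by positivity), div_le_div_iff₀ (by positivity) (by positivity)]
          nlinarith
        linarith
    have h2 := this U h
    have : (0:ℝ) ≤ 1 / U := by positivity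
    linarith
  · rw [Ioc_eq_empty (by omega)]; simp

lemma phi_bound (a : ℝ) (ha : 0 < a) (F : Finset ℕ) (hF : ∀ u ∈ F, 0 < u) :
    ∑ u ∈ F, min a (2 / (u:ℝ) ^ 2) ≤ 2 * √(2 * a) := by
  set t := √(2 / a) with ht
  have ht0 : 0 < t := Real.sqrt_pos.2 (by positivity)
  have ht2 : t ^ 2 = 2 / a := Real.sq_sqrt (by positivity)
  have hat : a = 2 / t ^ 2 := by rw [ht2]; field_simp
  set U := ⌊t⌋₊ with hU
  have hU1 : (U:ℝ) ≤ t := Nat.floor_le ht0.le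
  have hU2 : t < U + 1 := Nat.lt_floor_add_one t
  set W := max (F.sup id) (U + 1) with hW
  have hsub : F ⊆ Icc 1 U ∪ (Ioc U (U+1) ∪ Ioc (U + 1) W) := by
    intro u hu
    have h1 := hF u hu
    have h2 : u ≤ F.sup id := le_sup (f := id) hu
    simp only [mem_union, mem_Icc, mem_Ioc]
    omega
  have h1 : ∑ u ∈ F, min a (2 / (u:ℝ) ^ 2) ≤ a * U + (2 / ((U:ℝ) + 1) ^ 2 + 2 * (1 / ((U + 1 : ℕ) : ℝ))) := by
    have hn : ∀ u : ℕ, 0 ≤ min a (2 / (u:ℝ) ^ 2) := fun u => le_min ha.le (by positivity)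
    refine (sum_le_sum_of_subset_of_nonneg hsub (fun u _ _ => hn u)).trans ?_
    rw [sum_union, sum_union]
    · gcongr
      · calc _ ≤ ∑ u ∈ Icc 1 U, a := sum_le_sum fun u _ => min_le_left _ _
          _ = _ := by simp [mul_comm]
      · rw [show Ioc U (U+1) = {U + 1} by ext; simp only [mem_Ioc, mem_singleton]; omega, sum_singleton]
        push_cast
        exact min_le_right _ _
      · calc _ ≤ ∑ u ∈ Ioc (U + 1) W, 2 * (1 / (u:ℝ) ^ 2) := sum_le_sum fun u _ => (min_le_right _ _).trans (le_of_eq (by ring))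
          _ ≤ _ := by
            rw [← mul_sum]
            gcongr
            exact inv_sq_tail (U + 1) W (by omega)
    · rw [disjoint_left]; intro x; simp only [mem_Ioc]; omega
    · rw [disjoint_left]; intro x; simp only [mem_Ioc, mem_Icc, mem_union]; omega
  have h2 : √(2 * a) = 2 / t := by
    rw [hat, show 2 * (2 / t ^ 2) = (2 / t) ^ 2 by ring, Real.sqrt_sq (by positivity)]
  rw [h2]
  refine h1.trans ?_
  push_cast
  obtain ⟨v, hv⟩ : ∃ v : ℝ, v = U + 1 := ⟨_, rfl⟩
  have hU0 : (0:ℝ) ≤ U := by positivity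
  have hUv : (U:ℝ) = v - 1 := by linarith
  rw [← hv, hUv, hat]
  have hv1 : 1 ≤ v := by linarith
  have key : (v - 1) * v ^ 2 + (1 + v) * t ^ 2 - 2 * t * v ^ 2 ≤ 0 := by
    have h3 : t ≤ v := by linarith
    have h4 : v - 1 ≤ t := by linarith
    nlinarith [mul_nonneg (sub_nonneg.2 h3) (sub_nonneg.2 h4), mul_nonneg (mul_nonneg (sub_nonneg.2 h3) (sub_nonneg.2 h4)) (show (0:ℝ) ≤ v by linarith)]
  have e : 2 * (2 / t) - (2 / t ^ 2 * (v - 1) + (2 / v ^ 2 + 2 * (1 / v))) =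
      -2 * ((v - 1) * v ^ 2 + (1 + v) * t ^ 2 - 2 * t * v ^ 2) / (t ^ 2 * v ^ 2) := by
    field_simp; ring
  have : 0 ≤ -2 * ((v - 1) * v ^ 2 + (1 + v) * t ^ 2 - 2 * t * v ^ 2) / (t ^ 2 * v ^ 2) := by
    apply div_nonneg _ (by positivity)
    linarith
  linarith

lemma VV_Y (T : Finset ℕ) (hT : ∀ n ∈ T, 0 < n) (w : ℕ → ℝ) (D : ℝ) (hD0 : 0 < D) (hD : D ≤ 0.000012567)
    (hw : ∀ n ∈ T, |w n| ≤ min (D * n) 2 / n) : VV T w ≤ 0.00142 := by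
  have hB1 : ∀ s ∈ T.image sf, grp T w s ^ 2 ≤ 8 * D * (1 / s) := by
    intro s hs
    have hs0 : (0:ℝ) < s := by
      obtain ⟨n, _, rfl⟩ := mem_image.1 hs
      exact_mod_cast sf_pos n
    have : |grp T w s| ≤ 1 / s * (2 * √(2 * (D * s))) := by
      refine (grp_abs_le T w s (fun u => 1 / s * min (D * s) (2 / (u:ℝ) ^ 2)) ?_).trans ?_
      · intro n hn h
        refine (hw n hn).trans (le_of_eq ?_)
        have hr0 : (0:ℝ) < rt n := by exact_mod_cast rt_pos n (hT n hn)
        rw [cast_split n s h, ← min_div_div_right (by positivity), mul_min_of_nonneg _ _ (show (0:ℝ) ≤ 1 / (s:ℝ) by positivity)]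
        congr 1
        · field_simp
        · field_simp
      · rw [← mul_sum]
        gcongr
        apply phi_bound _ (by positivity)
        intro u hu
        obtain ⟨n, hn, rfl⟩ := mem_image.1 hu
        exact rt_pos n (hT n (mem_filter.1 hn).1)
    rw [← sq_abs]
    calc |grp T w s| ^ 2 ≤ (1 / s * (2 * √(2 * (D * s)))) ^ 2 := by gcongr
      _ = _ := by
        rw [mul_pow, mul_pow, Real.sq_sqrt (by positivity)]; field_simp; ring
  have hB2 : ∀ s ∈ T.image sf, grp T w s ^ 2 ≤ 16 * (1 / (s:ℝ) ^ 2) := by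
    intro s hs
    have := grp_le T w 2 (by norm_num) hT (fun n hn => (hw n hn).trans (by gcongr; exact min_le_right _ _)) s
    rw [← sq_abs]
    calc |grp T w s| ^ 2 ≤ (2 * 2 / s) ^ 2 := by gcongr
      _ = _ := by ring
  set W := max ((T.image sf).sup id) 131072 with hW
  have hpos : ∀ s ∈ T.image sf, 0 < s := by
    intro s hs; obtain ⟨n, _, rfl⟩ := mem_image.1 hs; exact sf_pos n
  have hVV : VV T w ≤ ∑ s ∈ Icc (1:ℕ) 131072, 8 * D * (1 / (s:ℝ)) + ∑ s ∈ Ioc (131072:ℕ) W, 16 * (1 / (s:ℝ) ^ 2) := by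
    rw [VV, ← sum_filter_add_sum_filter_not (T.image sf) (fun s => s ≤ 131072)]
    gcongr ?_ + ?_
    · refine (sum_le_sum fun s hs => hB1 s (mem_filter.1 hs).1).trans
        (sum_le_sum_of_subset_of_nonneg ?_ (fun _ _ _ => by positivity))
      intro s hs
      rw [mem_filter] at hs
      rw [mem_Icc]; exact ⟨hpos s hs.1, hs.2⟩
    · refine (sum_le_sum fun s hs => hB2 s (mem_filter.1 hs).1).trans
        (sum_le_sum_of_subset_of_nonneg ?_ (fun _ _ _ => by positivity))
      intro s hs
      rw [mem_filter] at hs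
      have : s ≤ (T.image sf).sup id := le_sup (f := id) hs.1
      rw [mem_Ioc]; omega
  rw [← mul_sum, ← mul_sum] at hVV
  have h1 := MS.sum_inv_le 131072
  have h2 := inv_sq_tail 131072 W (by norm_num)
  have h3 : Real.log ((131072 : ℕ) : ℝ) = 17 * Real.log 2 := by
    rw [show ((131072 : ℕ) : ℝ) = 2 ^ 17 by norm_num, Real.log_pow]; norm_num
  have h4 := Real.log_two_lt_d9
  rw [h3] at h1
  have h5 : 8 * D * ∑ s ∈ Icc (1:ℕ) 131072, (1 / (s:ℝ)) ≤ 8 * 0.000012567 * 12.785 := by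
    have : (0:ℝ) ≤ ∑ s ∈ Icc (1:ℕ) 131072, (1 / (s:ℝ)) := sum_nonneg fun _ _ => by positivity
    have h6 : ∑ s ∈ Icc (1:ℕ) 131072, (1 / (s:ℝ)) ≤ 12.785 := by norm_num at h1 h4 ⊢; linarith
    gcongr
  norm_num at h2 h5 hVV ⊢
  linarith

end VB

namespace FA
open Finset Filter Topology

lemma cos_third : Real.cos (2 * Real.pi / 3) = -1 / 2 := by
  rw [show 2 * Real.pi / 3 = Real.pi - Real.pi / 3 by ring, Real.cos_pi_sub, Real.cos_pi_div_three]
  norm_num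

lemma sin_third : Real.sin (2 * Real.pi / 3) = √3 / 2 := by
  rw [show 2 * Real.pi / 3 = Real.pi - Real.pi / 3 by ring, Real.sin_pi_sub, Real.sin_pi_div_three]

lemma sk_third (u v : ℝ) (n : ℕ) : SE.sk u v n (1 / 3) =
    if n % 3 = 0 then 0 else if n % 3 = 1 then u * (√3 / 2) + v * (3 / 2)
      else - u * (√3 / 2) + v * (3 / 2) := by
  have hn : n = 3 * (n / 3) + n % 3 := (Nat.div_add_mod n 3).symm
  have hlt : n % 3 < 3 := Nat.mod_lt _ (by norm_num)
  set m := n / 3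
  set t := n % 3 with ht
  clear_value m t
  subst hn
  have e : 2 * Real.pi * ((3 * m + t : ℕ) : ℝ) * (1 / 3) = 2 * Real.pi * t / 3 + m * (2 * Real.pi) := by
    push_cast; ring
  simp only [SE.sk]
  rw [e, Real.sin_add_nat_mul_two_pi, Real.cos_add_nat_mul_two_pi]
  interval_cases t
  · simp
  · rw [Nat.cast_one, mul_one, cos_third, sin_third, if_neg (by norm_num), if_pos (by norm_num)]; ring
  · have e2 : 2 * Real.pi * ((2:ℕ):ℝ) / 3 = 2 * (2 * Real.pi / 3) := by push_cast; ring
    rw [e2, Real.sin_two_mul, Real.cos_two_mul, cos_third, sin_third]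
    simp; ring

/-- the pair of parameters of a residue class -/
def Good (u v κ ε : ℝ) : Prop :=
  (u = 1 ∧ v = 0 ∧ κ = √3 / 2 ∧ ε = -1) ∨ (u = 0 ∧ v = 1 ∧ κ = 3 / 2 ∧ ε = 1)

lemma Good.kap {u v κ ε : ℝ} (h : Good u v κ ε) : 0 < κ ∧ 0.75 ≤ κ ^ 2 ∧ κ ≤ 2 := by
  rcases h with ⟨_, _, rfl, _⟩ | ⟨_, _, rfl, _⟩
  · have : √3 ^ 2 = (3:ℝ) := Real.sq_sqrt (by norm_num)
    have h3 : 0 < √(3:ℝ) := Real.sqrt_pos.2 (by norm_num)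
    refine ⟨by positivity, by nlinarith, by nlinarith⟩
  · norm_num

lemma Good.uv {u v κ ε : ℝ} (h : Good u v κ ε) : u ^ 2 + v ^ 2 = 1 := by
  rcases h with ⟨rfl, rfl, _, _⟩ | ⟨rfl, rfl, _, _⟩ <;> norm_num

lemma Good.eps {u v κ ε : ℝ} (h : Good u v κ ε) : |ε| = 1 := by
  rcases h with ⟨_, _, _, rfl⟩ | ⟨_, _, _, rfl⟩ <;> norm_num

lemma Good.abs {u v κ ε : ℝ} (h : Good u v κ ε) (n : ℕ) : |SE.sk u v n (1 / 3)| ≤ κ := by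
  have h0 := h.kap.1
  rw [sk_third]
  rcases h with ⟨rfl, rfl, hk, rfl⟩ | ⟨rfl, rfl, hk, rfl⟩ <;> split_ifs <;> rw [abs_le] <;>
    constructor <;> linarith

lemma Good.zero {u v : ℝ} (n : ℕ) (hn : n % 3 = 0) : SE.sk u v n (1 / 3) = 0 := by
  rw [sk_third, if_pos hn]

lemma Good.two {u v κ ε : ℝ} (h : Good u v κ ε) (n : ℕ) :
    SE.sk u v ((2 * n : ℕ)) (1 / 3) = ε * SE.sk u v n (1 / 3) := by
  rw [sk_third, sk_third]
  have : n % 3 = 0 ∨ n % 3 = 1 ∨ n % 3 = 2 := by omega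
  rcases this with h3 | h3 | h3
  · rw [if_pos (by omega), if_pos h3]; ring
  · rw [if_neg (by omega), if_neg (by omega), if_neg (by omega), if_pos h3]
    rcases h with ⟨rfl, rfl, hk, rfl⟩ | ⟨rfl, rfl, hk, rfl⟩ <;> ring
  · rw [if_neg (by omega), if_pos (by omega), if_neg (by omega), if_neg (by omega)]
    rcases h with ⟨rfl, rfl, hk, rfl⟩ | ⟨rfl, rfl, hk, rfl⟩ <;> ring

lemma Good.sq {u v κ ε : ℝ} (h : Good u v κ ε) (n : ℕ) (hn : VB.sf n = 1) (hn6 : Nat.Coprime n 6) :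
    SE.sk u v n (1 / 3) = κ := by
  have h1 := VB.rt_sf n
  rw [hn, mul_one] at h1
  have h3 : ¬ (n % 3 = 0) := by
    intro h0
    have := Nat.dvd_gcd (Nat.dvd_of_mod_eq_zero h0) (show 3 ∣ 6 by norm_num)
    rw [hn6] at this
    omega
  have h4 : n % 3 = 1 := by
    rw [← h1, Nat.pow_mod] at h3 ⊢
    have : VB.rt n % 3 < 3 := Nat.mod_lt _ (by norm_num)
    interval_cases VB.rt n % 3 <;> simp_all
  rw [sk_third, if_neg h3, if_pos h4]
  rcases h with ⟨rfl, rfl, hk, rfl⟩ | ⟨rfl, rfl, hk, rfl⟩ <;> linarith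

lemma Good.diff {u v κ ε : ℝ} (h : Good u v κ ε) (α D : ℝ) (hD : 2 * Real.pi * |α - 1 / 3| ≤ D) (n : ℕ) :
    |SE.sk u v n α - SE.sk u v n (1 / 3)| ≤ min (D * n) 2 := by
  have e : |2 * Real.pi * n * α - 2 * Real.pi * n * (1 / 3)| ≤ D * n := by
    rw [← mul_sub, abs_mul, abs_of_nonneg (by positivity)]
    calc _ = 2 * Real.pi * |α - 1 / 3| * n := by ring
      _ ≤ _ := by gcongr
  have key : ∀ x y : ℝ, |Real.sin x - Real.sin y| ≤ |x - y| := fun x y => by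
    have := Real.lipschitzWith_sin.dist_le_mul x y
    simpa [Real.dist_eq] using this
  have key2 : ∀ x y : ℝ, |Real.cos x - Real.cos y| ≤ |x - y| := fun x y => by
    have := Real.lipschitzWith_cos.dist_le_mul x y
    simpa [Real.dist_eq] using this
  rcases h with ⟨rfl, rfl, hk, rfl⟩ | ⟨rfl, rfl, hk, rfl⟩
  · simp only [SE.sk, one_mul, zero_mul, add_zero]
    refine le_min ((key _ _).trans e) ?_
    have a1 := Real.sin_le_one (2 * Real.pi * n * α)
    have a2 := Real.neg_one_le_sin (2 * Real.pi * n * α)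
    have a3 := Real.sin_le_one (2 * Real.pi * n * (1 / 3))
    have a4 := Real.neg_one_le_sin (2 * Real.pi * n * (1 / 3))
    rw [abs_le]; constructor <;> linarith
  · simp only [SE.sk, one_mul, zero_mul, zero_add]
    rw [sub_sub_sub_cancel_left]
    refine le_min ((key2 _ _).trans ?_) ?_
    · rw [abs_sub_comm]; exact e
    have a1 := Real.cos_le_one (2 * Real.pi * n * α)
    have a2 := Real.neg_one_le_cos (2 * Real.pi * n * α)
    have a3 := Real.cos_le_one (2 * Real.pi * n * (1 / 3))
    have a4 := Real.neg_one_le_cos (2 * Real.pi * n * (1 / 3))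
    rw [abs_le]; constructor <;> linarith

lemma tsum_trunc (f : ℕ → ℝ) (C : ℝ) (hC : 0 ≤ C) (hf : ∀ k, |f k| ≤ C * (1 / (k:ℝ) ^ 2)) (M : ℕ) (hM : 1 ≤ M) :
    |∑' k, f k - ∑ k ∈ Icc 1 M, f k| ≤ C / M := by
  have hs : Summable f := by
    refine Summable.of_norm_bounded (g := fun k : ℕ => C * (1 / (k:ℝ) ^ 2)) ?_ (fun k => by simpa using hf k)
    exact (Real.summable_one_div_nat_pow.2 (by norm_num)).mul_left C
  have h0 : f 0 = 0 := by
    have := hf 0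
    simpa using this
  have ht := (hs.hasSum.tendsto_sum_nat.comp (tendsto_add_atTop_nat 1)).sub_const (∑ k ∈ Icc 1 M, f k)
  refine le_of_tendsto ht.abs ?_
  filter_upwards [eventually_ge_atTop M] with n hn
  have e : ∑ k ∈ range (n + 1), f k = ∑ k ∈ Icc 1 M, f k + ∑ k ∈ Ioc M n, f k := by
    rw [← sum_union]
    · symm
      apply sum_subset
      · intro k hk
        simp only [mem_union, mem_Icc, mem_Ioc, mem_range] at hk ⊢
        omega
      · intro k hk hk2
        simp only [mem_union, mem_Icc, mem_Ioc, mem_range] at hk hk2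
        have : k = 0 := by omega
        rw [this, h0]
    · rw [disjoint_left]; intro x; simp only [mem_Icc, mem_Ioc]; omega
  simp only [Function.comp]
  rw [e, add_sub_cancel_left]
  calc |∑ k ∈ Ioc M n, f k| ≤ ∑ k ∈ Ioc M n, C * (1 / (k:ℝ) ^ 2) :=
        (abs_sum_le_sum_abs _ _).trans (sum_le_sum fun k _ => hf k)
    _ ≤ C * (1 / M) := by
      rw [← mul_sum]
      gcongr
      exact VB.inv_sq_tail M n hM
    _ = C / M := by ring

lemma two_split (K : ℕ) (χ x : ℕ → ℝ) (ε : ℝ) (hχ : ∀ n, χ (2 * n) = χ 2 * χ n)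
    (hx : ∀ n, x (2 * n) = ε * x n) (h3 : ∀ n, n % 3 = 0 → x n = 0) :
    (1 - ε * χ 2 / 2) * ∑ n ∈ Icc 1 K, x n / n * χ n =
      ∑ n ∈ (Icc 1 K).filter (fun n => Nat.Coprime n 6), x n / n * χ n
      - ∑ n ∈ (Ioc K (2 * K)).filter (fun n => n % 2 = 0), x n / n * χ n := by
  have h1 : ε * χ 2 / 2 * ∑ n ∈ Icc 1 K, x n / n * χ n =
      ∑ n ∈ (Icc 1 (2 * K)).filter (fun n => n % 2 = 0), x n / n * χ n := by
    have : (Icc 1 (2 * K)).filter (fun n => n % 2 = 0) = (Icc 1 K).image (fun n => 2 * n) := by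
      ext m
      simp only [mem_filter, mem_Icc, mem_image]
      constructor
      · intro h; exact ⟨m / 2, by omega, by omega⟩
      · rintro ⟨n, hn, rfl⟩; omega
    rw [this, sum_image (by intro a _ b _ h; dsimp at h; omega), mul_sum]
    refine sum_congr rfl fun n hn => ?_
    rw [hχ, hx]
    have : (n:ℝ) ≠ 0 := by
      have := (mem_Icc.1 hn).1
      positivity
    push_cast
    field_simp
  have h2 : ∑ n ∈ (Icc 1 (2 * K)).filter (fun n => n % 2 = 0), x n / n * χ n =
      ∑ n ∈ (Icc 1 K).filter (fun n => n % 2 = 0), x n / n * χ n +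
      ∑ n ∈ (Ioc K (2 * K)).filter (fun n => n % 2 = 0), x n / n * χ n := by
    rw [← sum_union]
    · congr 1
      ext m; simp only [mem_filter, mem_Icc, mem_union, mem_Ioc]; omega
    · rw [disjoint_left]; intro m; simp only [mem_filter, mem_Icc, mem_Ioc]; omega
  have h4 : ∑ n ∈ Icc 1 K, x n / n * χ n = ∑ n ∈ (Icc 1 K).filter (fun n => n % 2 = 0), x n / n * χ n +
      ∑ n ∈ (Icc 1 K).filter (fun n => Nat.Coprime n 6), x n / n * χ n := by
    rw [← sum_filter_add_sum_filter_not (Icc 1 K) (fun n => n % 2 = 0)]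
    congr 1
    symm
    apply sum_subset
    · intro n hn
      rw [mem_filter] at hn ⊢
      refine ⟨hn.1, fun h0 => ?_⟩
      have := Nat.dvd_gcd (Nat.dvd_of_mod_eq_zero h0) (show 2 ∣ 6 by norm_num)
      rw [hn.2] at this
      omega
    · intro n hn hn2
      rw [mem_filter] at hn hn2
      have : n % 3 = 0 := by
        by_contra h
        apply hn2
        refine ⟨hn.1, ?_⟩
        rw [show 6 = 2 * 3 by norm_num]
        apply Nat.Coprime.mul_right
        · exact ((Nat.Prime.coprime_iff_not_dvd Nat.prime_two).2 (by omega)).symm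
        · exact ((Nat.Prime.coprime_iff_not_dvd Nat.prime_three).2 (by omega)).symm
      rw [h3 n this]; ring
  rw [sub_mul, one_mul, h1, h2, h4]
  ring

lemma cauchy4 (a b d e : ℝ) : (a + b + d + e) ^ 2 ≤ a ^ 2 / 0.78 + b ^ 2 / 0.2 + d ^ 2 / 0.01 + e ^ 2 / 0.01 := by
  have : a ^ 2 / 0.78 + b ^ 2 / 0.2 + d ^ 2 / 0.01 + e ^ 2 / 0.01 - (a + b + d + e) ^ 2 =
     0.78 * 0.2 * (a / 0.78 - b / 0.2) ^ 2 + 0.78 * 0.01 * (a / 0.78 - d / 0.01) ^ 2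
     + 0.78 * 0.01 * (a / 0.78 - e / 0.01) ^ 2 + 0.2 * 0.01 * (b / 0.2 - d / 0.01) ^ 2
     + 0.2 * 0.01 * (b / 0.2 - e / 0.01) ^ 2 + 0.01 * 0.01 * (d / 0.01 - e / 0.01) ^ 2 := by ring
  have : 0 ≤ 0.78 * 0.2 * (a / 0.78 - b / 0.2) ^ 2 + 0.78 * 0.01 * (a / 0.78 - d / 0.01) ^ 2
     + 0.78 * 0.01 * (a / 0.78 - e / 0.01) ^ 2 + 0.2 * 0.01 * (b / 0.2 - d / 0.01) ^ 2
     + 0.2 * 0.01 * (b / 0.2 - e / 0.01) ^ 2 + 0.01 * 0.01 * (d / 0.01 - e / 0.01) ^ 2 := by positivity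
  linarith

/-- If the main combination is negative then the variance quantities are large. -/
lemma bad_ineq (κ c P X A' Lf Y R e : ℝ) (hκ : 0 < κ) (hc : 1.06 * κ ≤ c) (hP1 : 1 / 2 ≤ P) (hP2 : P ≤ 3 / 2)
    (hX : P * X = c + A' - Lf) (hneg : X + Y + R + e < 0) (he : |e| ≤ κ / 300) :
    0.98 * c ^ 2 ≤ A' ^ 2 / 0.78 + 11.25 * Y ^ 2 + 100 * Lf ^ 2 + 225 * R ^ 2 := by
  have h1 : P * (X + Y + R + e) ≤ 0 := mul_nonpos_of_nonneg_of_nonpos (by linarith) hneg.le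
  have hb : ∀ z : ℝ, -(P * z) ≤ 3 / 2 * |z| := fun z => by
    calc -(P * z) = P * (-z) := by ring
      _ ≤ P * |z| := by gcongr; exact neg_le_abs z
      _ ≤ _ := by gcongr
  have h2 : c ≤ |A'| + 3 / 2 * |Y| + |Lf| + 3 / 2 * |R| + 3 / 2 * (κ / 300) := by
    have := hb Y
    have := hb R
    have := hb e
    have := neg_abs_le A'
    have := le_abs_self Lf
    nlinarith
  have h3 : 105 / 106 * c ≤ |A'| + 3 / 2 * |Y| + |Lf| + 3 / 2 * |R| := by linarith
  have h4 := cauchy4 |A'| (3 / 2 * |Y|) |Lf| (3 / 2 * |R|)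
  rw [mul_pow, mul_pow] at h4
  simp only [sq_abs] at h4
  have hc0 : 0 ≤ c := by linarith
  have h5 : (105 / 106 * c) ^ 2 ≤ (|A'| + 3 / 2 * |Y| + |Lf| + 3 / 2 * |R|) ^ 2 := by gcongr
  have h7 : 0.98 * c ^ 2 ≤ (105 / 106 * c) ^ 2 := by
    rw [mul_pow]; gcongr; norm_num
  refine h7.trans (h5.trans (h4.trans (le_of_eq ?_)))
  ring

end FA

namespace FA
open Finset Filter Topology NumberTheorySymbols

lemma unif_one (u v : ℝ) (huv : u ^ 2 + v ^ 2 = 1) (α : ℝ) (h0 : 0 ≤ α) (h1 : α ≤ 1 / 2)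
    (N p : ℕ) [Fact p.Prime] (hp2 : p ≠ 2) (hre : (GS.sg p).re = u) (him : (GS.sg p).im = v)
    (hN : 16 ≤ N) (hp : (N:ℝ) ^ (0.95:ℝ) < p) (hpN : p ≤ N) :
    |Real.pi * (legendreSum α p : ℝ) / √p -
      ∑ n ∈ Icc 1 ⌊(N:ℝ) ^ (0.6:ℝ)⌋₊, Real.pi * SE.ak u v α ((N:ℝ) ^ (-0.55:ℝ)) n * ((J((n:ℤ) | p) : ℤ) : ℝ)|
      ≤ 20 * (N:ℝ) ^ (-0.05:ℝ) := by
  have hN1 : (16:ℝ) ≤ N := by exact_mod_cast hN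
  have hN0 : (0:ℝ) < N := by linarith
  set h := (N:ℝ) ^ (-0.55:ℝ) with hh
  set M := ⌊(N:ℝ) ^ (0.6:ℝ)⌋₊ with hM
  have hpi := Real.pi_pos
  have hpi3 := Real.pi_gt_three
  have hpi4 := Real.pi_lt_four
  have hhpos : 0 < h := by positivity
  have hhlt : h < 1 / 2 := by
    calc h ≤ (N:ℝ) ^ (-(1/2):ℝ) := by
          rw [hh]; apply Real.rpow_le_rpow_of_exponent_le (by linarith); norm_num
      _ ≤ (16:ℝ) ^ (-(1/2):ℝ) := by
          apply Real.rpow_le_rpow_of_nonpos (by norm_num) hN1; norm_num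
      _ = 1 / 4 := by
          rw [show (16:ℝ) = 4 ^ (2:ℝ) by norm_num, ← Real.rpow_mul (by norm_num)]; norm_num
      _ < 1 / 2 := by norm_num
  have hM6 : (N:ℝ) ^ (0.6:ℝ) / 2 ≤ M := by
    have a1 : (N:ℝ) ^ (0.6:ℝ) < M + 1 := Nat.lt_floor_add_one _
    have a2 : (2:ℝ) ≤ (N:ℝ) ^ (0.6:ℝ) := by
      calc (2:ℝ) ≤ 4 := by norm_num
        _ = (16:ℝ) ^ ((1/2):ℝ) := by
          rw [show (16:ℝ) = 4 ^ (2:ℝ) by norm_num, ← Real.rpow_mul (by norm_num)]; norm_num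
        _ ≤ (N:ℝ) ^ ((1/2):ℝ) := by gcongr
        _ ≤ _ := by apply Real.rpow_le_rpow_of_exponent_le (by linarith); norm_num
    linarith
  have hN6 : (0:ℝ) < (N:ℝ) ^ (0.6:ℝ) := by positivity
  have hM0 : (0:ℝ) < M := by linarith
  have hM1 : 1 ≤ M := by exact_mod_cast hM0
  have ex := SE.expand p hp2 α h h0 hhpos (by linarith)
  rw [hre, him] at ex
  have tr := tsum_trunc (fun k : ℕ => (legendreSym p k : ℝ) * SE.ak u v α h k) (2 / (h * Real.pi ^ 2)) (by positivity)
    (fun k => by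
      rw [abs_mul]
      calc _ ≤ 1 * |SE.ak u v α h k| := by gcongr; exact SE.chi_abs_le p k
        _ ≤ _ := by rw [one_mul]; exact SE.ak_bound1 u v huv α h hhpos k) M hM1
  set S := ∑' k : ℕ, (legendreSym p k : ℝ) * SE.ak u v α h k with hS
  set S1 := ∑ k ∈ Icc 1 M, (legendreSym p k : ℝ) * SE.ak u v α h k with hS1
  have e : ∑ n ∈ Icc 1 M, Real.pi * SE.ak u v α h n * ((J((n:ℤ) | p) : ℤ) : ℝ) = Real.pi * S1 := by
    rw [hS1, mul_sum]
    refine sum_congr rfl fun n _ => ?_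
    rw [jacobiSym.legendreSym.to_jacobiSym]
    ring
  rw [e]
  have hp0 : (0:ℝ) < p := by exact_mod_cast (Fact.out : p.Prime).pos
  have hpN' : (p:ℝ) ≤ N := by exact_mod_cast hpN
  have hsp : 0 < √(p:ℝ) := Real.sqrt_pos.2 hp0
  have b1 : |Real.pi * (legendreSum α p : ℝ) / √p - Real.pi * S| ≤ Real.pi * (2 * (h * p + 1)) / √p := by
    have : Real.pi * (legendreSum α p : ℝ) / √p - Real.pi * S = Real.pi * ((legendreSum α p : ℝ) - √p * S) / √p := by
      field_simp
    rw [this, abs_div, abs_mul, abs_of_pos hpi, abs_of_pos hsp]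
    gcongr
  have b2 : |Real.pi * S - Real.pi * S1| ≤ Real.pi * (2 / (h * Real.pi ^ 2) / M) := by
    rw [← mul_sub, abs_mul, abs_of_pos hpi]
    gcongr
  set z := (N:ℝ) ^ (-0.05:ℝ) with hz
  have hz0 : 0 < z := by positivity
  have c1 : h * p / √p ≤ z := by
    calc h * p / √p = h * √p := by
          rw [mul_div_assoc, Real.div_sqrt]
      _ ≤ h * (N:ℝ) ^ ((1/2):ℝ) := by
          rw [← Real.sqrt_eq_rpow]; gcongr
      _ = z := by rw [hh, ← Real.rpow_add hN0, hz]; norm_num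
  have c2 : 1 / √p ≤ z := by
    have : (N:ℝ) ^ (0.05:ℝ) ≤ √p := by
      calc (N:ℝ) ^ (0.05:ℝ) ≤ (N:ℝ) ^ (0.475:ℝ) := by
            apply Real.rpow_le_rpow_of_exponent_le (by linarith); norm_num
        _ = √((N:ℝ) ^ (0.95:ℝ)) := by
            rw [Real.sqrt_eq_rpow, ← Real.rpow_mul hN0.le]; norm_num
        _ ≤ √p := Real.sqrt_le_sqrt hp.le
    rw [hz, Real.rpow_neg hN0.le, ← one_div]
    gcongr
  have c3 : 1 / (h * M) ≤ 2 * z := by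
    have e1 : h * ((N:ℝ) ^ (0.6:ℝ) / 2) = (N:ℝ) ^ (0.05:ℝ) / 2 := by
      rw [hh, ← mul_div_assoc, ← Real.rpow_add hN0]; norm_num
    calc 1 / (h * M) ≤ 1 / (h * ((N:ℝ) ^ (0.6:ℝ) / 2)) := by gcongr
      _ = 2 * z := by
        rw [e1, hz, Real.rpow_neg hN0.le]; field_simp
  have d1 : Real.pi * (2 * (h * p + 1)) / √p ≤ 4 * (2 * (z + z)) := by
    calc _ = Real.pi * (2 * (h * p / √p + 1 / √p)) := by field_simp
      _ ≤ _ := by gcongr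
  have d2 : Real.pi * (2 / (h * Real.pi ^ 2) / M) ≤ 2 / 3 * (2 * z) := by
    calc _ = 2 / Real.pi * (1 / (h * M)) := by field_simp
      _ ≤ _ := by gcongr
  calc _ ≤ |Real.pi * (legendreSum α p : ℝ) / √p - Real.pi * S| + |Real.pi * S - Real.pi * S1| := abs_sub_le _ _ _
    _ ≤ _ := by linarith

lemma tend_neg (a : ℝ) (ha : 0 < a) : Tendsto (fun N : ℕ => (N:ℝ) ^ (-a)) atTop (𝓝 0) :=
  (tendsto_rpow_neg_atTop ha).comp tendsto_natCast_atTop_atTop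

lemma unif (u v : ℝ) (huv : u ^ 2 + v ^ 2 = 1) (α : ℝ) (h0 : 0 ≤ α) (h1 : α ≤ 1 / 2) (K : ℕ) (η : ℝ) (hη : 0 < η) :
    ∀ᶠ N : ℕ in atTop, ∀ p : ℕ, p.Prime → p ≠ 2 → (GS.sg p).re = u → (GS.sg p).im = v →
      (N:ℝ) ^ (0.95:ℝ) < p → p ≤ N →
      |Real.pi * (legendreSum α p : ℝ) / √p -
        (∑ n ∈ Icc 1 K, SE.sk u v n α / n * ((J((n:ℤ) | p) : ℤ) : ℝ) +
        ∑ n ∈ Ioc K ⌊(N:ℝ) ^ (0.6:ℝ)⌋₊, Real.pi * SE.ak u v α ((N:ℝ) ^ (-0.55:ℝ)) n * ((J((n:ℤ) | p) : ℤ) : ℝ))|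
      ≤ η := by
  have t1 : Tendsto (fun N : ℕ => 20 * (N:ℝ) ^ (-0.05:ℝ)) atTop (𝓝 (20 * 0)) := (tend_neg 0.05 (by norm_num)).const_mul 20
  have t2 : Tendsto (fun N : ℕ => (N:ℝ) ^ (-0.55:ℝ)) atTop (𝓝[>] 0) := by
    refine tendsto_nhdsWithin_iff.2 ⟨tend_neg 0.55 (by norm_num), ?_⟩
    filter_upwards [eventually_gt_atTop 0] with N hN
    have : (0:ℝ) < N := by exact_mod_cast hN
    exact Real.rpow_pos_of_pos this _
  have t3 : Tendsto (fun N : ℕ => ∑ n ∈ Icc 1 K, |Real.pi * SE.ak u v α ((N:ℝ) ^ (-0.55:ℝ)) n - SE.sk u v n α / n|)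
      atTop (𝓝 (∑ n ∈ Icc 1 K, |SE.sk u v n α / n - SE.sk u v n α / n|)) :=
    tendsto_finset_sum _ fun n _ => (((SE.ak_lim u v α n).comp t2).sub_const _).abs
  simp only [sub_self, abs_zero, sum_const_zero, mul_zero] at t1 t3
  have t4 : ∀ᶠ N : ℕ in atTop, K ≤ ⌊(N:ℝ) ^ (0.6:ℝ)⌋₊ :=
    (tendsto_nat_floor_atTop.comp ((tendsto_rpow_atTop (by norm_num : (0:ℝ) < 0.6)).comp tendsto_natCast_atTop_atTop)).eventually_ge_atTop K
  filter_upwards [t1.eventually_le_const (half_pos hη), t3.eventually_le_const (half_pos hη), t4,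
    eventually_ge_atTop 16] with N e1 e2 e3 hN p hp hp2 hre him hpl hpN
  haveI : Fact p.Prime := ⟨hp⟩
  have b1 := unif_one u v huv α h0 h1 N p hp2 hre him hN hpl hpN
  set M := ⌊(N:ℝ) ^ (0.6:ℝ)⌋₊
  set h := (N:ℝ) ^ (-0.55:ℝ)
  have sp : ∑ n ∈ Icc 1 M, Real.pi * SE.ak u v α h n * ((J((n:ℤ) | p) : ℤ) : ℝ) =
      ∑ n ∈ Icc 1 K, Real.pi * SE.ak u v α h n * ((J((n:ℤ) | p) : ℤ) : ℝ) +
      ∑ n ∈ Ioc K M, Real.pi * SE.ak u v α h n * ((J((n:ℤ) | p) : ℤ) : ℝ) := by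
    rw [← sum_union]
    · congr 1; ext m; simp only [mem_union, mem_Icc, mem_Ioc]; omega
    · rw [disjoint_left]; intro m; simp only [mem_Icc, mem_Ioc]; omega
  rw [sp] at b1
  set R := ∑ n ∈ Ioc K M, Real.pi * SE.ak u v α h n * ((J((n:ℤ) | p) : ℤ) : ℝ)
  have b2 : |∑ n ∈ Icc 1 K, Real.pi * SE.ak u v α h n * ((J((n:ℤ) | p) : ℤ) : ℝ) -
      ∑ n ∈ Icc 1 K, SE.sk u v n α / n * ((J((n:ℤ) | p) : ℤ) : ℝ)| ≤ η / 2 := by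
    rw [← sum_sub_distrib]
    refine (abs_sum_le_sum_abs _ _).trans (le_trans (sum_le_sum fun n _ => ?_) e2)
    rw [← sub_mul, abs_mul]
    refine mul_le_of_le_one_right (abs_nonneg _) ?_
    rw [← jacobiSym.legendreSym.to_jacobiSym]
    exact SE.chi_abs_le p n
  rw [abs_le] at b1 b2 ⊢
  constructor <;> linarith [b1.1, b1.2, b2.1, b2.2]

end FA

namespace FA
open Finset Filter Topology NumberTheorySymbols

lemma half_bd (z : ℝ) (h : -1 ≤ z ∧ z ≤ 1) : 1 / 2 ≤ 1 - z / 2 ∧ 1 - z / 2 ≤ 3 / 2 := by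
  constructor <;> linarith [h.1, h.2]

/-- per-prime inequality for the bad primes -/
lemma bad_prime (u v κ ε : ℝ) (hG : Good u v κ ε) (α : ℝ) (K : ℕ) (hK : 49 ≤ K) (p : ℕ) (hp : p.Prime)
    (hKp : K < p) (hL : legendreSum α p < 0) (R : ℝ)
    (hu : |Real.pi * (legendreSum α p : ℝ) / √p -
        (∑ n ∈ Icc 1 K, SE.sk u v n α / n * ((J((n:ℤ) | p) : ℤ) : ℝ) + R)| ≤ κ / 300) :
    0.98 * (∑ n ∈ (Icc 1 K).filter (fun n => Nat.Coprime n 6 ∧ VB.sf n = 1), κ / n) ^ 2 ≤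
      (∑ n ∈ (Icc 1 K).filter (fun n => Nat.Coprime n 6 ∧ VB.sf n ≠ 1),
        SE.sk u v n (1 / 3) / n * ((J((n:ℤ) | p) : ℤ) : ℝ)) ^ 2 / 0.78
      + 11.25 * (∑ n ∈ Icc 1 K, (SE.sk u v n α - SE.sk u v n (1 / 3)) / n * ((J((n:ℤ) | p) : ℤ) : ℝ)) ^ 2
      + 100 * (∑ n ∈ (Ioc K (2 * K)).filter (fun n => n % 2 = 0),
        SE.sk u v n (1 / 3) / n * ((J((n:ℤ) | p) : ℤ) : ℝ)) ^ 2
      + 225 * R ^ 2 := by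
  haveI : Fact p.Prime := ⟨hp⟩
  have hκ := hG.kap.1
  have hc := VB.c_ge K hK κ hκ.le
  set c := ∑ n ∈ (Icc 1 K).filter (fun n => Nat.Coprime n 6 ∧ VB.sf n = 1), κ / n with hcdef
  set A' := ∑ n ∈ (Icc 1 K).filter (fun n => Nat.Coprime n 6 ∧ VB.sf n ≠ 1),
        SE.sk u v n (1 / 3) / n * ((J((n:ℤ) | p) : ℤ) : ℝ) with hA'
  set Y := ∑ n ∈ Icc 1 K, (SE.sk u v n α - SE.sk u v n (1 / 3)) / n * ((J((n:ℤ) | p) : ℤ) : ℝ) with hY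
  set Lf := ∑ n ∈ (Ioc K (2 * K)).filter (fun n => n % 2 = 0),
        SE.sk u v n (1 / 3) / n * ((J((n:ℤ) | p) : ℤ) : ℝ) with hLf
  set X := ∑ n ∈ Icc 1 K, SE.sk u v n (1 / 3) / n * ((J((n:ℤ) | p) : ℤ) : ℝ) with hX
  have hXY : ∑ n ∈ Icc 1 K, SE.sk u v n α / n * ((J((n:ℤ) | p) : ℤ) : ℝ) = X + Y := by
    rw [hX, hY, ← sum_add_distrib]
    refine sum_congr rfl fun n _ => ?_
    ring
  rw [hXY] at hu
  set l := Real.pi * (legendreSum α p : ℝ) / √p with hl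
  have hp0 : (0:ℝ) < p := by exact_mod_cast hp.pos
  have hl0 : l < 0 := by
    have : (legendreSum α p : ℝ) < 0 := by exact_mod_cast hL
    exact div_neg_of_neg_of_pos (mul_neg_of_pos_of_neg Real.pi_pos this) (Real.sqrt_pos.2 hp0)
  have hχ2 : |ε * ((J(((2:ℕ):ℤ) | p) : ℤ) : ℝ)| ≤ 1 := by
    rw [abs_mul, hG.eps, one_mul, ← jacobiSym.legendreSym.to_jacobiSym]
    exact SE.chi_abs_le p _
  have two := two_split K (fun n => ((J((n:ℤ) | p) : ℤ) : ℝ)) (fun n => SE.sk u v n (1 / 3)) ε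
    (fun n => by
      rw [Nat.cast_mul, jacobiSym.mul_left]; push_cast; rfl) hG.two (fun n hn => Good.zero n hn)
  have hsplit : ∑ n ∈ (Icc 1 K).filter (fun n => Nat.Coprime n 6), SE.sk u v n (1 / 3) / n * ((J((n:ℤ) | p) : ℤ) : ℝ)
      = c + A' := by
    rw [← sum_filter_add_sum_filter_not _ (fun n => VB.sf n = 1), filter_filter, filter_filter, hcdef]
    congr 1
    refine sum_congr rfl fun n hn => ?_
    simp only [mem_filter, mem_Icc] at hn
    obtain ⟨⟨h1, h2⟩, h3, h4⟩ := hn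
    rw [hG.sq n h4 h3, VB.J_core p hp n h1 (by omega), h4, Nat.cast_one, jacobiSym.one_left]
    simp
  rw [hsplit] at two
  rw [abs_le] at hχ2
  refine bad_ineq κ c (1 - ε * ((J(((2:ℕ):ℤ) | p) : ℤ) : ℝ) / 2) X A' Lf Y R (l - (X + Y + R)) hκ hc
    (half_bd _ hχ2).1 (half_bd _ hχ2).2 two (by linarith) hu

theorem class_bad (α : ℝ) (hα : |α - 1 / 3| ≤ 2 / 10 ^ 6) (r : ℕ) (hr : r = 1 ∨ r = 3) :
    ∀ᶠ N : ℕ in atTop,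
      (((range (N + 1)).filter (fun p => (p.Prime ∧ p % 4 = r ∧ (N:ℝ) ^ (0.95:ℝ) < p) ∧ legendreSum α p < 0)).card : ℝ)
        ≤ 0.17 * (N / Real.log N) := by
  obtain ⟨u, v, κ, ε, hG, hsg⟩ : ∃ u v κ ε : ℝ, Good u v κ ε ∧
      ∀ p : ℕ, p % 4 = r → (GS.sg p).re = u ∧ (GS.sg p).im = v := by
    rcases hr with rfl | rfl
    · exact ⟨1, 0, √3 / 2, -1, Or.inl ⟨rfl, rfl, rfl, rfl⟩, fun p hp => by rw [GS.sg_one p hp]; simp⟩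
    · exact ⟨0, 1, 3 / 2, 1, Or.inr ⟨rfl, rfl, rfl, rfl⟩, fun p hp => by rw [GS.sg_three p hp]; simp⟩
  obtain ⟨K0, hK0⟩ := VB.ff_tail (0.000001 / 8) (by norm_num)
  obtain ⟨K, hK49, hKK0⟩ : ∃ K, 49 ≤ K ∧ K0 ≤ K := ⟨max 49 K0, le_max_left _ _, le_max_right _ _⟩
  have hα' := abs_le.1 hα
  obtain ⟨hκ0, hκ1, hκ2⟩ := hG.kap
  have huv := hG.uv
  have hpi := Real.pi_pos
  have U := unif u v huv α (by norm_num at hα'; linarith [hα'.1]) (by norm_num at hα'; linarith [hα'.2]) K (κ / 300) (by positivity)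
  have M1 := VB.msT 0.48 0.01 1.05 0.000001 (by norm_num) (by norm_num) (by norm_num) (by norm_num) (by norm_num) (by norm_num) (by norm_num)
  have M2 := VB.msT 0.1 0.6 5.1 0.000001 (by norm_num) (by norm_num) (by norm_num) (by norm_num) (by norm_num) (by norm_num) (by norm_num)
  have t4 : ∀ᶠ N : ℕ in atTop, ((2 * K : ℕ) : ℝ) ≤ (N:ℝ) ^ (0.01:ℝ) :=
    ((tendsto_rpow_atTop (by norm_num : (0:ℝ) < 0.01)).comp tendsto_natCast_atTop_atTop).eventually_ge_atTop _
  filter_upwards [U, M1, M2, t4, eventually_ge_atTop 16] with N hU hM1 hM2 hKN hN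
  have hN1 : (16:ℝ) ≤ N := by exact_mod_cast hN
  set Q := (range (N + 1)).filter (fun p => p.Prime ∧ p % 4 = r ∧ (N:ℝ) ^ (0.95:ℝ) < p) with hQ
  set M := ⌊(N:ℝ) ^ (0.6:ℝ)⌋₊ with hM
  set h := (N:ℝ) ^ (-0.55:ℝ) with hh
  have hh0 : 0 < h := by positivity
  set TA := (Icc 1 K).filter (fun n => Nat.Coprime n 6 ∧ VB.sf n ≠ 1) with hTA
  set TL := (Ioc K (2 * K)).filter (fun n => n % 2 = 0) with hTL
  set c := ∑ n ∈ (Icc 1 K).filter (fun n => Nat.Coprime n 6 ∧ VB.sf n = 1), κ / n with hc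
  have hcge : 1.06 * κ ≤ c := VB.c_ge K hK49 κ hκ0.le
  have hle : ∀ n : ℕ, n ≤ 2 * K → (n:ℝ) ≤ (N:ℝ) ^ (0.01:ℝ) := fun n hn => le_trans (by exact_mod_cast hn) hKN
  have wx : ∀ n : ℕ, |SE.sk u v n (1 / 3) / n| ≤ κ / n := fun n => by
    rw [abs_div, Nat.abs_cast]; gcongr; exact hG.abs n
  have wx2 : ∀ n : ℕ, |SE.sk u v n (1 / 3) / n| ≤ 2 / n := fun n => (wx n).trans (by gcongr)
  have hD : 2 * Real.pi * |α - 1 / 3| ≤ 0.000012567 := by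
    have := Real.pi_lt_d6
    calc 2 * Real.pi * |α - 1 / 3| ≤ 2 * 3.141593 * (2 / 10 ^ 6) := by gcongr
      _ ≤ _ := by norm_num
  have wy : ∀ n : ℕ, |(SE.sk u v n α - SE.sk u v n (1 / 3)) / n| ≤ min (0.000012567 * (n:ℝ)) 2 / n := fun n => by
    rw [abs_div, Nat.abs_cast]; gcongr; exact hG.diff α _ hD n
  have wy2 : ∀ n : ℕ, |(SE.sk u v n α - SE.sk u v n (1 / 3)) / n| ≤ 2 / n := fun n => (wy n).trans (by gcongr; exact min_le_right _ _)
  have wr : ∀ n : ℕ, |Real.pi * SE.ak u v α h n| ≤ 2 / n := fun n => by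
    rw [abs_mul, abs_of_pos hpi]
    calc _ ≤ Real.pi * (2 / Real.pi / n) := by gcongr; exact SE.ak_bound2 u v huv α h hh0 n
      _ = 2 / n := by field_simp
  have vA := VB.VV_A K κ hκ0.le (fun n => SE.sk u v n (1 / 3) / n) (fun n _ => wx n)
  have vY := VB.VV_Y (Icc 1 K) (fun n hn => (mem_Icc.1 hn).1) (fun n => (SE.sk u v n α - SE.sk u v n (1 / 3)) / n)
    0.000012567 (by norm_num) le_rfl (fun n _ => wy n)
  have vL : VB.VV TL (fun n => SE.sk u v n (1 / 3) / n) ≤ 0.000001 := by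
    have hm : ∀ n ∈ TL, K < n := fun n hn => (mem_Ioc.1 (mem_filter.1 hn).1).1
    have a := VB.VV_tail TL (fun n => SE.sk u v n (1 / 3) / n) 2 (by norm_num) (fun n hn => by have := hm n hn; omega) (fun n _ => wx2 n)
    have b := hK0 TL (fun n hn => by have := hm n hn; omega)
    norm_num at a b ⊢; linarith
  have vR : VB.VV (Ioc K M) (fun n => Real.pi * SE.ak u v α h n) ≤ 0.000001 := by
    have hm : ∀ n ∈ Ioc K M, K < n := fun n hn => (mem_Ioc.1 hn).1
    have a := VB.VV_tail (Ioc K M) (fun n => Real.pi * SE.ak u v α h n) 2 (by norm_num) (fun n hn => by have := hm n hn; omega) (fun n _ => wr n)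
    have b := hK0 (Ioc K M) (fun n hn => by have := hm n hn; omega)
    norm_num at a b ⊢; linarith
  have sA := hM1 TA (fun n => SE.sk u v n (1 / 3) / n) r hr (fun n hn => by
    have := mem_Icc.1 (mem_filter.1 hn).1
    exact ⟨this.1, hle n (by omega)⟩) (fun n _ => wx2 n)
  have sY := hM1 (Icc 1 K) (fun n => (SE.sk u v n α - SE.sk u v n (1 / 3)) / n) r hr (fun n hn => by
    have := mem_Icc.1 hn
    exact ⟨this.1, hle n (by omega)⟩) (fun n _ => wy2 n)
  have sL := hM1 TL (fun n => SE.sk u v n (1 / 3) / n) r hr (fun n hn => by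
    have := mem_Ioc.1 (mem_filter.1 hn).1
    exact ⟨by omega, hle n (by omega)⟩) (fun n _ => wx2 n)
  have sR := hM2 (Ioc K M) (fun n => Real.pi * SE.ak u v α h n) r hr (fun n hn => by
    have := mem_Ioc.1 hn
    refine ⟨by omega, ?_⟩
    calc (n:ℝ) ≤ M := by exact_mod_cast this.2
      _ ≤ _ := Nat.floor_le (by positivity)) (fun n _ => wr n)
  rw [← hQ] at sA sY sL sR
  rw [← filter_filter, ← hQ]
  set B := Q.filter (fun p => legendreSum α p < 0) with hB
  set fA := fun p : ℕ => ∑ n ∈ TA, SE.sk u v n (1 / 3) / n * ((J((n:ℤ) | p) : ℤ) : ℝ)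
  set fY := fun p : ℕ => ∑ n ∈ Icc 1 K, (SE.sk u v n α - SE.sk u v n (1 / 3)) / n * ((J((n:ℤ) | p) : ℤ) : ℝ)
  set fL := fun p : ℕ => ∑ n ∈ TL, SE.sk u v n (1 / 3) / n * ((J((n:ℤ) | p) : ℤ) : ℝ)
  set fR := fun p : ℕ => ∑ n ∈ Ioc K M, Real.pi * SE.ak u v α h n * ((J((n:ℤ) | p) : ℤ) : ℝ)
  set G := (N:ℝ) / Real.log N with hGdef
  have hG0 : 0 ≤ G := div_nonneg (by linarith) (Real.log_nonneg (by linarith))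
  have key : (B.card : ℝ) * (0.98 * c ^ 2) ≤
      (∑ p ∈ Q, fA p ^ 2) / 0.78 + 11.25 * ∑ p ∈ Q, fY p ^ 2 + 100 * ∑ p ∈ Q, fL p ^ 2 + 225 * ∑ p ∈ Q, fR p ^ 2 := by
    rw [← nsmul_eq_mul, ← sum_const, sum_div, mul_sum, mul_sum, mul_sum, ← sum_add_distrib, ← sum_add_distrib, ← sum_add_distrib]
    refine le_trans (sum_le_sum fun p hp => ?_) (sum_le_sum_of_subset_of_nonneg (filter_subset _ _) (fun _ _ _ => by positivity))
    rw [hB, mem_filter, hQ, mem_filter, mem_range] at hp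
    obtain ⟨⟨hpN, hpp, hp4, hpl⟩, hneg⟩ := hp
    have hs := hsg p hp4
    have hKp : K < p := by
      have : (K:ℝ) < p := by
        calc (K:ℝ) ≤ (N:ℝ) ^ (0.01:ℝ) := hle K (by omega)
          _ ≤ (N:ℝ) ^ (0.95:ℝ) := by apply Real.rpow_le_rpow_of_exponent_le (by linarith); norm_num
          _ < p := hpl
      exact_mod_cast this
    exact bad_prime u v κ ε hG α K hK49 p hpp hKp hneg (fR p)
      (hU p hpp (by rintro rfl; rcases hr with rfl | rfl <;> omega) hs.1 hs.2 hpl (by omega))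
  have rA : (∑ p ∈ Q, fA p ^ 2) ≤ (1.05 * (0.0975 * c ^ 2) + 0.000001) * G := by
    refine sA.trans ?_
    rw [mul_div_assoc]; gcongr
  have rY : (∑ p ∈ Q, fY p ^ 2) ≤ (1.05 * 0.00142 + 0.000001) * G := by
    refine sY.trans ?_
    rw [mul_div_assoc]; gcongr
  have rL : (∑ p ∈ Q, fL p ^ 2) ≤ (1.05 * 0.000001 + 0.000001) * G := by
    refine sL.trans ?_
    rw [mul_div_assoc]; gcongr
  have rR : (∑ p ∈ Q, fR p ^ 2) ≤ (5.1 * 0.000001 + 0.000001) * G := by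
    refine sR.trans ?_
    rw [mul_div_assoc]; gcongr
  have hc2 : 0.8427 ≤ c ^ 2 := by
    have : (1.06 * κ) ^ 2 ≤ c ^ 2 := by gcongr
    rw [mul_pow] at this
    norm_num at this hκ1 ⊢
    linarith
  have fin : (B.card : ℝ) * (0.98 * c ^ 2) ≤ (0.17 * G) * (0.98 * c ^ 2) := by
    refine key.trans ?_
    have h1 : (1.05 * (0.0975 * c ^ 2) + 0.000001) * G / 0.78 + 11.25 * ((1.05 * 0.00142 + 0.000001) * G)
        + 100 * ((1.05 * 0.000001 + 0.000001) * G) + 225 * ((5.1 * 0.000001 + 0.000001) * G) ≤ (0.17 * G) * (0.98 * c ^ 2) := by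
      have : 0 ≤ G * (c ^ 2 - 0.8427) := mul_nonneg hG0 (by linarith)
      norm_num at this ⊢
      nlinarith
    refine le_trans ?_ h1
    gcongr
  exact le_of_mul_le_mul_right fin (by positivity)

end FA

namespace FA
open Finset Filter Topology

lemma total_bad (α : ℝ) (hα : |α - 1 / 3| ≤ 2 / 10 ^ 6) :
    ∀ᶠ N : ℕ in atTop,
      (((range (N + 1)).filter (fun p => p.Prime ∧ ¬ 0 ≤ legendreSum α p)).card : ℝ)
        ≤ 1 / 2 * (((range (N + 1)).filter Nat.Prime).card : ℝ) ∧ 0 < ((range (N + 1)).filter Nat.Prime).card := by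
  have hlog : ∀ᶠ N : ℕ in atTop, Real.log N ≤ 0.001 * (N:ℝ) ^ (0.05:ℝ) := by
    have := (isLittleO_log_rpow_atTop (show (0:ℝ) < 0.05 by norm_num)).def (show (0:ℝ) < 0.001 by norm_num)
    filter_upwards [tendsto_natCast_atTop_atTop.eventually this, eventually_ge_atTop 1] with N hN h1
    rw [Real.norm_of_nonneg (show 0 ≤ (N:ℝ) ^ (0.05:ℝ) by positivity)] at hN
    exact (le_abs_self _).trans hN
  filter_upwards [class_bad α hα 1 (Or.inl rfl), class_bad α hα 3 (Or.inr rfl), hlog, eventually_ge_atTop 16]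
    with N h1 h3 hl hN
  have hN1 : (16:ℝ) ≤ N := by exact_mod_cast hN
  have hN0 : (0:ℝ) < N := by linarith
  have hlog0 : 0 < Real.log N := Real.log_pos (by linarith)
  constructor
  swap
  · apply card_pos.2
    exact ⟨2, by simp [Nat.prime_two]; omega⟩
  have hpi : ((N:ℝ) * Real.log 2 - Real.log (N + 1)) / Real.log N ≤ (((range (N + 1)).filter Nat.Prime).card : ℝ) := by
    have := Chebyshev.pi_ge N
    rwa [Nat.primeCounting, Nat.primeCounting', Nat.count_eq_card_filter_range] at this
  set B1 : Finset ℕ := (range (N + 1)).filter (fun p : ℕ => (p.Prime ∧ p % 4 = 1 ∧ (N:ℝ) ^ (0.95:ℝ) < p) ∧ legendreSum α p < 0)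
  set B3 : Finset ℕ := (range (N + 1)).filter (fun p : ℕ => (p.Prime ∧ p % 4 = 3 ∧ (N:ℝ) ^ (0.95:ℝ) < p) ∧ legendreSum α p < 0)
  have hsub : (range (N + 1)).filter (fun p => p.Prime ∧ ¬ 0 ≤ legendreSum α p) ⊆
      B1 ∪ B3 ∪ (range (⌊(N:ℝ) ^ (0.95:ℝ)⌋₊ + 1) ∪ {2}) := by
    intro p hp
    rw [mem_filter] at hp
    obtain ⟨hr, hpp, hneg⟩ := hp
    rw [not_le] at hneg
    simp only [mem_union, mem_singleton, B1, B3, mem_filter]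
    by_cases h2 : p = 2
    · exact Or.inr (Or.inr h2)
    by_cases hs : (N:ℝ) ^ (0.95:ℝ) < p
    · left
      have := hpp.eq_two_or_odd
      have : p % 4 = 1 ∨ p % 4 = 3 := by omega
      rcases this with h | h
      · exact Or.inl ⟨hr, ⟨hpp, h, hs⟩, hneg⟩
      · exact Or.inr ⟨hr, ⟨hpp, h, hs⟩, hneg⟩
    · right; left
      rw [mem_range, Nat.lt_add_one_iff]
      exact Nat.le_floor (not_lt.1 hs)
  have hcard : (((range (N + 1)).filter (fun p => p.Prime ∧ ¬ 0 ≤ legendreSum α p)).card : ℝ) ≤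
      B1.card + B3.card + ((⌊(N:ℝ) ^ (0.95:ℝ)⌋₊ : ℝ) + 1 + 1) := by
    have a := (card_le_card hsub).trans ((card_union_le _ _).trans (add_le_add (card_union_le _ _) (card_union_le _ _)))
    rw [card_range, card_singleton] at a
    exact_mod_cast a
  have hfl : (⌊(N:ℝ) ^ (0.95:ℝ)⌋₊ : ℝ) ≤ (N:ℝ) ^ (0.95:ℝ) := Nat.floor_le (by positivity)
  have h95 : 1 ≤ (N:ℝ) ^ (0.95:ℝ) := Real.one_le_rpow (by linarith) (by norm_num)
  have hprod : (N:ℝ) ^ (0.95:ℝ) * (N:ℝ) ^ (0.05:ℝ) = N := by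
    rw [← Real.rpow_add hN0]; norm_num
  have h05 : (N:ℝ) ^ (0.05:ℝ) ≤ N := by
    calc _ ≤ (N:ℝ) ^ (1:ℝ) := by apply Real.rpow_le_rpow_of_exponent_le (by linarith); norm_num
      _ = N := Real.rpow_one _
  have hl2 : Real.log (N + 1) ≤ 2 * Real.log N := by
    rw [show 2 * Real.log N = Real.log ((N:ℝ) ^ 2) by rw [Real.log_pow]; norm_num]
    apply Real.log_le_log (by linarith)
    nlinarith
  have hlog2 := Real.log_two_gt_d9
  have hmul : (N:ℝ) ^ (0.95:ℝ) * Real.log N ≤ 0.001 * N := by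
    calc _ ≤ (N:ℝ) ^ (0.95:ℝ) * (0.001 * (N:ℝ) ^ (0.05:ℝ)) := by gcongr
      _ = 0.001 * ((N:ℝ) ^ (0.95:ℝ) * (N:ℝ) ^ (0.05:ℝ)) := by ring
      _ = _ := by rw [hprod]
  have hmain : 0.34 * (N / Real.log N) + 3 * (N:ℝ) ^ (0.95:ℝ) ≤ 1 / 2 * (((N:ℝ) * Real.log 2 - Real.log (N + 1)) / Real.log N) := by
    have e1 : 0.34 * (N / Real.log N) + 3 * (N:ℝ) ^ (0.95:ℝ) = (0.34 * N + 3 * ((N:ℝ) ^ (0.95:ℝ) * Real.log N)) / Real.log N := by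
      field_simp
    have e2 : 1 / 2 * (((N:ℝ) * Real.log 2 - Real.log (N + 1)) / Real.log N) = (1 / 2 * ((N:ℝ) * Real.log 2 - Real.log (N + 1))) / Real.log N := by ring
    rw [e1, e2]
    gcongr
    have : (N:ℝ) * 0.6931 ≤ N * Real.log 2 := by gcongr; norm_num at hlog2 ⊢; linarith
    norm_num at this hmul hl ⊢
    linarith
  calc _ ≤ (B1.card : ℝ) + B3.card + ((⌊(N:ℝ) ^ (0.95:ℝ)⌋₊ : ℝ) + 1 + 1) := hcard
    _ ≤ 0.17 * (N / Real.log N) + 0.17 * (N / Real.log N) + 3 * (N:ℝ) ^ (0.95:ℝ) := by linarith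
    _ = 0.34 * (N / Real.log N) + 3 * (N:ℝ) ^ (0.95:ℝ) := by ring
    _ ≤ _ := hmain.trans (by gcongr)

end FA

/-- For every real `α` with `|α - 1/3| ≤ 2·10⁻⁶`, the inequality `L(α,p) ≥ 0`
holds for a set of primes of lower density at least `1/2`. -/
theorem stmt_3 (α : ℝ) (hα : |α - 1 / 3| ≤ 2 / 10 ^ 6) :
    (1 : ℝ) / 2 ≤
      Filter.liminf (fun N : ℕ =>
        (((Finset.range (N + 1)).filter
            (fun p => p.Prime ∧ 0 ≤ legendreSum α p)).card : ℝ) /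
          (((Finset.range (N + 1)).filter Nat.Prime).card : ℝ))
        Filter.atTop := by
  refine Filter.le_liminf_of_le ?_ ?_
  · refine Filter.IsBoundedUnder.isCoboundedUnder_ge ⟨1, Filter.eventually_map.2 (Filter.Eventually.of_forall fun N => ?_)⟩
    refine div_le_one_of_le₀ ?_ (Nat.cast_nonneg _)
    have hs : (Finset.range (N + 1)).filter (fun p => p.Prime ∧ 0 ≤ legendreSum α p) ⊆
        (Finset.range (N + 1)).filter Nat.Prime := by
      intro p hp
      rw [Finset.mem_filter] at hp ⊢
      exact ⟨hp.1, hp.2.1⟩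
    exact_mod_cast Finset.card_le_card hs
  · filter_upwards [FA.total_bad α hα] with N hN
    obtain ⟨h1, h2⟩ := hN
    have e := Finset.card_filter_add_card_filter_not (s := (Finset.range (N + 1)).filter Nat.Prime)
      (fun p => 0 ≤ legendreSum α p)
    rw [Finset.filter_filter, Finset.filter_filter] at e
    have h3 : (0:ℝ) < (((Finset.range (N + 1)).filter Nat.Prime).card : ℝ) := by exact_mod_cast h2
    rw [le_div_iff₀ h3]
    have e' : (((Finset.range (N + 1)).filter (fun p => p.Prime ∧ 0 ≤ legendreSum α p)).card : ℝ) +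
      (((Finset.range (N + 1)).filter (fun p => p.Prime ∧ ¬ 0 ≤ legendreSum α p)).card : ℝ) =
      (((Finset.range (N + 1)).filter Nat.Prime).card : ℝ) := by exact_mod_cast e
    linarith
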